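/- (Corollary 4.2) Assume the integrality condition on (μ,ν). For ϑ, φ ∈ [0,π] with cos ϑ + cos φ > 0 and −1 < t < 1, define I_{μ,ν}(t,ϑ,φ) = ∫₀^∞ Ĩ_{μ/2}(tx/(1−t)) K̃_{ν/2}(x/(1−t)) J̃_{μ/2}(ax) J̃_{ν/2}(bx) x^{μ+ν+1} dx, where a = sin ϑ/(cos ϑ + cos φ) and b = sin φ/(cos ϑ + cos φ). Then (1−t)^{−(μ+ν+2)/2} ((cos ϑ + cos φ)/2)^{−(μ+ν+2)/2} I_{μ,ν}(t,ϑ,φ) = (2^{2(μ+ν)}/π) Σ_{j=0}^∞ (−1)^j (Γ(j+(μ−ν+2)/2)/Γ(j+μ+1)) C̃_j^{(μ+1)/2}(cos ϑ) C̃_{j+(μ−ν)/2}^{(ν+1)/2}(cos φ) t^j, the series converging for −1 < t < 1. -/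

import Mathlib

open MeasureTheory Real Filter Set Metric

noncomputable section

/-- Normalized Bessel function of the first kind: `J̃_α(x) = (x/2)^{-α} J_α(x)`,
given by its (entire) power series. -/
def besselJt (α x : ℝ) : ℝ :=
  ∑' m : ℕ, (-1) ^ m / (m.factorial * Real.Gamma (m + α + 1)) * (x / 2) ^ (2 * m)

/-- Bessel function of the first kind `J_α`. -/
def besselJ (α x : ℝ) : ℝ :=
  ∑' m : ℕ, (-1) ^ m / (m.factorial * Real.Gamma (m + α + 1)) * (x / 2) ^ (2 * (m : ℝ) + α)

/-- Normalized modified Bessel function `Ĩ_α(x) = (x/2)^{-α} I_α(x)`,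
given by its (entire, even) power series. -/
def besselIt (α x : ℝ) : ℝ :=
  ∑' m : ℕ, (x / 2) ^ (2 * m) / (m.factorial * Real.Gamma (m + α + 1))

/-- Modified Bessel function of the first kind `I_α`. -/
def besselI (α x : ℝ) : ℝ :=
  ∑' m : ℕ, (x / 2) ^ (2 * (m : ℝ) + α) / (m.factorial * Real.Gamma (m + α + 1))

/-- Modified Bessel function of the second kind,
`K_α(x) = lim_{β→α} (π/2)(I_{−β}(x) − I_β(x))/sin(βπ)`. -/
def besselK (α x : ℝ) : ℝ :=
  limUnder (nhdsWithin α {α}ᶜ) fun β =>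
    Real.pi / 2 * (besselI (-β) x - besselI β x) / Real.sin (β * Real.pi)

/-- Normalized K-Bessel function `K̃_α(x) = (x/2)^{-α} K_α(x)`. -/
def besselKt (α x : ℝ) : ℝ := (x / 2) ^ (-α) * besselK α x

/-- Normalized Gegenbauer polynomial `C̃_n^λ = Γ(λ) C_n^λ`, where `C_n^λ` is defined via the
generating function `(1 − 2xt + t²)^{−λ} = Σ_{n≥0} C_n^λ(x) tⁿ`; explicitly,
`C̃_n^λ(x) = Σ_{k=0}^{⌊n/2⌋} (−1)^k Γ(λ+n−k)/(k!(n−2k)!) (2x)^{n−2k}`.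
This expression also gives the limit value `C̃_n^0 = lim_{λ→0+} Γ(λ) C_n^λ` for `n ≥ 1`. -/
def gegenbauerCt (n : ℕ) (l x : ℝ) : ℝ :=
  ∑ k ∈ Finset.range (n / 2 + 1),
    (-1) ^ k * Real.Gamma (l + n - k) / (k.factorial * (n - 2 * k).factorial)
      * (2 * x) ^ (n - 2 * k)

/-- Laguerre polynomial `L_n^μ(x) = Σ_{k=0}^n (−1)^k binom(n+μ, n−k) x^k/k!`
(with nonnegative integer parameter `μ`). -/
def laguerreL (n μ : ℕ) (x : ℝ) : ℝ :=
  ∑ k ∈ Finset.range (n + 1),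
    (-1) ^ k * (Nat.choose (n + μ) (n - k)) * x ^ k / k.factorial

/-- The Euler operator `θ = x d/dx`. -/
def eulerOp (u : ℝ → ℝ) : ℝ → ℝ := fun x => x * deriv u x

/-- `(θ+c)(θ+c+ν)u − x² u`, i.e. the operator `Q_ν(θ+c)` applied to `u`. -/
def besselQ (ν c : ℝ) (u : ℝ → ℝ) : ℝ → ℝ := fun x =>
  eulerOp (fun y => eulerOp u y + (c + ν) * u y) x
    + c * (eulerOp u x + (c + ν) * u x) - x ^ 2 * u x

/-- The fourth order differential operator
`D_{μ,ν} = x^{−2}((θ+μ)(θ+μ+ν) − x²)(θ(θ+ν) − x²)`. -/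
def Dop (μ ν : ℝ) (u : ℝ → ℝ) : ℝ → ℝ := fun x =>
  besselQ ν μ (besselQ ν 0 u) x / x ^ 2

/-- The generating function
`G^{μ,ν}(t,x) = (1−t)^{−(μ+ν+2)/2} Ĩ_{μ/2}(tx/(1−t)) K̃_{ν/2}(x/(1−t))`. -/
def genFun (μ ν t x : ℝ) : ℝ :=
  (1 - t) ^ (-(μ + ν + 2) / 2) * besselIt (μ / 2) (t * x / (1 - t))
    * besselKt (ν / 2) (x / (1 - t))

/-- The eigenfunctions `Λ_j^{μ,ν}`, defined as the Taylor coefficients in `t` at `t = 0` of the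
generating function `G^{μ,ν}(t,x) = Σ_{j≥0} Λ_j^{μ,ν}(x) t^j`. -/
def LambdaF (μ ν : ℝ) (j : ℕ) (x : ℝ) : ℝ :=
  iteratedDeriv j (fun t => genFun μ ν t x) 0 / j.factorial

/-- The integrality condition: `μ ≥ ν ≥ −1` are integers of the same parity,
not both equal to `−1`. -/
def IntCond (μ ν : ℤ) : Prop :=
  -1 ≤ ν ∧ ν ≤ μ ∧ Even (μ - ν) ∧ ¬(μ = -1 ∧ ν = -1)

end



/-! ### The entire function `E_a(w) = ∑ w^m / (m! Γ(m+a+1))` -/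

lemma hs_congr {M : Type*} [AddCommMonoid M] [TopologicalSpace M] {ι : Type*} {f g : ι → M} {a b : M}
    (h : HasSum f a) (e : ∀ m, g m = f m) (ea : b = a) : HasSum g b := by
  rw [ea, funext e]; exact h

noncomputable def bc (a : ℝ) (m : ℕ) : ℝ := 1 / (m.factorial * Real.Gamma (m + a + 1))

noncomputable def Er (a x : ℝ) : ℝ := ∑' m : ℕ, bc a m * x ^ m

noncomputable def Ec (a : ℝ) (w : ℂ) : ℂ := ∑' m : ℕ, (bc a m : ℂ) * w ^ m

lemma bc_pos {a : ℝ} (ha : -1 < a) (m : ℕ) : 0 < bc a m := by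
  unfold bc
  have h : 0 < Real.Gamma (m + a + 1) := Real.Gamma_pos_of_pos (by
    have : (0 : ℝ) ≤ m := m.cast_nonneg
    linarith)
  positivity

lemma bc_succ {a : ℝ} (ha : -1 < a) (m : ℕ) :
    bc a (m + 1) * ((m + 1) * (m + 1 + a)) = bc a m := by
  unfold bc
  have hp : (0 : ℝ) < m + a + 1 := by
    have : (0 : ℝ) ≤ m := m.cast_nonneg
    linarith
  have h : Real.Gamma (((m + 1 : ℕ) : ℝ) + a + 1) = (m + a + 1) * Real.Gamma (m + a + 1) := by
    rw [← Real.Gamma_add_one hp.ne']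
    congr 1
    push_cast
    ring
  rw [h, Nat.factorial_succ]
  have h2 := Real.Gamma_pos_of_pos hp
  have h3 : (0 : ℝ) < m.factorial := by exact_mod_cast m.factorial_pos
  push_cast
  field_simp
  ring

lemma bc_shift {a : ℝ} (ha : -1 < a) (m : ℕ) :
    bc a m = (m + a + 1) * bc (a + 1) m := by
  unfold bc
  have hp : (0 : ℝ) < m + a + 1 := by
    have : (0 : ℝ) ≤ m := m.cast_nonneg
    linarith
  have h : Real.Gamma ((m : ℝ) + (a + 1) + 1) = (m + a + 1) * Real.Gamma (m + a + 1) := by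
    rw [← Real.Gamma_add_one hp.ne']
    congr 1
    ring
  rw [h]
  have h2 := Real.Gamma_pos_of_pos hp
  have h3 : (0 : ℝ) < m.factorial := by exact_mod_cast m.factorial_pos
  field_simp

lemma bc_succ_shift {a : ℝ} (m : ℕ) :
    (m + 1) * bc a (m + 1) = bc (a + 1) m := by
  unfold bc
  have h : Real.Gamma (((m + 1 : ℕ) : ℝ) + a + 1) = Real.Gamma (m + (a + 1) + 1) := by
    congr 1
    push_cast
    ring
  rw [h, Nat.factorial_succ]
  have h3 : (0 : ℝ) < m.factorial := by exact_mod_cast m.factorial_pos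
  push_cast
  rw [mul_assoc, one_div, one_div, mul_inv, ← mul_assoc, mul_inv_cancel₀ (by positivity), one_mul]

lemma Gamma_nat_lower {a : ℝ} (ha : -1 / 2 ≤ a) (m : ℕ) :
    Real.Gamma (a + 1) / 2 ≤ Real.Gamma (m + a + 1) := by
  have h0 : 0 < Real.Gamma (a + 1) := Real.Gamma_pos_of_pos (by linarith)
  have key : ∀ m : ℕ, Real.Gamma (a + 1) / 2 ≤ Real.Gamma (((m + 1 : ℕ) : ℝ) + a + 1) := by
    intro m
    induction m with
    | zero =>
      have : (((0 + 1 : ℕ) : ℝ) + a + 1) = (a + 1) + 1 := by push_cast; ring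
      rw [this, Real.Gamma_add_one (s := a + 1) (by linarith)]
      nlinarith
    | succ m ih =>
      have hm : (0 : ℝ) ≤ m := m.cast_nonneg
      have : (((m + 1 + 1 : ℕ) : ℝ) + a + 1) = (((m + 1 : ℕ) : ℝ) + a + 1) + 1 := by
        push_cast; ring
      rw [this, Real.Gamma_add_one (s := ((m + 1 : ℕ) : ℝ) + a + 1) (by push_cast; linarith)]
      have h1 : (1 : ℝ) ≤ ((m + 1 : ℕ) : ℝ) + a + 1 := by push_cast; linarith
      nlinarith
  cases m with
  | zero => simp; linarith
  | succ m => exact key m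

lemma bc_le {a : ℝ} (ha : -1 / 2 ≤ a) (m : ℕ) :
    bc a m ≤ 2 / Real.Gamma (a + 1) * (1 / m.factorial) := by
  unfold bc
  have h0 : 0 < Real.Gamma (a + 1) := Real.Gamma_pos_of_pos (by linarith)
  have h := Gamma_nat_lower ha m
  have h3 : (0 : ℝ) < m.factorial := by exact_mod_cast m.factorial_pos
  rw [div_mul_div_comm, mul_one, div_le_div_iff₀ (by nlinarith [mul_pos h3 h0]) (by positivity)]
  nlinarith

lemma summable_Ec {a : ℝ} (ha : -1 / 2 ≤ a) (w : ℂ) :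
    Summable (fun m : ℕ => ‖(bc a m : ℂ) * w ^ m‖) := by
  refine Summable.of_nonneg_of_le (fun _ => norm_nonneg _) (fun m => ?_)
    ((Real.summable_pow_div_factorial ‖w‖).mul_left (2 / Real.Gamma (a + 1)))
  rw [norm_mul, norm_pow, Complex.norm_real, Real.norm_of_nonneg (bc_pos (by linarith) m).le]
  calc bc a m * ‖w‖ ^ m ≤ 2 / Real.Gamma (a + 1) * (1 / m.factorial) * ‖w‖ ^ m := by
        gcongr; exact bc_le ha m
    _ = _ := by ring

lemma hasSum_Ec {a : ℝ} (ha : -1 / 2 ≤ a) (w : ℂ) :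
    HasSum (fun m : ℕ => (bc a m : ℂ) * w ^ m) (Ec a w) :=
  (summable_Ec ha w).of_norm.hasSum

lemma summable_Er {a : ℝ} (ha : -1 / 2 ≤ a) (x : ℝ) :
    Summable (fun m : ℕ => ‖bc a m * x ^ m‖) := by
  have := summable_Ec ha (x : ℂ)
  refine this.congr (fun m => ?_)
  rw [← Complex.ofReal_pow, ← Complex.ofReal_mul, Complex.norm_real]

lemma hasSum_Er {a : ℝ} (ha : -1 / 2 ≤ a) (x : ℝ) :
    HasSum (fun m : ℕ => bc a m * x ^ m) (Er a x) :=
  (summable_Er ha x).of_norm.hasSum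

lemma Ec_ofReal (a x : ℝ) : Ec a (x : ℂ) = (Er a x : ℂ) := by
  unfold Ec Er
  push_cast
  rfl

lemma Er_nonneg {a : ℝ} (ha : -1 < a) {x : ℝ} (hx : 0 ≤ x) : 0 ≤ Er a x :=
  tsum_nonneg (fun m => mul_nonneg (bc_pos ha m).le (pow_nonneg hx m))

lemma norm_Ec_le_Er {a : ℝ} (ha : -1 / 2 ≤ a) (w : ℂ) : ‖Ec a w‖ ≤ Er a ‖w‖ := by
  have h := norm_tsum_le_tsum_norm (summable_Ec ha w)
  refine h.trans (le_of_eq ?_)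
  unfold Er
  congr 1; ext m
  rw [norm_mul, norm_pow, Complex.norm_real, Real.norm_of_nonneg (bc_pos (by linarith) m).le]

lemma differentiable_Ec {a : ℝ} (ha : -1 / 2 ≤ a) : Differentiable ℂ (Ec a) := by
  intro w
  have : DifferentiableOn ℂ (Ec a) (ball 0 (‖w‖ + 1)) := by
    unfold Ec
    refine Complex.differentiableOn_tsum_of_summable_norm
      (u := fun m => ‖(bc a m : ℂ) * ((‖w‖ + 1 : ℝ) : ℂ) ^ m‖) (summable_Ec ha _) ?_ isOpen_ball ?_
    · intro i
      fun_prop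
    · intro i z hz
      rw [mem_ball_zero_iff] at hz
      rw [norm_mul, norm_mul, norm_pow, norm_pow, Complex.norm_real (‖w‖ + 1),
        Real.norm_of_nonneg (by positivity)]
      gcongr
  exact (this w (by simp)).differentiableAt (isOpen_ball.mem_nhds (by simp))

lemma continuous_Er {a : ℝ} (ha : -1 / 2 ≤ a) : Continuous (Er a) := by
  have : Er a = fun x : ℝ => (Ec a (x : ℂ)).re := by
    ext x; rw [Ec_ofReal]; simp
  rw [this]
  exact Complex.continuous_re.comp ((differentiable_Ec ha).continuous.comp Complex.continuous_ofReal)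

/-- contiguity -/
lemma Ec_rec {a : ℝ} (ha : -1 / 2 ≤ a) (w : ℂ) :
    Ec a w = ((a + 1 : ℝ) : ℂ) * Ec (a + 1) w + w * Ec (a + 2) w := by
  have h1 := (hasSum_Ec (a := a + 1) (by linarith) w).mul_left (((a + 1 : ℝ) : ℂ))
  have h2 := (hasSum_Ec (a := a + 2) (by linarith) w).mul_left w
  have h3 : HasSum (fun m : ℕ => (((m : ℝ) * bc (a + 1) m : ℝ) : ℂ) * w ^ m) (w * Ec (a + 2) w) := by
    rw [← hasSum_nat_add_iff' 1]
    simp only [Finset.range_one, Finset.sum_singleton, Nat.cast_zero, zero_mul,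
      Complex.ofReal_zero, sub_zero]
    refine hs_congr h2 (fun m => ?_) rfl
    have := bc_succ_shift (a := a + 1) m
    rw [show a + 1 + 1 = a + 2 by ring] at this
    rw [← this]
    push_cast
    ring
  have h4 := h1.add h3
  refine (hasSum_Ec ha w).unique (hs_congr h4 (fun m => ?_) rfl)
  rw [bc_shift (by linarith) m]
  push_cast
  ring

lemma besselJt_eq (a x : ℝ) : besselJt a x = Er a (-(x / 2) ^ 2) := by
  unfold besselJt Er bc
  congr 1; ext m
  rw [neg_pow ((x / 2) ^ 2), ← pow_mul]
  ring

lemma besselIt_eq (a x : ℝ) : besselIt a x = Er a ((x / 2) ^ 2) := by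
  unfold besselIt Er bc
  congr 1; ext m
  rw [← pow_mul]
  ring


/-! ### Gegenbauer polynomials -/

noncomputable def gC (n : ℕ) (l : ℝ) (z : ℂ) : ℂ :=
  ∑ k ∈ Finset.range (n / 2 + 1),
    (((-1) ^ k * Real.Gamma (l + n - k) / (k.factorial * (n - 2 * k).factorial) : ℝ) : ℂ)
      * (2 * z) ^ (n - 2 * k)

lemma gC_ofReal (n : ℕ) (l x : ℝ) : gC n l (x : ℂ) = (gegenbauerCt n l x : ℂ) := by
  unfold gC gegenbauerCt
  push_cast
  rfl

noncomputable def gT (n k : ℕ) (l : ℝ) (z : ℂ) : ℂ :=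
  if 2 * k ≤ n then
    (((-1) ^ k * Real.Gamma (l + n - k) / (k.factorial * (n - 2 * k).factorial) : ℝ) : ℂ)
      * (2 * z) ^ (n - 2 * k)
  else 0

lemma gC_eq_sum (n N : ℕ) (hN : n / 2 + 1 ≤ N) (l : ℝ) (z : ℂ) :
    gC n l z = ∑ k ∈ Finset.range N, gT n k l z := by
  unfold gC
  have : ∑ k ∈ Finset.range (n / 2 + 1), gT n k l z = ∑ k ∈ Finset.range N, gT n k l z := by
    refine Finset.sum_subset (fun x hx => ?_) (fun x _ hx => ?_)
    · simp only [Finset.mem_range] at *; omega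
    · simp only [Finset.mem_range] at hx
      rw [gT, if_neg (by omega)]
  rw [← this]
  refine Finset.sum_congr rfl (fun k hk => ?_)
  simp only [Finset.mem_range] at hk
  rw [gT, if_pos (by omega)]

lemma gC_rec (n : ℕ) (l : ℝ) (hl : 0 < l ∨ (0 ≤ l ∧ 1 ≤ n)) (z : ℂ) :
    ((n : ℂ) + 2) * gC (n + 2) l z
      = 2 * z * ((l : ℂ) + n + 1) * gC (n + 1) l z - (2 * (l : ℂ) + n) * gC n l z := by
  rw [gC_eq_sum (n + 2) (n + 3) (by omega), gC_eq_sum (n + 1) (n + 3) (by omega),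
    gC_eq_sum n (n + 2) (by omega)]
  rw [Finset.sum_range_succ' _ (n + 2), Finset.sum_range_succ' _ (n + 2)]
  have hl0 : 0 ≤ l := by rcases hl with h | h <;> [exact h.le; exact h.1]
  have h0 : ((n : ℂ) + 2) * gT (n + 2) 0 l z = 2 * z * ((l : ℂ) + n + 1) * gT (n + 1) 0 l z := by
    simp only [gT, mul_zero, Nat.zero_le, if_true, Nat.sub_zero, pow_zero, one_mul,
      Nat.factorial_zero, Nat.cast_one, Nat.cast_zero, sub_zero]
    have hG : Real.Gamma (l + ((n + 2 : ℕ) : ℝ)) = (l + n + 1) * Real.Gamma (l + ((n + 1 : ℕ) : ℝ)) := by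
      rw [show l + n + 1 = l + ((n + 1 : ℕ) : ℝ) by push_cast; ring,
        ← Real.Gamma_add_one (by positivity)]
      congr 1; push_cast; ring
    rw [hG, Nat.factorial_succ (n + 1)]
    have h3 : ((n + 1).factorial : ℂ) ≠ 0 := by exact_mod_cast (n + 1).factorial_ne_zero
    have h4 : (n : ℂ) + 2 ≠ 0 := by exact_mod_cast (by omega : n + 2 ≠ 0)
    have h5 : (n : ℂ) + 1 + 1 ≠ 0 := by exact_mod_cast (by omega : n + 1 + 1 ≠ 0)
    push_cast
    field_simp
    ring
  have hk : ∀ k ∈ Finset.range (n + 2), ((n : ℂ) + 2) * gT (n + 2) (k + 1) l z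
      = 2 * z * ((l : ℂ) + n + 1) * gT (n + 1) (k + 1) l z - (2 * (l : ℂ) + n) * gT n k l z := by
    intro k _
    by_cases hkn : 2 * k ≤ n
    · obtain ⟨q, rfl⟩ := Nat.exists_eq_add_of_le hkn
      have hpos : 0 < l + k + q := by
        rcases hl with h | ⟨h, h'⟩
        · positivity
        · have : (1 : ℝ) ≤ 2 * k + q := by exact_mod_cast h'
          have h1 : (0 : ℝ) ≤ k := k.cast_nonneg
          have h2 : (0 : ℝ) ≤ q := q.cast_nonneg
          linarith
      have hG : Real.Gamma (l + ((2 * k + q + 2 : ℕ) : ℝ) - ((k + 1 : ℕ) : ℝ))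
          = (l + k + q) * Real.Gamma (l + k + q) := by
        rw [← Real.Gamma_add_one hpos.ne']
        congr 1; push_cast; ring
      have hG1 : Real.Gamma (l + ((2 * k + q + 1 : ℕ) : ℝ) - ((k + 1 : ℕ) : ℝ))
          = Real.Gamma (l + k + q) := by
        congr 1; push_cast; ring
      have hG2 : Real.Gamma (l + ((2 * k + q : ℕ) : ℝ) - (k : ℝ)) = Real.Gamma (l + k + q) := by
        congr 1; push_cast; ring
      have h3 : (k.factorial : ℂ) ≠ 0 := by exact_mod_cast k.factorial_ne_zero
      have h4 : (k : ℂ) + 1 ≠ 0 := by exact_mod_cast (by omega : k + 1 ≠ 0)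
      cases q with
      | zero =>
        rw [gT, if_pos (by omega), gT, if_neg (by omega), gT, if_pos (by omega), hG, hG2]
        rw [show 2 * k + 0 + 2 - 2 * (k + 1) = 0 by omega, show 2 * k + 0 - 2 * k = 0 by omega]
        rw [Nat.factorial_succ k]
        push_cast
        field_simp
        ring
      | succ q =>
        rw [gT, if_pos (by omega), gT, if_pos (by omega), gT, if_pos (by omega), hG, hG1, hG2]
        rw [show 2 * k + (q + 1) + 2 - 2 * (k + 1) = q + 1 by omega,
          show 2 * k + (q + 1) - 2 * k = q + 1 by omega,
          show 2 * k + (q + 1) + 1 - 2 * (k + 1) = q by omega]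
        rw [Nat.factorial_succ k, Nat.factorial_succ q]
        have h5 : (q.factorial : ℂ) ≠ 0 := by exact_mod_cast q.factorial_ne_zero
        have h6 : (q : ℂ) + 1 ≠ 0 := by exact_mod_cast (by omega : q + 1 ≠ 0)
        push_cast
        field_simp
        ring
    · rw [gT, if_neg (by omega), gT, if_neg (by omega), gT, if_neg (by omega)]
      ring
  rw [mul_add, mul_add, Finset.mul_sum, Finset.sum_congr rfl hk, Finset.sum_sub_distrib, h0,
    Finset.mul_sum, Finset.mul_sum]
  ring

lemma gC_zero (l : ℝ) (z : ℂ) : gC 0 l z = Real.Gamma l := by simp [gC]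

lemma gC_one (l : ℝ) (z : ℂ) : gC 1 l z = Real.Gamma (l + 1) * (2 * z) := by simp [gC]

lemma gC_two (l : ℝ) (z : ℂ) :
    gC 2 l z = Real.Gamma (l + 2) * (2 * z) ^ 2 / 2 - Real.Gamma (l + 1) := by
  have : l + 2 - 1 = l + 1 := by ring
  simp [gC, Finset.sum_range_succ, this]
  ring

/-- uniqueness of solutions of the recurrence, `l > 0` -/
lemma gC_unique (l : ℝ) (hl : 0 < l) (z : ℂ) (D : ℕ → ℂ) (h0 : D 0 = Real.Gamma l)
    (h1 : D 1 = Real.Gamma (l + 1) * (2 * z))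
    (hr : ∀ n : ℕ, ((n : ℂ) + 2) * D (n + 2)
      = 2 * z * ((l : ℂ) + n + 1) * D (n + 1) - (2 * (l : ℂ) + n) * D n) (n : ℕ) :
    gC n l z = D n := by
  have : gC n l z = D n ∧ gC (n + 1) l z = D (n + 1) := by
    induction n with
    | zero => exact ⟨by rw [gC_zero, h0], by rw [gC_one, h1]⟩
    | succ n ih =>
      refine ⟨ih.2, ?_⟩
      have h4 : (n : ℂ) + 2 ≠ 0 := by exact_mod_cast (by omega : n + 2 ≠ 0)
      have := gC_rec n l (Or.inl hl) z
      rw [ih.1, ih.2, ← hr n] at this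
      exact mul_left_cancel₀ h4 this
  exact this.1

/-- the relation lowering the parameter -/
lemma gC_lower (n : ℕ) (l : ℝ) (hl : 0 ≤ l) (z : ℂ) :
    ((n : ℂ) + 2 + l) * gC (n + 2) l z = gC (n + 2) (l + 1) z - gC n (l + 1) z := by
  rw [gC_eq_sum (n + 2) (n + 3) (by omega), gC_eq_sum (n + 2) (n + 3) (by omega),
    gC_eq_sum n (n + 2) (by omega)]
  rw [Finset.sum_range_succ' _ (n + 2), Finset.sum_range_succ' _ (n + 2)]
  have h0 : ((n : ℂ) + 2 + l) * gT (n + 2) 0 l z = gT (n + 2) 0 (l + 1) z := by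
    simp only [gT, mul_zero, Nat.zero_le, if_true, Nat.sub_zero, pow_zero, one_mul,
      Nat.factorial_zero, Nat.cast_one, Nat.cast_zero, sub_zero]
    have hG : Real.Gamma (l + 1 + ((n + 2 : ℕ) : ℝ)) = (l + n + 2) * Real.Gamma (l + ((n + 2 : ℕ) : ℝ)) := by
      rw [show l + n + 2 = l + ((n + 2 : ℕ) : ℝ) by push_cast; ring,
        ← Real.Gamma_add_one (by positivity)]
      congr 1; ring
    rw [hG]
    push_cast
    ring
  have hk : ∀ k ∈ Finset.range (n + 2), ((n : ℂ) + 2 + l) * gT (n + 2) (k + 1) l z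
      = gT (n + 2) (k + 1) (l + 1) z - gT n k (l + 1) z := by
    intro k _
    by_cases hkn : 2 * k ≤ n
    · obtain ⟨q, rfl⟩ := Nat.exists_eq_add_of_le hkn
      have hpos : 0 < l + k + q + 1 := by positivity
      have hG : Real.Gamma (l + 1 + ((2 * k + q + 2 : ℕ) : ℝ) - ((k + 1 : ℕ) : ℝ))
          = (l + k + q + 1) * Real.Gamma (l + k + q + 1) := by
        rw [← Real.Gamma_add_one hpos.ne']
        congr 1; push_cast; ring
      have hG1 : Real.Gamma (l + ((2 * k + q + 2 : ℕ) : ℝ) - ((k + 1 : ℕ) : ℝ))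
          = Real.Gamma (l + k + q + 1) := by
        congr 1; push_cast; ring
      have hG2 : Real.Gamma (l + 1 + ((2 * k + q : ℕ) : ℝ) - (k : ℝ)) = Real.Gamma (l + k + q + 1) := by
        congr 1; push_cast; ring
      have h3 : (k.factorial : ℂ) ≠ 0 := by exact_mod_cast k.factorial_ne_zero
      have h4 : (k : ℂ) + 1 ≠ 0 := by exact_mod_cast (by omega : k + 1 ≠ 0)
      have h5 : (q.factorial : ℂ) ≠ 0 := by exact_mod_cast q.factorial_ne_zero
      rw [gT, if_pos (by omega), gT, if_pos (by omega), gT, if_pos (by omega), hG, hG1, hG2]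
      rw [show 2 * k + q + 2 - 2 * (k + 1) = q by omega,
          show 2 * k + q - 2 * k = q by omega]
      rw [Nat.factorial_succ k]
      push_cast
      field_simp
      ring
    · rw [gT, if_neg (by omega), gT, if_neg (by omega), gT, if_neg (by omega)]
      ring
  rw [mul_add, Finset.mul_sum, Finset.sum_congr rfl hk, Finset.sum_sub_distrib, h0]
  ring


/-! ### Product formula, value at one and bounds -/

lemma gC_at_one (l : ℝ) (hl : 0 < l) (n : ℕ) :
    gC n l 1 = ((Real.Gamma l * Real.Gamma (2 * l + n) / (Real.Gamma (2 * l) * n.factorial) : ℝ) : ℂ) := by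
  have hG : ∀ m : ℕ, Real.Gamma (2 * l + (m + 1 : ℕ)) = (2 * l + m) * Real.Gamma (2 * l + m) := by
    intro m
    rw [← Real.Gamma_add_one (by positivity)]
    congr 1; push_cast; ring
  have hne : Real.Gamma (2 * l) ≠ 0 := (Real.Gamma_pos_of_pos (by positivity)).ne'
  refine gC_unique l hl 1 (fun n : ℕ => ((Real.Gamma l * Real.Gamma (2 * l + n) / (Real.Gamma (2 * l) * n.factorial) : ℝ) : ℂ)) ?_ ?_ ?_ n
  · simp [hne]
  · have := hG 0
    beta_reduce
    simp only [zero_add, Nat.cast_one, Nat.cast_zero, add_zero] at this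
    rw [Nat.cast_one, this, Real.Gamma_add_one hl.ne']
    have hne' : (Real.Gamma (2 * l) : ℂ) ≠ 0 := by exact_mod_cast hne
    simp only [Nat.factorial_one, Nat.cast_one]
    push_cast
    field_simp
  · intro m
    beta_reduce
    rw [hG (m + 1), hG m, Nat.factorial_succ (m + 1), Nat.factorial_succ m]
    have hne' : (Real.Gamma (2 * l) : ℂ) ≠ 0 := by exact_mod_cast hne
    have h3 : (m.factorial : ℂ) ≠ 0 := by exact_mod_cast m.factorial_ne_zero
    have h4 : (m : ℂ) + 1 ≠ 0 := by exact_mod_cast (by omega : m + 1 ≠ 0)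
    have h5 : (m : ℂ) + 1 + 1 ≠ 0 := by exact_mod_cast (by omega : m + 1 + 1 ≠ 0)
    have h6 : (m : ℂ) + 2 ≠ 0 := by exact_mod_cast (by omega : m + 2 ≠ 0)
    push_cast
    field_simp
    ring

open PowerSeries in
noncomputable def pA (l : ℝ) (w : ℂ) : PowerSeries ℂ :=
  PowerSeries.mk fun i => ((Real.Gamma (l + i) / i.factorial : ℝ) : ℂ) * w ^ i

lemma pA_ode (l : ℝ) (hl : 0 < l) (w : ℂ) :
    PowerSeries.derivative ℂ (pA l w) * (1 - PowerSeries.C w * PowerSeries.X)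
      = PowerSeries.C (l : ℂ) * PowerSeries.C w * pA l w := by
  ext n
  rw [mul_sub, mul_one, mul_comm (PowerSeries.C w), ← mul_assoc, map_sub,
    PowerSeries.coeff_mul_C, mul_assoc, PowerSeries.coeff_C_mul, PowerSeries.coeff_C_mul]
  have key : ∀ n : ℕ, ((n : ℂ) + 1) * ((Real.Gamma (l + (n + 1 : ℕ)) / (n + 1).factorial : ℝ) : ℂ)
      = (l + n) * ((Real.Gamma (l + n) / n.factorial : ℝ) : ℂ) := by
    intro n
    have : Real.Gamma (l + (n + 1 : ℕ)) = (l + n) * Real.Gamma (l + n) := by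
      rw [← Real.Gamma_add_one (by positivity)]
      congr 1; push_cast; ring
    rw [this, Nat.factorial_succ]
    have h3 : (n.factorial : ℂ) ≠ 0 := by exact_mod_cast n.factorial_ne_zero
    have h4 : (n : ℂ) + 1 ≠ 0 := by exact_mod_cast (by omega : n + 1 ≠ 0)
    push_cast
    field_simp
  cases n with
  | zero =>
    rw [PowerSeries.coeff_zero_mul_X, PowerSeries.coeff_derivative]
    have := key 0
    simp only [pA, PowerSeries.coeff_mk]
    linear_combination w * this
  | succ n =>
    rw [PowerSeries.coeff_succ_mul_X, PowerSeries.coeff_derivative, PowerSeries.coeff_derivative]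
    have h1 := key (n + 1)
    have h2 := key n
    simp only [pA, PowerSeries.coeff_mk]
    push_cast at h1 h2 ⊢
    linear_combination w ^ (n + 2) * h1

/-- product formula -/
lemma gC_product (l : ℝ) (hl : 0 < l) (w w' : ℂ) (hw : w * w' = 1) (n : ℕ) :
    gC n l ((w + w') / 2) = PowerSeries.coeff n (pA l w * pA l w') / Real.Gamma l := by
  have hG : (Real.Gamma l : ℂ) ≠ 0 := by exact_mod_cast (Real.Gamma_pos_of_pos hl).ne'
  have hG1 : Real.Gamma (l + 1) = l * Real.Gamma l := Real.Gamma_add_one hl.ne'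
  refine gC_unique l hl _ (fun n => PowerSeries.coeff n (pA l w * pA l w') / Real.Gamma l) ?_ ?_ ?_ n
  · simp [pA, PowerSeries.coeff_mul]
  · simp [pA, PowerSeries.coeff_mul, Finset.Nat.antidiagonal_succ, hG1]
    field_simp
    ring
  · intro n
    set P := pA l w * pA l w' with hP
    have h1 := pA_ode l hl w
    have h2 := pA_ode l hl w'
    have hww : PowerSeries.C w * PowerSeries.C w' = (1 : PowerSeries ℂ) := by
      rw [← map_mul, hw, map_one]
    have ode : PowerSeries.derivative ℂ P
          - PowerSeries.C (w + w') * (PowerSeries.X * PowerSeries.derivative ℂ P)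
          + PowerSeries.X * (PowerSeries.X * PowerSeries.derivative ℂ P)
        = PowerSeries.C ((l : ℂ) * (w + w')) * P - PowerSeries.C (2 * (l : ℂ)) * (PowerSeries.X * P) := by
      have hd : PowerSeries.derivative ℂ P = pA l w * PowerSeries.derivative ℂ (pA l w')
          + pA l w' * PowerSeries.derivative ℂ (pA l w) := by
        rw [hP, Derivation.leibniz]; rfl
      rw [hd, hP, map_add, map_mul, map_mul, map_add]
      have h22 : PowerSeries.C (2 : ℂ) = (2 : PowerSeries ℂ) := map_ofNat _ 2
      rw [h22]
      generalize PowerSeries.derivative ℂ (pA l w) = a' at *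
      generalize PowerSeries.derivative ℂ (pA l w') = b' at *
      generalize pA l w = a at *
      generalize pA l w' = b at *
      generalize PowerSeries.C w = W at *
      generalize PowerSeries.C w' = W' at *
      generalize PowerSeries.C (l : ℂ) = L at *
      generalize (PowerSeries.X : PowerSeries ℂ) = X at *
      linear_combination b * (1 - W' * X) * h1 + a * (1 - W * X) * h2
        - (a * b' + b * a') * X ^ 2 * hww - 2 * L * a * b * X * hww
    have hc := congrArg (PowerSeries.coeff (n + 1)) ode
    rw [map_add, map_sub, map_sub] at hc
    simp only [PowerSeries.coeff_C_mul, PowerSeries.coeff_succ_X_mul,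
      PowerSeries.coeff_derivative] at hc
    have hX : PowerSeries.coeff n (PowerSeries.X * PowerSeries.derivative ℂ P)
        = n * PowerSeries.coeff n P := by
      cases n with
      | zero => simp
      | succ n =>
        rw [PowerSeries.coeff_succ_X_mul, PowerSeries.coeff_derivative]
        push_cast; ring
    rw [hX] at hc
    push_cast at hc
    field_simp
    linear_combination hc

lemma gC_bound (l : ℝ) (hl : 0 < l) (z : ℂ) (n : ℕ) :
    ‖gC n l (Complex.cos z)‖ ≤
      Real.Gamma l * Real.Gamma (2 * l + n) / (Real.Gamma (2 * l) * n.factorial)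
        * Real.exp (n * |z.im|) := by
  have hG : 0 < Real.Gamma l := Real.Gamma_pos_of_pos hl
  have h1 : ((Real.Gamma l * Real.Gamma (2 * l + n) / (Real.Gamma (2 * l) * n.factorial) : ℝ) : ℂ)
      = PowerSeries.coeff n (pA l 1 * pA l 1) / Real.Gamma l := by
    rw [← gC_at_one l hl n, ← gC_product l hl 1 1 (by norm_num)]
    norm_num
  have h1' : Real.Gamma l * Real.Gamma (2 * l + n) / (Real.Gamma (2 * l) * n.factorial)
      = (∑ p ∈ Finset.HasAntidiagonal.antidiagonal n, (Real.Gamma (l + p.1) / p.1.factorial) *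
        (Real.Gamma (l + p.2) / p.2.factorial)) / Real.Gamma l := by
    apply Complex.ofReal_injective
    rw [h1, PowerSeries.coeff_mul]
    simp [pA]
  rw [h1']
  have h2 : Complex.cos z = (Complex.exp (z * Complex.I) + Complex.exp (-z * Complex.I)) / 2 := rfl
  rw [h2, gC_product l hl _ _ (by rw [← Complex.exp_add]; simp), norm_div, Complex.norm_real,
    Real.norm_of_nonneg hG.le, div_mul_eq_mul_div]
  gcongr
  rw [PowerSeries.coeff_mul, Finset.sum_mul]
  refine (norm_sum_le _ _).trans (Finset.sum_le_sum fun p hp => ?_)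
  have hp' : (p.1 : ℝ) + p.2 = n := by
    exact_mod_cast Finset.HasAntidiagonal.mem_antidiagonal.mp hp
  have e1 : ‖Complex.exp (z * Complex.I)‖ ≤ Real.exp |z.im| := by
    rw [Complex.norm_exp]; simp; exact neg_le_abs _
  have e2 : ‖Complex.exp (-z * Complex.I)‖ ≤ Real.exp |z.im| := by
    rw [Complex.norm_exp]; simp; exact le_abs_self _
  have g1 : 0 < Real.Gamma (l + p.1) := Real.Gamma_pos_of_pos (by positivity)
  have g2 : 0 < Real.Gamma (l + p.2) := Real.Gamma_pos_of_pos (by positivity)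
  simp only [pA, PowerSeries.coeff_mk, norm_mul, norm_pow, Complex.norm_real]
  rw [Real.norm_of_nonneg (by positivity), Real.norm_of_nonneg (by positivity)]
  calc _ ≤ Real.Gamma (l + p.1) / p.1.factorial * Real.exp |z.im| ^ p.1 *
        (Real.Gamma (l + p.2) / p.2.factorial * Real.exp |z.im| ^ p.2) := by gcongr
    _ = _ := by
      rw [← hp', add_mul, Real.exp_add, Real.exp_nat_mul, Real.exp_nat_mul]; ring


/-! ### The generating function `exp(r z) E_a(-r²(1-z²)/4)` -/

noncomputable def kap (a : ℝ) : ℝ := 2 ^ (2 * a) / √π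

lemma kap_pos (a : ℝ) : 0 < kap a := by
  unfold kap
  have : 0 < √π := Real.sqrt_pos.mpr Real.pi_pos
  positivity

lemma kap_spec (a : ℝ) : kap a * (Real.Gamma (a + 1 / 2) * Real.Gamma (a + 1)) = Real.Gamma (2 * a + 1) := by
  have h := Real.Gamma_mul_Gamma_add_half (a + 1 / 2)
  rw [show a + 1 / 2 + 1 / 2 = a + 1 by ring, show 2 * (a + 1 / 2) = 2 * a + 1 by ring,
    show 1 - (2 * a + 1) = -(2 * a) by ring] at h
  rw [h, kap, Real.rpow_neg (by norm_num)]
  have : 0 < √π := Real.sqrt_pos.mpr Real.pi_pos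
  have h2 : (0 : ℝ) < 2 ^ (2 * a) := by positivity
  field_simp

noncomputable def eB (a : ℝ) (S : ℂ) (n : ℕ) : ℂ :=
  if Even n then (bc a (n / 2) : ℂ) * (-S / 4) ^ (n / 2) else 0

lemma eB_rec (a : ℝ) (ha : -1 / 2 < a) (S : ℂ) (n : ℕ) :
    ((n : ℂ) + 2) * ((n : ℂ) + 2 + 2 * a) * eB a S (n + 2) = -S * eB a S n := by
  unfold eB
  by_cases hn : Even n
  · have hn2 : Even (n + 2) := by simpa [Nat.even_add] using hn
    rw [if_pos hn, if_pos hn2]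
    obtain ⟨m, rfl⟩ := hn
    rw [show (m + m + 2) / 2 = m + 1 by omega, show (m + m) / 2 = m by omega]
    have := bc_succ (a := a) (by linarith) m
    rw [← this]
    push_cast
    ring
  · have hn2 : ¬ Even (n + 2) := by simpa [Nat.even_add] using hn
    rw [if_neg hn, if_neg hn2]
    ring

noncomputable def pB (a : ℝ) (S : ℂ) : PowerSeries ℂ := PowerSeries.mk (eB a S)

lemma pB_ode (a : ℝ) (ha : -1 / 2 < a) (S : ℂ) :
    PowerSeries.X * PowerSeries.derivative ℂ (PowerSeries.derivative ℂ (pB a S))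
      + PowerSeries.C (2 * (a : ℂ) + 1) * PowerSeries.derivative ℂ (pB a S)
      + PowerSeries.C S * (PowerSeries.X * pB a S) = 0 := by
  ext n
  rw [map_add, map_add, PowerSeries.coeff_C_mul, PowerSeries.coeff_C_mul,
    PowerSeries.coeff_derivative, map_zero]
  cases n with
  | zero => simp [pB, eB]
  | succ n =>
    rw [PowerSeries.coeff_succ_X_mul, PowerSeries.coeff_succ_X_mul, PowerSeries.coeff_derivative,
      PowerSeries.coeff_derivative]
    have := eB_rec a ha S n
    simp only [pB, PowerSeries.coeff_mk]
    push_cast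
    linear_combination this

noncomputable def pX (c : ℂ) : PowerSeries ℂ := PowerSeries.mk fun i => c ^ i / (i.factorial : ℂ)

lemma pX_ode (c : ℂ) : PowerSeries.derivative ℂ (pX c) = PowerSeries.C c * pX c := by
  ext n
  rw [PowerSeries.coeff_C_mul, PowerSeries.coeff_derivative]
  simp only [pX, PowerSeries.coeff_mk]
  rw [Nat.factorial_succ]
  have h3 : (n.factorial : ℂ) ≠ 0 := by exact_mod_cast n.factorial_ne_zero
  have h4 : (n : ℂ) + 1 ≠ 0 := by exact_mod_cast (by omega : n + 1 ≠ 0)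
  push_cast
  field_simp
  try ring

lemma coeff_pXB (a : ℝ) (ha : -1 / 2 < a) (z : ℂ) (n : ℕ) :
    PowerSeries.coeff n (pX z * pB a (1 - z ^ 2))
      = kap a * gC n (a + 1 / 2) z / Real.Gamma (n + 2 * a + 1) := by
  have hk : (kap a : ℂ) ≠ 0 := by exact_mod_cast (kap_pos a).ne'
  have hGp : ∀ n : ℕ, 0 < Real.Gamma (n + 2 * a + 1) := fun n =>
    Real.Gamma_pos_of_pos (by have : (0 : ℝ) ≤ n := n.cast_nonneg
                              linarith)
  have hG : ∀ n : ℕ, (Real.Gamma (n + 2 * a + 1) : ℂ) ≠ 0 := fun n => by exact_mod_cast (hGp n).ne'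
  have hGs : ∀ n : ℕ, Real.Gamma ((n + 1 : ℕ) + 2 * a + 1) = (n + 2 * a + 1) * Real.Gamma (n + 2 * a + 1) := by
    intro n
    rw [← Real.Gamma_add_one]
    · congr 1; push_cast; ring
    · have : (0 : ℝ) ≤ n := n.cast_nonneg
      linarith
  set P := pX z * pB a (1 - z ^ 2) with hP
  have ks := kap_spec a
  have hΓ1 : Real.Gamma (a + 1) ≠ 0 := (Real.Gamma_pos_of_pos (by linarith)).ne'
  have h0 : PowerSeries.coeff 0 P = 1 / Real.Gamma (a + 1) := by
    rw [hP, PowerSeries.coeff_mul]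
    simp [pX, pB, eB, bc]
  have h1 : PowerSeries.coeff 1 P = z / Real.Gamma (a + 1) := by
    rw [hP, PowerSeries.coeff_mul]
    simp [pX, pB, eB, bc, Finset.Nat.antidiagonal_succ]
    ring
  have hΓ1' : (Real.Gamma (a + 1) : ℂ) ≠ 0 := by exact_mod_cast hΓ1
  have main : gC n (a + 1 / 2) z = PowerSeries.coeff n P * Real.Gamma (n + 2 * a + 1) / kap a := by
    refine gC_unique (a + 1 / 2) (by linarith) z
      (fun n => PowerSeries.coeff n P * Real.Gamma (n + 2 * a + 1) / kap a) ?_ ?_ ?_ n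
    · simp only [h0, Nat.cast_zero, zero_add]
      rw [← ks]
      push_cast
      field_simp
    · simp only [h1]
      have := hGs 0
      simp only [zero_add, Nat.cast_zero] at this
      rw [this, ← ks, Real.Gamma_add_one (s := a + 1 / 2) (by linarith)]
      push_cast
      field_simp
    · intro n
      have hd1 : PowerSeries.derivative ℂ P = PowerSeries.C z * P
          + pX z * PowerSeries.derivative ℂ (pB a (1 - z ^ 2)) := by
        rw [hP, Derivation.leibniz, pX_ode]
        simp only [smul_eq_mul]
        ring
      have hd2 : PowerSeries.derivative ℂ (PowerSeries.derivative ℂ P)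
          = PowerSeries.C z * PowerSeries.derivative ℂ P
          + PowerSeries.C z * (pX z * PowerSeries.derivative ℂ (pB a (1 - z ^ 2)))
          + pX z * PowerSeries.derivative ℂ (PowerSeries.derivative ℂ (pB a (1 - z ^ 2))) := by
        conv_lhs => rw [hd1]
        rw [map_add, Derivation.leibniz (PowerSeries.derivative ℂ) (PowerSeries.C z) P,
          Derivation.leibniz (PowerSeries.derivative ℂ) (pX z)
            (PowerSeries.derivative ℂ (pB a (1 - z ^ 2))), pX_ode]
        simp only [smul_eq_mul, PowerSeries.derivative_C]
        ring
      have ho := pB_ode a ha (1 - z ^ 2)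
      have ode : PowerSeries.X * PowerSeries.derivative ℂ (PowerSeries.derivative ℂ P)
          - PowerSeries.C (2 * z) * (PowerSeries.X * PowerSeries.derivative ℂ P)
          + PowerSeries.X * P
          + PowerSeries.C (2 * (a : ℂ) + 1) * PowerSeries.derivative ℂ P
          - PowerSeries.C ((2 * (a : ℂ) + 1) * z) * P = 0 := by
        rw [hd2, hd1]
        rw [show PowerSeries.C (1 - z ^ 2) = (1 : PowerSeries ℂ) - PowerSeries.C z ^ 2 by
          rw [map_sub, map_one, map_pow]] at ho
        rw [map_mul, map_mul, map_ofNat]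
        rw [hP]
        linear_combination (pX z) * ho
      have hc := congrArg (PowerSeries.coeff (n + 1)) ode
      rw [map_sub, map_add, map_add, map_sub] at hc
      simp only [PowerSeries.coeff_C_mul, PowerSeries.coeff_succ_X_mul,
        PowerSeries.coeff_derivative, map_zero] at hc
      have hX : PowerSeries.coeff n (PowerSeries.derivative ℂ P)
        = (n + 1) * PowerSeries.coeff (n + 1) P := by
        rw [PowerSeries.coeff_derivative]; ring
      rw [hGs (n + 1), hGs n]
      push_cast at hc ⊢
      field_simp
      linear_combination ((n : ℂ) + 2 * a + 1) * (Real.Gamma (n + 2 * a + 1) : ℂ) * hc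
  rw [main]
  field_simp [hG n]

lemma hasSum_eB (a : ℝ) (ha : -1 / 2 < a) (S r : ℂ) :
    HasSum (fun n => eB a S n * r ^ n) (Ec a (-(r ^ 2 * S) / 4)) ∧
    Summable (fun n => ‖eB a S n * r ^ n‖) := by
  have hinj : Function.Injective (fun m : ℕ => 2 * m) := fun x y h => by
    simpa using h
  have hz : ∀ n ∉ Set.range (fun m : ℕ => 2 * m), eB a S n * r ^ n = 0 := by
    intro n hn
    have : ¬ Even n := by
      rintro ⟨m, rfl⟩
      exact hn ⟨m, by simp; ring⟩
    rw [eB, if_neg this, zero_mul]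
  have he : ∀ m : ℕ, eB a S (2 * m) * r ^ (2 * m) = (bc a m : ℂ) * (-(r ^ 2 * S) / 4) ^ m := by
    intro m
    rw [eB, if_pos (even_two_mul m), show 2 * m / 2 = m by omega, pow_mul, mul_assoc, ← mul_pow]
    congr 2
    ring
  constructor
  · rw [← hinj.hasSum_iff hz]
    refine hs_congr (hasSum_Ec ha.le _) (fun m => ?_) rfl
    simp only [Function.comp]
    exact he m
  · rw [← hinj.summable_iff (fun n hn => by rw [hz n hn, norm_zero])]
    refine (summable_Ec ha.le (-(r ^ 2 * S) / 4)).congr (fun m => ?_)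
    simp only [Function.comp]
    rw [he m]

lemma hasSum_expE (a : ℝ) (ha : -1 / 2 < a) (z r : ℂ) :
    HasSum (fun j : ℕ => kap a * gC j (a + 1 / 2) z / Real.Gamma (j + 2 * a + 1) * r ^ j)
      (Complex.exp (r * z) * Ec a (-(r ^ 2 * (1 - z ^ 2)) / 4)) := by
  obtain ⟨h1, h2⟩ := hasSum_eB a ha (1 - z ^ 2) r
  have h3 : HasSum (fun i : ℕ => z ^ i / (i.factorial : ℂ) * r ^ i) (Complex.exp (r * z)) := by
    have := NormedSpace.expSeries_div_hasSum_exp (𝔸 := ℂ) (r * z)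
    rw [← Complex.exp_eq_exp_ℂ] at this
    refine hs_congr this (fun m => ?_) rfl
    rw [mul_pow]; ring
  have h4 : Summable (fun i : ℕ => ‖z ^ i / (i.factorial : ℂ) * r ^ i‖) := by
    have := NormedSpace.norm_expSeries_div_summable (𝔸 := ℂ) (r * z)
    refine this.congr (fun m => ?_)
    congr 1
    rw [mul_pow]; ring
  have h5 := summable_norm_sum_mul_antidiagonal_of_summable_norm h4 h2
  have h6 := tsum_mul_tsum_eq_tsum_sum_antidiagonal_of_summable_norm h4 h2
  rw [h3.tsum_eq, h1.tsum_eq] at h6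
  rw [h6]
  refine hs_congr h5.of_norm.hasSum (fun n => ?_) rfl
  rw [← coeff_pXB a ha z n, PowerSeries.coeff_mul, Finset.sum_mul]
  refine Finset.sum_congr rfl (fun p hp => ?_)
  have hp' : p.1 + p.2 = n := Finset.HasAntidiagonal.mem_antidiagonal.mp hp
  simp only [pX, pB, PowerSeries.coeff_mk]
  rw [← hp', pow_add]
  ring


/-! ### Sharp bound for the normalized Bessel function -/

lemma Ec_sharp_aux (a : ℝ) (ha : -1 / 2 < a) (w : ℂ) (s : ℝ) (hs : 0 < s) :
    ‖Ec a (-(s⁻¹ • Complex.sin (s * w)) ^ 2 / 4)‖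
      ≤ 1 / Real.Gamma (a + 1) * Real.exp (s⁻¹ * (Real.exp (s * |w.im|) - (Complex.cos (s * w)).re)) := by
  have h := hasSum_expE a ha (Complex.cos (s * w)) ((s⁻¹ : ℝ) : ℂ)
  have hG1 : 0 < Real.Gamma (a + 1) := Real.Gamma_pos_of_pos (by linarith)
  have hexp : HasSum (fun j : ℕ => 1 / Real.Gamma (a + 1) * ((s⁻¹ * Real.exp (s * |w.im|)) ^ j / j.factorial))
      (1 / Real.Gamma (a + 1) * Real.exp (s⁻¹ * Real.exp (s * |w.im|))) := by
    have := NormedSpace.expSeries_div_hasSum_exp (𝔸 := ℝ) (s⁻¹ * Real.exp (s * |w.im|))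
    rw [← Real.exp_eq_exp_ℝ] at this
    exact this.mul_left _
  have hb := tsum_of_norm_bounded hexp (f := fun j : ℕ => kap a * gC j (a + 1 / 2) (Complex.cos (s * w)) / Real.Gamma (j + 2 * a + 1) * ((s⁻¹ : ℝ) : ℂ) ^ j) ?_
  · rw [h.tsum_eq, norm_mul, Complex.norm_exp] at hb
    have e1 : (((s⁻¹ : ℝ) : ℂ) * Complex.cos (s * w)).re = s⁻¹ * (Complex.cos (s * w)).re := by
      rw [Complex.re_ofReal_mul]
    have e2 : (-(((s⁻¹ : ℝ) : ℂ) ^ 2 * (1 - Complex.cos (s * w) ^ 2)) / 4)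
        = (-(s⁻¹ • Complex.sin (s * w)) ^ 2 / 4) := by
      rw [Complex.real_smul]
      have := Complex.sin_sq_add_cos_sq (s * w)
      linear_combination (-((s⁻¹ : ℝ) : ℂ) ^ 2 / 4) * (-this)
    rw [e1, e2] at hb
    rw [mul_sub, Real.exp_sub, ← mul_div_assoc, le_div_iff₀ (Real.exp_pos _), mul_comm]
    exact hb
  · intro j
    have hb := gC_bound (a + 1 / 2) (by linarith) (s * w) j
    have hGj : 0 < Real.Gamma (j + 2 * a + 1) := Real.Gamma_pos_of_pos (by
      have : (0 : ℝ) ≤ j := j.cast_nonneg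
      linarith)
    have him : |((s : ℂ) * w).im| = s * |w.im| := by
      rw [Complex.im_ofReal_mul, abs_mul, abs_of_pos hs]
    rw [him] at hb
    have hks := kap_spec a
    have hl : 0 < Real.Gamma (a + 1 / 2) := Real.Gamma_pos_of_pos (by linarith)
    have hkp := kap_pos a
    rw [norm_mul, norm_div, norm_mul, norm_pow, Complex.norm_real, Complex.norm_real, Complex.norm_real,
      Real.norm_of_nonneg hkp.le, Real.norm_of_nonneg hGj.le, Real.norm_of_nonneg (inv_pos.mpr hs).le]
    calc _ ≤ kap a * (Real.Gamma (a + 1 / 2) * Real.Gamma (2 * (a + 1 / 2) + j) /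
          (Real.Gamma (2 * (a + 1 / 2)) * j.factorial) * Real.exp (j * (s * |w.im|))) / Real.Gamma (j + 2 * a + 1) * (s⁻¹) ^ j := by
          gcongr
      _ = _ := by
          rw [mul_pow, ← Real.exp_nat_mul]
          rw [show 2 * (a + 1 / 2) + (j : ℝ) = j + 2 * a + 1 by ring, show 2 * (a + 1 / 2) = 2 * a + 1 by ring, ← hks]
          generalize Real.Gamma (a + 1 / 2) = g1 at hl
          generalize Real.Gamma (j + 2 * a + 1) = g2 at hGj
          field_simp

lemma Ec_sharp (a : ℝ) (ha : -1 / 2 < a) (w : ℂ) :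
    ‖Ec a (-w ^ 2 / 4)‖ ≤ 1 / Real.Gamma (a + 1) * Real.exp |w.im| := by
  have d1 : HasDerivAt (fun s : ℝ => Complex.sin (s * w)) w 0 := by
    have h0 : HasDerivAt (fun s : ℝ => (s : ℂ) * w) w 0 := by
      simpa using (Complex.ofRealCLM.hasDerivAt (x := (0 : ℝ))).mul_const w
    have := (Complex.hasDerivAt_sin (((0 : ℝ) : ℂ) * w)).comp (0 : ℝ) h0
    exact this.congr_deriv (by simp)
  have d2 : HasDerivAt (fun s : ℝ => Complex.cos (s * w)) 0 0 := by
    have h0 : HasDerivAt (fun s : ℝ => (s : ℂ) * w) w 0 := by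
      simpa using (Complex.ofRealCLM.hasDerivAt (x := (0 : ℝ))).mul_const w
    have := (Complex.hasDerivAt_cos (((0 : ℝ) : ℂ) * w)).comp (0 : ℝ) h0
    exact this.congr_deriv (by simp)
  have d3 : HasDerivAt (fun s : ℝ => Real.exp (s * |w.im|) - (Complex.cos (s * w)).re) |w.im| 0 := by
    have h1 : HasDerivAt (fun s : ℝ => Real.exp (s * |w.im|)) |w.im| 0 := by
      have := ((hasDerivAt_id (0 : ℝ)).mul_const |w.im|).exp
      simpa using this
    have h2 : HasDerivAt (fun s : ℝ => (Complex.cos (s * w)).re) 0 0 := by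
      exact (Complex.reCLM.hasFDerivAt.comp_hasDerivAt (0 : ℝ) d2).congr_deriv (by simp)
    exact (h1.sub h2).congr_deriv (by simp)
  have t1 := d1.tendsto_slope_zero_right
  have t3 := d3.tendsto_slope_zero_right
  simp only [zero_add, Complex.ofReal_zero, zero_mul, Complex.sin_zero, sub_zero, Real.exp_zero,
    Complex.cos_zero, Complex.one_re, sub_self] at t1 t3
  have c1 : Tendsto (fun s : ℝ => ‖Ec a (-(s⁻¹ • Complex.sin (s * w)) ^ 2 / 4)‖) (nhdsWithin 0 (Ioi 0))
      (nhds ‖Ec a (-w ^ 2 / 4)‖) := by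
    have hc : Continuous fun u : ℂ => ‖Ec a (-u ^ 2 / 4)‖ := by
      have := (differentiable_Ec ha.le).continuous
      fun_prop
    exact (hc.tendsto w).comp t1
  have c2 : Tendsto (fun s : ℝ => 1 / Real.Gamma (a + 1) * Real.exp (s⁻¹ * (Real.exp (s * |w.im|) - (Complex.cos (s * w)).re)))
      (nhdsWithin 0 (Ioi 0)) (nhds (1 / Real.Gamma (a + 1) * Real.exp |w.im|)) := by
    simp only [smul_eq_mul] at t3
    exact ((Real.continuous_exp.tendsto _).comp t3).const_mul _
  refine le_of_tendsto_of_tendsto c1 c2 ?_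
  filter_upwards [self_mem_nhdsWithin] with s hs
  exact Ec_sharp_aux a ha w s hs

/-- General bound with a polynomial factor, valid for `a ≥ -1/2`. -/
lemma Ec_bound (a : ℝ) (ha : -1 / 2 ≤ a) :
    ∃ C, 0 < C ∧ ∀ w : ℂ, ‖Ec a (-w ^ 2 / 4)‖ ≤ C * (1 + ‖w‖ ^ 2) * Real.exp |w.im| := by
  have g1 : 0 < Real.Gamma (a + 1 + 1) := Real.Gamma_pos_of_pos (by linarith)
  have g2 : 0 < Real.Gamma (a + 2 + 1) := Real.Gamma_pos_of_pos (by linarith)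
  have hC : 0 ≤ (a + 1) / Real.Gamma (a + 1 + 1) := div_nonneg (by linarith) g1.le
  have hC2 : 0 ≤ 1 / Real.Gamma (a + 2 + 1) := by positivity
  refine ⟨(a + 1) / Real.Gamma (a + 1 + 1) + 1 / Real.Gamma (a + 2 + 1) , by
    have : 0 < 1 / Real.Gamma (a + 2 + 1) := by positivity
    linarith, fun w => ?_⟩
  rw [Ec_rec ha]
  have b1 := Ec_sharp (a + 1) (by linarith) w
  have b2 := Ec_sharp (a + 2) (by linarith) w
  have e := Real.exp_pos |w.im|
  have n1 : ‖((a + 1 : ℝ) : ℂ) * Ec (a + 1) (-w ^ 2 / 4)‖ ≤ (a + 1) / Real.Gamma (a + 1 + 1) * Real.exp |w.im| := by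
    rw [norm_mul, Complex.norm_real,
      Real.norm_of_nonneg (by linarith)]
    calc _ ≤ (a + 1) * (1 / Real.Gamma (a + 1 + 1) * Real.exp |w.im|) := by
          have : 0 ≤ a + 1 := by linarith
          gcongr
      _ = _ := by ring
  have n2 : ‖(-w ^ 2 / 4) * Ec (a + 2) (-w ^ 2 / 4)‖ ≤ ‖w‖ ^ 2 * (1 / Real.Gamma (a + 2 + 1) * Real.exp |w.im|) := by
    rw [norm_mul]
    gcongr
    rw [norm_div, norm_neg, norm_pow]
    norm_num
    nlinarith [sq_nonneg ‖w‖]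
  refine (norm_add_le _ _).trans ((add_le_add n1 n2).trans ?_)
  have p1 : 0 ≤ (a + 1) / Real.Gamma (a + 1 + 1) * ‖w‖ ^ 2 * Real.exp |w.im| := by positivity
  have p2 : 0 ≤ 1 / Real.Gamma (a + 2 + 1) * Real.exp |w.im| := by positivity
  nlinarith [p1, p2]

lemma Er_neg_bound (a : ℝ) (ha : -1 / 2 < a) (x : ℝ) (hx : x ≤ 0) : |Er a x| ≤ 1 / Real.Gamma (a + 1) := by
  have := Ec_sharp a ha ((2 * √(-x) : ℝ) : ℂ)
  rw [Complex.ofReal_im, abs_zero, Real.exp_zero, mul_one, ← Complex.ofReal_pow, mul_pow,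
    Real.sq_sqrt (by linarith), ← Complex.ofReal_neg, show -(2 ^ 2 * -x) = 4 * x by ring,
    show ((4 * x : ℝ) : ℂ) / 4 = (x : ℂ) by push_cast; ring, Ec_ofReal, Complex.norm_real] at this
  exact this

lemma Er_sq_bound (a : ℝ) (ha : -1 / 2 < a) (x : ℝ) : |Er a (x ^ 2 / 4)| ≤ 1 / Real.Gamma (a + 1) * Real.exp |x| := by
  have := Ec_sharp a ha (x * Complex.I)
  rw [mul_pow, Complex.I_sq, show -((x : ℂ) ^ 2 * -1) / 4 = ((x ^ 2 / 4 : ℝ) : ℂ) by push_cast; ring,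
    Ec_ofReal, Complex.norm_real] at this
  simpa using this



/-! ### The integral `h_b(z) = ∫ exp(-s - z/s) s^(b-1) ds` -/

noncomputable def hk (b z s : ℝ) : ℝ := Real.exp (-s - z / s) * s ^ (b - 1)

noncomputable def hB (b z : ℝ) : ℝ := ∫ s in Ioi (0 : ℝ), hk b z s

lemma exp_neg_div_le (n : ℕ) {z s : ℝ} (hz : 0 < z) (hs : 0 < s) :
    Real.exp (-(z / s)) ≤ n.factorial / z ^ n * s ^ n := by
  have h := Real.pow_div_factorial_le_exp (x := z / s) (by positivity) n
  rw [Real.exp_neg, div_mul_eq_mul_div, inv_le_comm₀ (Real.exp_pos _) (by positivity)]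
  refine le_trans (le_of_eq ?_) h
  rw [div_pow]
  have : (0 : ℝ) < n.factorial := by positivity
  field_simp

lemma hk_continuousOn (b z : ℝ) : ContinuousOn (hk b z) (Ioi 0) := by
  unfold hk
  refine ContinuousOn.mul ?_ ?_
  · refine Real.continuous_exp.comp_continuousOn ?_
    refine continuousOn_id.neg.sub (continuousOn_const.div continuousOn_id ?_)
    intro x hx; exact (ne_of_gt hx)
  · intro x hx
    exact (Real.continuousAt_rpow_const x _ (Or.inl (ne_of_gt hx))).continuousWithinAt

lemma hk_pos (b z : ℝ) {s : ℝ} (hs : 0 < s) : 0 < hk b z s := by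
  unfold hk; positivity

lemma hk_le_Gamma (n : ℕ) (b : ℝ) {z s : ℝ} (hz : 0 < z) (hs : 0 < s) :
    hk b z s ≤ n.factorial / z ^ n * (Real.exp (-s) * s ^ ((b + n) - 1)) := by
  unfold hk
  rw [sub_eq_add_neg (-s), Real.exp_add, show b + n - 1 = (b - 1) + n by ring, Real.rpow_add hs, Real.rpow_natCast]
  have := exp_neg_div_le n hz hs
  calc _ ≤ Real.exp (-s) * (n.factorial / z ^ n * s ^ n) * s ^ (b - 1) := by gcongr
    _ = _ := by ring

lemma hk_integrable (b : ℝ) {z : ℝ} (hz : 0 < z) : IntegrableOn (hk b z) (Ioi 0) := by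
  obtain ⟨n, hn⟩ := exists_nat_gt (-b)
  refine Integrable.mono' ((Real.GammaIntegral_convergent (s := b + n) (by linarith)).const_mul (n.factorial / z ^ n))
    ((hk_continuousOn b z).aestronglyMeasurable measurableSet_Ioi) ?_
  refine (ae_restrict_iff' measurableSet_Ioi).mpr (Eventually.of_forall fun s hs => ?_)
  rw [Real.norm_of_nonneg (hk_pos b z hs).le]
  exact hk_le_Gamma n b hz hs

lemma hB_nonneg (b z : ℝ) : 0 ≤ hB b z :=
  setIntegral_nonneg measurableSet_Ioi fun _ hs => (hk_pos b z hs).le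

lemma hB_hasDerivAt (b : ℝ) {z : ℝ} (hz : 0 < z) : HasDerivAt (hB b) (-hB (b - 1) z) z := by
  have key := hasDerivAt_integral_of_dominated_loc_of_deriv_le (μ := volume.restrict (Ioi (0 : ℝ)))
    (F := fun z s => hk b z s) (F' := fun z s => -hk (b - 1) z s) (x₀ := z) (s := Ioi (z / 2))
    (bound := fun s => hk (b - 1) (z / 2) s) (Ioi_mem_nhds (by linarith))
    (Eventually.of_forall fun y => (hk_continuousOn b y).aestronglyMeasurable measurableSet_Ioi)
    (hk_integrable b hz)
    ((hk_continuousOn (b - 1) z).aestronglyMeasurable measurableSet_Ioi).neg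
    ?_ (hk_integrable (b - 1) (by linarith)) ?_
  · have := key.2
    rw [integral_neg] at this
    exact this
  · refine (ae_restrict_iff' measurableSet_Ioi).mpr (Eventually.of_forall fun s hs y hy => ?_)
    rw [norm_neg, Real.norm_of_nonneg (hk_pos _ _ hs).le]
    unfold hk
    have hs' : 0 < s := hs
    have hy' : z / 2 < y := hy
    gcongr
  · refine (ae_restrict_iff' measurableSet_Ioi).mpr (Eventually.of_forall fun s hs y hy => ?_)
    have hs' : 0 < s := hs
    have h1 : HasDerivAt (fun y : ℝ => -s - y / s) (-(1 / s)) y := by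
      have := ((hasDerivAt_id y).div_const s).const_sub (-s)
      simpa using this
    have := h1.exp.mul_const (s ^ (b - 1))
    refine this.congr_deriv ?_
    unfold hk
    rw [show b - 1 - 1 = (b - 1) + (-1) by ring, Real.rpow_add hs', Real.rpow_neg_one]
    ring

lemma hB_symm (b : ℝ) {z : ℝ} (hz : 0 < z) : hB b z = z ^ b * hB (-b) z := by
  unfold hB
  have h1 := integral_comp_rpow_Ioi (hk b z) (p := -1) (by norm_num)
  have h2 := integral_comp_mul_left_Ioi (fun x : ℝ => (|(-1 : ℝ)| * x ^ ((-1 : ℝ) - 1)) • hk b z (x ^ (-1 : ℝ))) 0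
    (inv_pos.mpr hz)
  rw [← h1]
  rw [mul_zero, inv_inv, smul_eq_mul] at h2
  have hz0 : z ≠ 0 := hz.ne'
  have h3 : ∀ A B : ℝ, A = z * B → B = z⁻¹ * A := by
    intro A B h; rw [h]; field_simp
  rw [h3 _ _ h2, ← integral_const_mul, ← integral_const_mul]
  refine setIntegral_congr_fun measurableSet_Ioi fun s hs => ?_
  have hs' : 0 < s := hs
  simp only [hk, smul_eq_mul, abs_neg, abs_one, one_mul]
  rw [Real.rpow_neg_one, show (-(z⁻¹ * s)⁻¹ - z / (z⁻¹ * s)⁻¹) = -s - z / s by field_simp; ring,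
    Real.inv_rpow (by positivity), ← Real.rpow_neg (by positivity)]
  rw [show z⁻¹ * ((z⁻¹ * s) ^ ((-1 : ℝ) - 1) * (Real.exp (-s - z / s) * (z⁻¹ * s) ^ (-(b - 1))))
    = z⁻¹ * ((z⁻¹ * s) ^ ((-1 : ℝ) - 1) * (z⁻¹ * s) ^ (-(b - 1))) * Real.exp (-s - z / s) by ring,
    ← Real.rpow_add (by positivity), show (-1 : ℝ) - 1 + -(b - 1) = -b - 1 by ring,
    Real.mul_rpow (by positivity) (by positivity), Real.inv_rpow hz.le, ← Real.rpow_neg hz.le,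
    show -(-b - 1) = b + 1 by ring, Real.rpow_add hz, Real.rpow_one]
  field_simp

lemma integral_zero_of_deriv {f f' : ℝ → ℝ} (hd : ∀ x ∈ Ioi (0 : ℝ), HasDerivAt f (f' x) x)
    (hi : IntegrableOn f' (Ioi 0)) (h0 : Tendsto f (nhdsWithin 0 (Ioi 0)) (nhds 0))
    (h1 : Tendsto f atTop (nhds 0)) : ∫ x in Ioi (0 : ℝ), f' x = 0 := by
  have := integral_Ioi_deriv_mul_eq_sub (a := (0 : ℝ)) (u := f) (v := fun _ => (1 : ℝ)) (u' := f') (v' := fun _ => 0)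
    (a' := (0 : ℝ)) (b' := (0 : ℝ)) hd (fun x _ => hasDerivAt_const x 1) ?_ ?_ ?_
  · simpa using this
  · refine hi.congr_fun (fun x _ => ?_) measurableSet_Ioi
    simp
  · refine h0.congr (fun x => ?_); simp
  · refine h1.congr (fun x => ?_); simp

lemma hk_tendsto_zero (b : ℝ) {z : ℝ} (hz : 0 < z) : Tendsto (hk b z) (nhdsWithin 0 (Ioi 0)) (nhds 0) := by
  obtain ⟨n, hn⟩ := exists_nat_gt (1 - b)
  have hlim : Tendsto (fun s : ℝ => n.factorial / z ^ n * (Real.exp (-s) * s ^ ((b + n) - 1))) (nhdsWithin 0 (Ioi 0)) (nhds 0) := by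
    have hc : ContinuousAt (fun s : ℝ => n.factorial / z ^ n * (Real.exp (-s) * s ^ ((b + n) - 1))) 0 := by
      have := Real.continuousAt_rpow_const 0 ((b + n) - 1) (Or.inr (by linarith))
      fun_prop
    have := hc.tendsto
    simp only [Real.zero_rpow (by linarith : (b + n) - 1 ≠ 0), mul_zero] at this
    exact this.mono_left nhdsWithin_le_nhds
  refine squeeze_zero' ?_ ?_ hlim
  · filter_upwards [self_mem_nhdsWithin] with s hs using (hk_pos b z hs).le
  · filter_upwards [self_mem_nhdsWithin] with s hs using hk_le_Gamma n b hz hs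

lemma hk_tendsto_top (b : ℝ) {z : ℝ} (hz : 0 < z) : Tendsto (hk b z) atTop (nhds 0) := by
  have hlim := tendsto_rpow_mul_exp_neg_mul_atTop_nhds_zero (b - 1) 1 one_pos
  refine squeeze_zero' ?_ ?_ hlim
  · filter_upwards [eventually_gt_atTop 0] with s hs using (hk_pos b z hs).le
  · filter_upwards [eventually_gt_atTop 0] with s hs
    unfold hk
    rw [mul_comm]
    gcongr
    have : 0 < z / s := by positivity
    linarith

lemma hB_rec (b : ℝ) {z : ℝ} (hz : 0 < z) : hB (b + 1) z = b * hB b z + z * hB (b - 1) z := by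
  have h := integral_zero_of_deriv (f := hk (b + 1) z)
    (f' := fun s => b * hk b z s + z * hk (b - 1) z s - hk (b + 1) z s) ?_ ?_
    (hk_tendsto_zero _ hz) (hk_tendsto_top _ hz)
  · rw [integral_sub, integral_add, integral_const_mul, integral_const_mul] at h
    · unfold hB; linarith
    · exact (hk_integrable b hz).const_mul _
    · exact (hk_integrable (b - 1) hz).const_mul _
    · exact ((hk_integrable b hz).const_mul _).add ((hk_integrable (b - 1) hz).const_mul _)
    · exact hk_integrable (b + 1) hz
  · intro s hs
    have hs' : 0 < s := hs
    have h1 : HasDerivAt (fun s : ℝ => -s - z / s) (-1 + z / s ^ 2) s := by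
      have := (hasDerivAt_id s).neg.sub ((hasDerivAt_inv hs'.ne').const_mul z)
      refine this.congr_deriv ?_
      field_simp
      ring
    have h2 : HasDerivAt (fun s : ℝ => s ^ (b + 1 - 1)) ((b + 1 - 1) * s ^ (b + 1 - 1 - 1)) s :=
      Real.hasDerivAt_rpow_const (Or.inl hs'.ne')
    refine (h1.exp.mul h2).congr_deriv ?_
    simp only [hk]
    rw [show b + 1 - 1 = (b - 1 - 1) + 2 by ring, show b - 1 = (b - 1 - 1) + 1 by ring,
      show b - 1 - 1 + 1 - 1 = b - 1 - 1 by ring, show b - 1 - 1 + 2 - 1 = b - 1 - 1 + 1 by ring,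
      Real.rpow_add hs', Real.rpow_add hs', Real.rpow_one, Real.rpow_two]
    field_simp
    ring
  · exact (((hk_integrable b hz).const_mul _).add ((hk_integrable (b - 1) hz).const_mul _)).sub (hk_integrable (b + 1) hz)

lemma hB_continuous (z : ℝ) (hz : 0 < z) : Continuous fun b => hB b z := by
  rw [continuous_iff_continuousAt]
  intro b
  refine continuousAt_of_dominated (μ := volume.restrict (Ioi (0 : ℝ))) (F := fun b s => hk b z s)
    (bound := fun s => hk (b - 1) z s + hk (b + 1) z s)
    (Eventually.of_forall fun y => (hk_continuousOn y z).aestronglyMeasurable measurableSet_Ioi) ?_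
    ((hk_integrable (b - 1) hz).add (hk_integrable (b + 1) hz)) ?_
  · filter_upwards [Ioo_mem_nhds (show b - 1 < b by linarith) (show b < b + 1 by linarith)] with y hy
    refine (ae_restrict_iff' measurableSet_Ioi).mpr (Eventually.of_forall fun s hs => ?_)
    have hs' : 0 < s := hs
    rw [Real.norm_of_nonneg (hk_pos _ _ hs).le]
    simp only [hk]
    rw [← mul_add]
    gcongr
    rcases le_total 1 s with h | h
    · have : s ^ (y - 1) ≤ s ^ (b + 1 - 1) := Real.rpow_le_rpow_of_exponent_le h (by linarith [hy.2])
      have : 0 < s ^ (b - 1 - 1) := by positivity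
      linarith
    · have : s ^ (y - 1) ≤ s ^ (b - 1 - 1) := Real.rpow_le_rpow_of_exponent_ge hs' h (by linarith [hy.1])
      have : 0 < s ^ (b + 1 - 1) := by positivity
      linarith
  · refine (ae_restrict_iff' measurableSet_Ioi).mpr (Eventually.of_forall fun s hs => ?_)
    have hs' : 0 < s := hs
    unfold hk
    have := Real.continuousAt_const_rpow (a := s) (b := b - 1) hs'.ne'
    have h2 : ContinuousAt (fun b : ℝ => b - 1) b := by fun_prop
    exact continuousAt_const.mul (ContinuousAt.comp (f := fun b : ℝ => b - 1) (g := fun y : ℝ => s ^ y) this h2)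

lemma hB_tendsto_zero (b : ℝ) (hb : 0 < b) : Tendsto (hB b) (nhdsWithin 0 (Ioi 0)) (nhds (Real.Gamma b)) := by
  rw [Real.Gamma_eq_integral hb]
  refine tendsto_integral_filter_of_dominated_convergence (fun s => Real.exp (-s) * s ^ (b - 1))
    (Eventually.of_forall fun y => (hk_continuousOn b y).aestronglyMeasurable measurableSet_Ioi) ?_
    (Real.GammaIntegral_convergent hb) ?_
  · filter_upwards [self_mem_nhdsWithin] with z hz
    refine (ae_restrict_iff' measurableSet_Ioi).mpr (Eventually.of_forall fun s hs => ?_)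
    have hs' : 0 < s := hs
    have hz' : 0 < z := hz
    rw [Real.norm_of_nonneg (hk_pos _ _ hs).le]
    unfold hk
    gcongr
    have : 0 < z / s := by positivity
    linarith
  · refine (ae_restrict_iff' measurableSet_Ioi).mpr (Eventually.of_forall fun s hs => ?_)
    have hc : Continuous (fun z => hk b z s) := by
      unfold hk; fun_prop
    have := (hc.tendsto 0).mono_left (nhdsWithin_le_nhds (s := Ioi 0))
    simpa [hk] using this


/-! ### The K-Bessel function -/

lemma bc_shift_gen {a : ℝ} (m : ℕ) (h : (m : ℝ) + a + 1 ≠ 0) : bc a m = (m + a + 1) * bc (a + 1) m := by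
  unfold bc
  have h1 : Real.Gamma ((m : ℝ) + (a + 1) + 1) = (m + a + 1) * Real.Gamma (m + a + 1) := by
    rw [← Real.Gamma_add_one h]
    congr 1
    ring
  rw [h1, one_div, one_div, mul_inv, mul_inv, mul_inv]
  field_simp

lemma bc_succ_gen {a : ℝ} (m : ℕ) (h : (m : ℝ) + a + 1 ≠ 0) :
    bc a m = (m + a + 1) * ((m + 1) * bc a (m + 1)) := by
  rw [bc_succ_shift, ← bc_shift_gen m h]

lemma summable_Er_gen (a x : ℝ) : Summable (fun m : ℕ => ‖bc a m * x ^ m‖) := by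
  refine Summable.norm (summable_of_ratio_norm_eventually_le (r := 1 / 2) (by norm_num) ?_)
  obtain ⟨N, hN⟩ := exists_nat_ge (max (-a) (2 * |x|))
  filter_upwards [eventually_ge_atTop N] with m hm
  have hm' : (N : ℝ) ≤ m := by exact_mod_cast hm
  have h1 : 1 ≤ (m : ℝ) + a + 1 := by linarith [le_max_left (-a) (2 * |x|)]
  have h2 : 2 * |x| ≤ (m : ℝ) + 1 := by linarith [le_max_right (-a) (2 * |x|)]
  rw [bc_succ_gen m (by linarith)]
  simp only [norm_mul, norm_pow, Real.norm_eq_abs]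
  rw [abs_of_nonneg (by linarith : 0 ≤ (m : ℝ) + a + 1), abs_of_nonneg (by positivity : 0 ≤ (m : ℝ) + 1), pow_succ]
  have h3 : |x| ≤ 1 / 2 * ((m + a + 1) * (m + 1)) := by nlinarith [abs_nonneg x]
  have h4 : 0 ≤ |bc a (m + 1)| * |x| ^ m := by positivity
  nlinarith [mul_le_mul_of_nonneg_left h3 h4]

lemma hasSum_Er_gen (a x : ℝ) : HasSum (fun m : ℕ => bc a m * x ^ m) (Er a x) :=
  (summable_Er_gen a x).of_norm.hasSum

lemma Er_rec_gen {a : ℝ} (ha : ∀ n : ℕ, (n : ℝ) + a + 1 ≠ 0) (x : ℝ) :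
    Er a x = (a + 1) * Er (a + 1) x + x * Er (a + 2) x := by
  have h1 := (hasSum_Er_gen (a + 1) x).mul_left (a + 1)
  have h2 : HasSum (fun m : ℕ => (m : ℝ) * bc (a + 1) m * x ^ m) (x * Er (a + 2) x) := by
    rw [← hasSum_nat_add_iff' 1]
    refine hs_congr ((hasSum_Er_gen (a + 2) x).mul_left x) (fun m => ?_) (by simp)
    rw [show a + 2 = a + 1 + 1 by ring, ← bc_succ_shift (a := a + 1)]
    push_cast
    ring
  refine (hasSum_Er_gen a x).unique (hs_congr (h1.add h2) (fun m => ?_) rfl)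
  rw [bc_shift_gen m (ha m)]
  ring

lemma Er_hasDerivAt (a x : ℝ) : HasDerivAt (Er a) (Er (a + 1) x) x := by
  have hs : Summable (fun m : ℕ => |bc a m| * m * (|x| + 1) ^ (m - 1)) := by
    rw [← summable_nat_add_iff 1]
    refine (summable_Er_gen (a + 1) (|x| + 1)).congr (fun m => ?_)
    rw [← bc_succ_shift, norm_mul, norm_mul, norm_pow, Real.norm_of_nonneg (by positivity : (0 : ℝ) ≤ |x| + 1),
      Real.norm_of_nonneg (by positivity : (0 : ℝ) ≤ m + 1)]
    simp only [Nat.cast_add, Nat.cast_one, Nat.add_sub_cancel, Real.norm_eq_abs]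
    ring
  have := hasDerivAt_tsum_of_isPreconnected (g := fun (m : ℕ) (y : ℝ) => bc a m * y ^ m)
    (g' := fun (m : ℕ) (y : ℝ) => bc a m * (m * y ^ (m - 1))) hs (t := ball 0 (|x| + 1)) isOpen_ball
    (convex_ball _ _).isPreconnected (fun n y _ => (hasDerivAt_pow n y).const_mul _) ?_
    (y₀ := 0) (by simp; positivity) (summable_Er_gen a 0).of_norm (y := x) (by simp)
  · refine this.congr_deriv ?_
    have h2 : HasSum (fun m : ℕ => bc a m * (m * x ^ (m - 1))) (Er (a + 1) x) := by
      rw [← hasSum_nat_add_iff' 1]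
      refine hs_congr (hasSum_Er_gen (a + 1) x) (fun m => ?_) (by simp)
      rw [← bc_succ_shift]
      push_cast
      ring
    exact h2.tsum_eq
  · intro n y hy
    rw [norm_mul, norm_mul, norm_pow, Real.norm_eq_abs, Real.norm_eq_abs, Real.norm_eq_abs, Nat.abs_cast, mul_assoc]
    have : |y| ≤ |x| + 1 := by
      have := mem_ball_zero_iff.mp hy
      rw [Real.norm_eq_abs] at this
      exact this.le
    gcongr

lemma Er_zero (a : ℝ) : Er a 0 = 1 / Real.Gamma (a + 1) := by
  have h : HasSum (fun m : ℕ => bc a m * (0 : ℝ) ^ m) (bc a 0 * 0 ^ 0) :=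
    hasSum_single 0 (fun m hm => by simp [hm])
  rw [(hasSum_Er_gen a 0).unique h]
  simp [bc]

noncomputable def kB (b z : ℝ) : ℝ := π / Real.sin (π * b) * (Er (-b) z - z ^ b * Er b z)

/-- derivative of `z^b Er b z` -/
lemma zEr_hasDerivAt {b : ℝ} (hb : ∀ n : ℕ, (n : ℝ) + b ≠ 0) {z : ℝ} (hz : 0 < z) :
    HasDerivAt (fun z => z ^ b * Er b z) (z ^ (b - 1) * Er (b - 1) z) z := by
  have h1 : HasDerivAt (fun z : ℝ => z ^ b) (b * z ^ (b - 1)) z :=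
    Real.hasDerivAt_rpow_const (Or.inl hz.ne')
  refine (h1.mul (Er_hasDerivAt b z)).congr_deriv ?_
  have := Er_rec_gen (a := b - 1) (fun n => by have := hb n; intro h; apply this; linarith) z
  rw [show b - 1 + 1 = b by ring, show b - 1 + 2 = b + 1 by ring] at this
  rw [this]
  have e2 : z ^ b = z ^ (b - 1) * z := by
    nth_rw 3 [← Real.rpow_one z]
    rw [← Real.rpow_add hz, sub_add_cancel]
  rw [e2]
  ring

lemma kB_hasDerivAt {b : ℝ} (hb : ∀ n : ℕ, (n : ℝ) + b ≠ 0) {z : ℝ} (hz : 0 < z) :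
    HasDerivAt (kB b) (-(z ^ (b - 1) * kB (1 - b) z)) z := by
  have h1 := ((Er_hasDerivAt (-b) z).sub (zEr_hasDerivAt hb hz)).const_mul (π / Real.sin (π * b))
  refine h1.congr_deriv ?_
  unfold kB
  rw [show π * (1 - b) = π - π * b by ring, Real.sin_pi_sub, show -(1 - b) = b - 1 by ring,
    show -b + 1 = 1 - b by ring]
  have : z ^ (b - 1) * z ^ (1 - b) = 1 := by
    rw [← Real.rpow_add hz]; simp
  linear_combination (-(π / Real.sin (π * b)) * Er (1 - b) z) * this

lemma kB_tendsto_zero {b : ℝ} (hb : 0 < b) (hb1 : b < 1) :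
    Tendsto (kB b) (nhdsWithin 0 (Ioi 0)) (nhds (Real.Gamma b)) := by
  have c1 : ContinuousAt (kB b) 0 := by
    unfold kB
    have h1 := (Er_hasDerivAt (-b) 0).continuousAt
    have h2 := (Er_hasDerivAt b 0).continuousAt
    have h3 := Real.continuousAt_rpow_const 0 b (Or.inr hb.le)
    exact continuousAt_const.mul (h1.sub (h3.mul h2))
  have : kB b 0 = Real.Gamma b := by
    unfold kB
    rw [Real.zero_rpow hb.ne', zero_mul, sub_zero, Er_zero, ← Real.Gamma_mul_Gamma_one_sub,
      show -b + 1 = 1 - b by ring]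
    have := Real.Gamma_pos_of_pos (show 0 < 1 - b by linarith)
    field_simp
  rw [← this]
  exact c1.tendsto.mono_left nhdsWithin_le_nhds

lemma const_of_deriv_zero {f : ℝ → ℝ} (hd : ∀ z, 0 < z → HasDerivAt f 0 z) {L : ℝ}
    (hL : Tendsto f (nhdsWithin 0 (Ioi 0)) (nhds L)) {z : ℝ} (hz : 0 < z) : f z = L := by
  have h : ∀ y ∈ Ioi (0 : ℝ), f y = f z := fun y hy =>
    isOpen_Ioi.is_const_of_deriv_eq_zero isPreconnected_Ioi
      (fun x hx => (hd x hx).differentiableAt.differentiableWithinAt) (fun x hx => (hd x hx).deriv) hy hz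
  refine tendsto_nhds_unique (f := fun y => f y) (l := nhdsWithin 0 (Ioi 0)) ?_ hL
  refine tendsto_const_nhds.congr' ?_
  filter_upwards [self_mem_nhdsWithin] with y hy
  exact (h y hy).symm

lemma hB_eq_kB_unit {b : ℝ} (hb : 0 < b) (hb1 : b < 1) {z : ℝ} (hz : 0 < z) : hB b z = kB b z := by
  have hn1 : ∀ n : ℕ, (n : ℝ) + b ≠ 0 := fun n => by positivity
  have hn2 : ∀ n : ℕ, (n : ℝ) + (1 - b) ≠ 0 := fun n => by
    have : (0 : ℝ) ≤ n := n.cast_nonneg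
    linarith
  set u : ℝ → ℝ := fun z => hB b z - kB b z with hu
  set g : ℝ → ℝ := fun z => hB (1 - b) z - kB (1 - b) z with hg
  set G : ℝ → ℝ := fun z => z ^ b * Er b z with hG
  set H : ℝ → ℝ := Er (b - 1) with hH
  have du : ∀ z, 0 < z → HasDerivAt u (-(z ^ (b - 1) * g z)) z := by
    intro z hz
    refine ((hB_hasDerivAt b hz).sub (kB_hasDerivAt hn1 hz)).congr_deriv ?_
    rw [hB_symm (b - 1) hz, show -(b - 1) = 1 - b by ring]
    simp only [hg]; ring
  have dg : ∀ z, 0 < z → HasDerivAt g (-(z ^ (-b) * u z)) z := by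
    intro z hz
    refine ((hB_hasDerivAt (1 - b) hz).sub (kB_hasDerivAt hn2 hz)).congr_deriv ?_
    rw [show 1 - b - 1 = -b by ring, hB_symm (-b) hz, show -(-b) = b by ring, show 1 - (1 - b) = b by ring]
    simp only [hu]; ring
  have dG : ∀ z, 0 < z → HasDerivAt G (z ^ (b - 1) * H z) z := fun z hz => zEr_hasDerivAt hn1 hz
  have dH : ∀ z, 0 < z → HasDerivAt H (z ^ (-b) * G z) z := by
    intro z hz
    refine (Er_hasDerivAt (b - 1) z).congr_deriv ?_
    simp only [hG]
    rw [← mul_assoc, ← Real.rpow_add hz]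
    simp
  have tu : Tendsto u (nhdsWithin 0 (Ioi 0)) (nhds 0) := by
    have := (hB_tendsto_zero b hb).sub (kB_tendsto_zero hb hb1)
    simpa using this
  have tg : Tendsto g (nhdsWithin 0 (Ioi 0)) (nhds 0) := by
    have := (hB_tendsto_zero (1 - b) (by linarith)).sub (kB_tendsto_zero (b := 1 - b) (by linarith) (by linarith))
    simpa using this
  have tH : Tendsto H (nhdsWithin 0 (Ioi 0)) (nhds (1 / Real.Gamma b)) := by
    have := (Er_hasDerivAt (b - 1) 0).continuousAt.tendsto.mono_left (nhdsWithin_le_nhds (s := Ioi 0))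
    rwa [Er_zero, sub_add_cancel] at this
  have tG : Tendsto G (nhdsWithin 0 (Ioi 0)) (nhds 0) := by
    have h2 := (Er_hasDerivAt b 0).continuousAt
    have h3 := Real.continuousAt_rpow_const 0 b (Or.inr hb.le)
    have := (h3.mul h2).tendsto.mono_left (nhdsWithin_le_nhds (s := Ioi 0))
    simp only [Pi.mul_apply, Real.zero_rpow hb.ne', zero_mul] at this
    exact this
  have Gpos : ∀ z, 0 < z → 0 < G z := by
    intro z hz
    simp only [hG]
    have : 0 < Er b z := by
      refine (hasSum_Er_gen b z).tsum_eq ▸ (summable_Er_gen b z).of_norm.tsum_pos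
        (fun m => mul_nonneg (bc_pos (by linarith) m).le (by positivity)) 0 ?_
      simpa using bc_pos (by linarith) 0
    positivity
  have W : ∀ z, 0 < z → u z * H z + g z * G z = 0 := by
    intro z hz
    have := const_of_deriv_zero (f := fun z => u z * H z + g z * G z) (L := 0) (fun z hz => ?_) ?_ hz
    · exact this
    · refine (((du z hz).mul (dH z hz)).add ((dg z hz).mul (dG z hz))).congr_deriv ?_
      ring
    · have := (tu.mul tH).add (tg.mul tG)
      simpa using this
  have dq : ∀ y, 0 < y → HasDerivAt (fun z => u z / G z) 0 y := by
    intro y hy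
    have hne := (Gpos y hy).ne'
    refine ((du y hy).div (dG y hy) hne).congr_deriv ?_
    rw [div_eq_zero_iff]
    left
    linear_combination (-y ^ (b - 1)) * W y hy
  have hc : ∀ y, 0 < y → u y = (u z / G z) * G y := by
    intro y hy
    have : u y / G y = u z / G z :=
      isOpen_Ioi.is_const_of_deriv_eq_zero isPreconnected_Ioi
      (fun x hx => (dq x hx).differentiableAt.differentiableWithinAt) (fun x hx => (dq x hx).deriv) hy hz
    rw [← this, div_mul_cancel₀ _ (Gpos y hy).ne']
  set c := u z / G z with hcdef
  have hgc : ∀ y, 0 < y → g y = -c * H y := by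
    intro y hy
    have h1 := W y hy
    rw [hc y hy] at h1
    have h2 := (Gpos y hy).ne'
    have h3 : G y * (g y - -c * H y) = 0 := by linear_combination h1
    rcases mul_eq_zero.mp h3 with h | h
    · exact absurd h h2
    · linarith
  have hlim : -c * (1 / Real.Gamma b) = 0 := by
    refine tendsto_nhds_unique (f := g) (l := nhdsWithin 0 (Ioi 0)) ?_ tg
    refine (tH.const_mul (-c)).congr' ?_
    filter_upwards [self_mem_nhdsWithin] with y hy
    exact (hgc y hy).symm
  have hc0 : c = 0 := by
    have := Real.Gamma_pos_of_pos hb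
    rcases mul_eq_zero.mp hlim with h | h
    · linarith
    · exfalso; have : 0 < 1 / Real.Gamma b := by positivity
      linarith
  have := hc z hz
  rw [hc0, zero_mul] at this
  simp only [hu] at this
  linarith

lemma kB_symm (b : ℝ) {z : ℝ} (hz : 0 < z) : kB (-b) z = z ^ (-b) * kB b z := by
  unfold kB
  rw [mul_neg, Real.sin_neg, neg_neg, div_neg]
  have : z ^ (-b) * z ^ b = 1 := by rw [← Real.rpow_add hz]; simp
  linear_combination (π / Real.sin (π * b) * Er b z) * this

lemma kB_rec {b : ℝ} (hb : ∀ n : ℤ, b ≠ n) {z : ℝ} (hz : 0 < z) :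
    kB (b + 1) z = b * kB b z + z * kB (b - 1) z := by
  unfold kB
  rw [show π * (b + 1) = π * b + π by ring, show π * (b - 1) = π * b - π by ring, Real.sin_add_pi, Real.sin_sub_pi]
  have r1 := Er_rec_gen (a := -(b + 1)) (fun n h => hb n (by push_cast; linarith)) z
  have r2 := Er_rec_gen (a := b - 1) (fun n h => hb (-n) (by push_cast; linarith)) z
  rw [show -(b + 1) + 1 = -b by ring, show -(b + 1) + 2 = -(b - 1) by ring] at r1
  rw [show b - 1 + 1 = b by ring, show b - 1 + 2 = b + 1 by ring] at r2
  have e1 : z ^ (b + 1) = z ^ (b - 1) * z * z := by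
    rw [show b + 1 = b - 1 + 1 + 1 by ring, Real.rpow_add hz, Real.rpow_add hz, Real.rpow_one]
  have e2 : z ^ b = z ^ (b - 1) * z := by
    nth_rw 3 [← Real.rpow_one z]
    rw [← Real.rpow_add hz, sub_add_cancel]
  rw [r1, e1, e2, div_neg, r2]
  ring

lemma hB_eq_kB (n : ℕ) : ∀ b : ℝ, ((n : ℝ) - 1 < b ∧ b < n ∨ (n : ℝ) < b ∧ b < n + 1) → ∀ z : ℝ, 0 < z → hB b z = kB b z := by
  induction n with
  | zero =>
    rintro b (h | h) z hz
    · simp only [Nat.cast_zero, zero_sub] at h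
      rw [hB_symm b hz, hB_eq_kB_unit (b := -b) (by linarith) (by linarith) hz]
      have := kB_symm (-b) hz
      rw [neg_neg] at this
      exact this.symm
    · simp only [Nat.cast_zero, zero_add] at h
      exact hB_eq_kB_unit h.1 h.2 hz
  | succ n ih =>
    rintro b (h | h) z hz
    · push_cast at h
      exact ih b (Or.inr ⟨by linarith, by linarith⟩) z hz
    · push_cast at h
      have h1 := ih (b - 1) (Or.inr ⟨by linarith, by linarith⟩) z hz
      have h2 := ih (b - 1 - 1) (Or.inl ⟨by linarith, by linarith⟩) z hz
      have r1 := hB_rec (b - 1) hz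
      have r2 := kB_rec (b := b - 1) (fun m hm => by
        have a1 : (n : ℝ) < (m : ℝ) := by linarith
        have a2 : (m : ℝ) < (n : ℝ) + 1 := by linarith
        have a1' : (n : ℤ) < m := by exact_mod_cast a1
        have a2' : m < (n : ℤ) + 1 := by exact_mod_cast a2
        omega) hz
      rw [sub_add_cancel] at r1 r2
      rw [r1, r2, h1, h2]

lemma besselI_eq (a : ℝ) {x : ℝ} (hx : 0 < x) : besselI a x = (x / 2) ^ a * Er a (x ^ 2 / 4) := by
  unfold besselI Er
  rw [← tsum_mul_left]
  congr 1; ext m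
  rw [Real.rpow_add (by positivity), show (2 * (m : ℝ)) = ((2 * m : ℕ) : ℝ) by push_cast; ring, Real.rpow_natCast, bc,
    pow_mul, show (x / 2) ^ 2 = x ^ 2 / 4 by ring]
  ring

lemma besselKt_eq (b : ℝ) (hb : -1 < b) {x : ℝ} (hx : 0 < x) : besselKt b x = 1 / 2 * hB (-b) (x ^ 2 / 4) := by
  have hz : 0 < x ^ 2 / 4 := by positivity
  have hx2 : 0 < x / 2 := by positivity
  have hK : besselK b x = 1 / 2 * (x / 2) ^ (-b) * hB b (x ^ 2 / 4) := by
    unfold besselK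
    refine Tendsto.limUnder_eq ?_
    have hc : ContinuousAt (fun b : ℝ => 1 / 2 * (x / 2) ^ (-b) * hB b (x ^ 2 / 4)) b := by
      have h1 := (hB_continuous _ hz).continuousAt (x := b)
      have h2 : ContinuousAt (fun b : ℝ => (x / 2) ^ (-b)) b :=
        ContinuousAt.comp (f := fun b : ℝ => -b) (g := fun y : ℝ => (x / 2) ^ y)
          (Real.continuousAt_const_rpow hx2.ne') (by fun_prop)
      exact (continuousAt_const.mul h2).mul h1
    refine (hc.tendsto.mono_left nhdsWithin_le_nhds).congr' ?_
    have hfl := Int.floor_le b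
    have hfl2 := Int.lt_floor_add_one b
    have hev : ∀ᶠ y in nhdsWithin b {b}ᶜ, ∃ n : ℕ, (n : ℝ) - 1 < y ∧ y < n ∨ (n : ℝ) < y ∧ y < n + 1 := by
      have hf : -1 ≤ ⌊b⌋ := by
        rw [Int.le_floor]; push_cast; linarith
      obtain ⟨n, hn⟩ := Int.eq_ofNat_of_zero_le (show 0 ≤ ⌊b⌋ + 1 by omega)
      have hnr : (⌊b⌋ : ℝ) = n - 1 := by
        have : ((⌊b⌋ + 1 : ℤ) : ℝ) = ((n : ℤ) : ℝ) := by rw [hn]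
        push_cast at this
        linarith
      rw [hnr] at hfl hfl2
      rcases eq_or_lt_of_le hfl with h | h
      · have hn1 : 1 ≤ n := by
          by_contra hcon
          have : n = 0 := by omega
          subst this
          simp at h; linarith
        obtain ⟨k, rfl⟩ := Nat.exists_eq_add_of_le hn1
        have m1 : Ioo (b - 1) (b + 1) ∈ nhdsWithin b {b}ᶜ :=
          mem_nhdsWithin_of_mem_nhds (Ioo_mem_nhds (by linarith) (by linarith))
        filter_upwards [m1, self_mem_nhdsWithin] with y hy hy2
        refine ⟨k, ?_⟩
        push_cast at h
        have hne : y ≠ b := hy2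
        rcases lt_or_gt_of_ne hne with h3 | h3
        · left; exact ⟨by linarith [hy.1], by linarith⟩
        · right; exact ⟨by linarith, by linarith [hy.2]⟩
      · have m1 : Ioo ((n : ℝ) - 1) n ∈ nhdsWithin b {b}ᶜ :=
          mem_nhdsWithin_of_mem_nhds (Ioo_mem_nhds (by linarith) (by linarith))
        filter_upwards [m1] with y hy
        exact ⟨n, Or.inl hy⟩
    filter_upwards [hev] with y hy
    obtain ⟨n, hy⟩ := hy
    rw [hB_eq_kB n y hy _ hz, kB, besselI_eq _ hx, besselI_eq _ hx, mul_comm y π]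
    have e : (x / 2) ^ (-y) * (x ^ 2 / 4) ^ y = (x / 2) ^ y := by
      rw [show x ^ 2 / 4 = (x / 2) * (x / 2) by ring, Real.mul_rpow hx2.le hx2.le, ← mul_assoc,
        ← Real.rpow_add hx2]
      simp
    rw [← e]
    ring
  unfold besselKt
  rw [hK, hB_symm b hz, show x ^ 2 / 4 = (x / 2) * (x / 2) by ring, Real.mul_rpow hx2.le hx2.le]
  have : (x / 2) ^ (-b) * (x / 2) ^ b = 1 := by rw [← Real.rpow_add hx2]; simp
  linear_combination (1 / 2 * hB (-b) (x / 2 * (x / 2)) * ((x / 2) ^ (-b) * (x / 2) ^ b + 1)) * this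


lemma one_add_sq_le_exp {e : ℝ} (he : 0 < e) {y : ℝ} (hy : 0 ≤ y) : 1 + y ^ 2 ≤ (1 + 2 / e ^ 2) * Real.exp (e * y) := by
  have h1 := Real.pow_div_factorial_le_exp (x := e * y) (by positivity) 2
  have h2 : 1 ≤ Real.exp (e * y) := Real.one_le_exp (by positivity)
  have h3 : y ^ 2 = 2 / e ^ 2 * ((e * y) ^ 2 / (Nat.factorial 2 : ℕ)) := by
    simp [Nat.factorial]; field_simp
  rw [h3, add_mul, one_mul]
  gcongr

lemma Ec_bound_exp (a : ℝ) (ha : -1 / 2 ≤ a) {e : ℝ} (he : 0 < e) :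
    ∃ C, 0 < C ∧ ∀ w : ℂ, ‖Ec a (-w ^ 2 / 4)‖ ≤ C * Real.exp (|w.im| + e * ‖w‖) := by
  obtain ⟨C, hC, h⟩ := Ec_bound a ha
  refine ⟨C * (1 + 2 / e ^ 2), by positivity, fun w => (h w).trans ?_⟩
  rw [Real.exp_add]
  have := one_add_sq_le_exp he (norm_nonneg w)
  calc C * (1 + ‖w‖ ^ 2) * Real.exp |w.im| ≤ C * ((1 + 2 / e ^ 2) * Real.exp (e * ‖w‖)) * Real.exp |w.im| := by gcongr
    _ = _ := by ring

lemma Er_bound_exp (a : ℝ) (ha : -1 / 2 ≤ a) {e : ℝ} (he : 0 < e) :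
    ∃ C, 0 < C ∧ ∀ x : ℝ, 0 ≤ x → Er a (x ^ 2 / 4) ≤ C * Real.exp ((1 + e) * x) := by
  obtain ⟨C, hC, h⟩ := Ec_bound_exp a ha he
  refine ⟨C, hC, fun x hx => ?_⟩
  have := h (x * Complex.I)
  rw [mul_pow, Complex.I_sq, show -((x : ℂ) ^ 2 * -1) / 4 = ((x ^ 2 / 4 : ℝ) : ℂ) by push_cast; ring,
    Ec_ofReal, Complex.norm_real] at this
  refine (le_abs_self _).trans (this.trans (le_of_eq ?_))
  have e1 : |((x : ℂ) * Complex.I).im| + e * ‖(x : ℂ) * Complex.I‖ = (1 + e) * x := by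
    simp [abs_of_nonneg hx]
    ring
  rw [e1]

lemma Er_abs_le {a : ℝ} (ha : -1 < a) (x y : ℝ) (h : |x| ≤ y) : |Er a x| ≤ Er a y := by
  have h1 := (summable_Er_gen a x)
  refine (norm_tsum_le_tsum_norm h1).trans ?_
  refine h1.tsum_le_tsum (fun m => ?_) (summable_Er_gen a y).of_norm
  rw [norm_mul, norm_pow, Real.norm_of_nonneg (bc_pos ha m).le, Real.norm_eq_abs]
  have := (bc_pos ha m).le
  gcongr

lemma exp_rpow_integrable {c r : ℝ} (hc : 0 < c) (hr : -1 < r) :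
    IntegrableOn (fun s : ℝ => Real.exp (-(c * s)) * s ^ r) (Ioi 0) := by
  refine (integrableOn_rpow_mul_exp_neg_mul_rpow (p := 1) hr one_pos hc).congr_fun (fun s hs => ?_) measurableSet_Ioi
  simp only [Real.rpow_one]
  rw [mul_comm, neg_mul]

lemma hkc_integrable (b : ℝ) {c z : ℝ} (hc : 0 < c) (hz : 0 < z) :
    IntegrableOn (fun s : ℝ => Real.exp (-(c * s) - z / s) * s ^ (b - 1)) (Ioi 0) := by
  obtain ⟨n, hn⟩ := exists_nat_gt (-b)
  refine Integrable.mono' ((exp_rpow_integrable (c := c) (r := b + n - 1) hc (by linarith)).const_mul (n.factorial / z ^ n)) ?_ ?_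
  · refine ContinuousOn.aestronglyMeasurable (ContinuousOn.mul ?_ ?_) measurableSet_Ioi
    · refine Real.continuous_exp.comp_continuousOn ?_
      refine ((continuousOn_const.mul continuousOn_id).neg).sub (continuousOn_const.div continuousOn_id ?_)
      intro x hx; exact (ne_of_gt hx)
    · intro x hx
      exact (Real.continuousAt_rpow_const x _ (Or.inl (ne_of_gt hx))).continuousWithinAt
  · refine (ae_restrict_iff' measurableSet_Ioi).mpr (Eventually.of_forall fun s hs => ?_)
    have hs' : 0 < s := hs
    rw [Real.norm_of_nonneg (by positivity)]
    rw [sub_eq_add_neg (-(c * s)), Real.exp_add, show b + n - 1 = (b - 1) + n by ring, Real.rpow_add hs', Real.rpow_natCast]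
    have := exp_neg_div_le n hz hs'
    calc _ ≤ Real.exp (-(c * s)) * (n.factorial / z ^ n * s ^ n) * s ^ (b - 1) := by gcongr
      _ = _ := by ring

/-! ### The `K·J` product formula -/

noncomputable def cL (b : ℝ) (m i : ℕ) : ℝ := if i ≤ m then (-1) ^ i * bc b i / (m - i).factorial else 0

lemma cL_one (b : ℝ) (m i : ℕ) (h : i ≤ m + 1) : cL b m i = ((m : ℝ) + 1 - i) * cL b (m + 1) i := by
  unfold cL
  rw [if_pos h]
  rcases Nat.lt_or_ge m i with h1 | h1
  · rw [if_neg (by omega)]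
    have : i = m + 1 := by omega
    subst this
    push_cast
    ring
  · rw [if_pos h1]
    obtain ⟨k, rfl⟩ := Nat.exists_eq_add_of_le h1
    rw [show i + k + 1 - i = k + 1 by omega, show i + k - i = k by omega, Nat.factorial_succ]
    have : (0 : ℝ) < k.factorial := by positivity
    push_cast
    field_simp
    ring

lemma cL_two (b : ℝ) (hb : -1 / 2 ≤ b) (m i : ℕ) (h : i ≤ m) :
    cL b m i = -(((i : ℝ) + 1) * (i + 1 + b) * cL b (m + 1) (i + 1)) := by
  unfold cL
  rw [if_pos h, if_pos (by omega), ← bc_succ (a := b) (by linarith) i, show m + 1 - (i + 1) = m - i by omega]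
  ring

noncomputable def aL (b Z : ℝ) (m : ℕ) : ℝ := ∑ i ∈ Finset.range (m + 1), cL b m i * hB (b + m + i) Z

lemma aL_rec (b : ℝ) (hb : -1 / 2 ≤ b) {Z : ℝ} (hZ : 0 < Z) (m : ℕ) :
    ((m : ℝ) + 1) * (m + 1 + b) * aL b Z (m + 1) = -Z * aL b Z m := by
  unfold aL
  have e1 : ((m : ℝ) + 1) * (m + 1 + b) * ∑ i ∈ Finset.range (m + 1 + 1), cL b (m + 1) i * hB (b + ((m + 1 : ℕ) : ℝ) + i) Z
      = ∑ i ∈ Finset.range (m + 1 + 1), (b + m + i + 1) * ((m : ℝ) + 1 - i) * cL b (m + 1) i * hB (b + m + 1 + i) Z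
       + ∑ i ∈ Finset.range (m + 1 + 1), (i : ℝ) * (i + b) * cL b (m + 1) i * hB (b + m + 1 + i) Z := by
    rw [Finset.mul_sum, ← Finset.sum_add_distrib]
    refine Finset.sum_congr rfl fun i _ => ?_
    push_cast
    rw [show b + ((m : ℝ) + 1) + i = b + m + 1 + i by ring]
    ring
  rw [e1, Finset.sum_range_succ]
  rw [Finset.sum_range_succ' (fun i : ℕ => (i : ℝ) * (i + b) * cL b (m + 1) i * hB (b + m + 1 + i) Z)]
  push_cast
  simp only [sub_self, mul_zero, zero_mul, add_zero]
  rw [← Finset.sum_add_distrib, Finset.mul_sum]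
  refine Finset.sum_congr rfl fun i hi => ?_
  have him : i ≤ m := by have := Finset.mem_range.mp hi; omega
  have r := hB_rec (b + m + i + 1) hZ
  have c1 := cL_one b m i (by omega)
  have c2 := cL_two b hb m i him
  rw [show b + (m : ℝ) + i + 1 - 1 = b + m + i by ring] at r
  rw [show b + (m : ℝ) + 1 + (i + 1) = b + m + i + 1 + 1 by ring, show b + (m : ℝ) + 1 + i = b + m + i + 1 by ring]
  linear_combination (-(b + m + i + 1) * hB (b + m + i + 1) Z) * c1 + hB (b + m + i + 1 + 1) Z * c2 - cL b m i * r

lemma aL_eq (b : ℝ) (hb : -1 / 2 ≤ b) {Z : ℝ} (hZ : 0 < Z) (m : ℕ) :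
    aL b Z m = hB b Z * (bc b m * (-Z) ^ m) := by
  induction m with
  | zero => simp [aL, cL]; ring
  | succ m ih =>
    have h := aL_rec b hb hZ m
    rw [ih, ← bc_succ (a := b) (by linarith) m] at h
    have h1 : (0 : ℝ) < ((m : ℝ) + 1) * (m + 1 + b) := by
      have : (0 : ℝ) ≤ m := m.cast_nonneg
      have : 0 < (m : ℝ) + 1 + b := by linarith
      positivity
    refine mul_left_cancel₀ h1.ne' ?_
    rw [h, pow_succ]
    ring

/-- the pointwise expansion -/
noncomputable def LL (b : ℝ) (m : ℕ) (s : ℝ) : ℝ := ∑ i ∈ Finset.range (m + 1), cL b m i * s ^ (m + i)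

lemma LL_hasSum (b : ℝ) (B s : ℝ) :
    HasSum (fun m => B ^ m * LL b m s) (Real.exp (B * s) * Er b (-(B * s ^ 2))) ∧
    HasSum (fun m => ∑ i ∈ Finset.range (m + 1), ‖bc b i * (-(B * s ^ 2)) ^ i‖ * ‖(B * s) ^ (m - i) / ((m - i).factorial : ℝ)‖)
      ((∑' i, ‖bc b i * (-(B * s ^ 2)) ^ i‖) * ∑' j : ℕ, ‖(B * s) ^ j / (j.factorial : ℝ)‖) := by
  have h1 := summable_Er_gen b (-(B * s ^ 2))
  have h2 := NormedSpace.norm_expSeries_div_summable (𝔸 := ℝ) (B * s)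
  have h1' : Summable fun i => ‖‖bc b i * (-(B * s ^ 2)) ^ i‖‖ := by simpa using h1
  have h2' : Summable fun j : ℕ => ‖‖(B * s) ^ j / (j.factorial : ℝ)‖‖ := by simpa using h2
  constructor
  · have h3 := hasSum_sum_range_mul_of_summable_norm h1 h2
    rw [(NormedSpace.expSeries_div_hasSum_exp (𝔸 := ℝ) (B * s)).tsum_eq, ← Real.exp_eq_exp_ℝ,
      (hasSum_Er_gen b _).tsum_eq] at h3
    refine hs_congr h3 (fun m => ?_) (mul_comm _ _)
    unfold LL
    rw [Finset.mul_sum]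
    refine Finset.sum_congr rfl fun i hi => ?_
    have him : i ≤ m := by have := Finset.mem_range.mp hi; omega
    obtain ⟨k, rfl⟩ := Nat.exists_eq_add_of_le him
    rw [cL, if_pos him, show i + k - i = k by omega, show -(B * s ^ 2) = (-1) * (B * s ^ 2) by ring, mul_pow (-1 : ℝ), mul_pow B (s ^ 2) i, mul_pow B s k]
    ring
  · clear h1 h2
    exact hasSum_sum_range_mul_of_summable_norm (f := fun i => ‖bc b i * (-(B * s ^ 2)) ^ i‖)
      (g := fun j : ℕ => ‖(B * s) ^ j / (j.factorial : ℝ)‖) h1' h2'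

lemma KJ (b : ℝ) (hb : -1 / 2 ≤ b) {Z B : ℝ} (hZ : 0 < Z) (hB0 : 0 ≤ B) (hB1 : B ≤ 1 / 16) :
    ∫ s in Ioi (0 : ℝ), hk b Z s * (Real.exp (B * s) * Er b (-(B * s ^ 2))) = hB b Z * Er b (-(B * Z)) := by
  have hI : ∀ m, ∫ s in Ioi (0 : ℝ), hk b Z s * (B ^ m * LL b m s) = B ^ m * aL b Z m := by
    intro m
    unfold aL LL
    have : ∀ s ∈ Ioi (0 : ℝ), hk b Z s * (B ^ m * ∑ i ∈ Finset.range (m + 1), cL b m i * s ^ (m + i))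
        = ∑ i ∈ Finset.range (m + 1), B ^ m * cL b m i * hk (b + m + i) Z s := by
      intro s hs
      rw [Finset.mul_sum, Finset.mul_sum]
      refine Finset.sum_congr rfl fun i _ => ?_
      unfold hk
      rw [show b + (m : ℝ) + i - 1 = (b - 1) + ((m + i : ℕ) : ℝ) by push_cast; ring, Real.rpow_add hs,
        Real.rpow_natCast]
      ring
    rw [setIntegral_congr_fun measurableSet_Ioi this, integral_finsetSum]
    · rw [Finset.mul_sum]
      refine Finset.sum_congr rfl fun i _ => ?_
      rw [integral_const_mul, mul_assoc]; rfl
    · intro i _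
      exact (hk_integrable _ hZ).const_mul _
  obtain ⟨C, hC, hCb⟩ := Er_bound_exp b hb (e := 1 / 4) (by norm_num)
  have hS : ∀ s : ℝ, 0 < s → (∑' i, ‖bc b i * (-(B * s ^ 2)) ^ i‖) * (∑' j : ℕ, ‖(B * s) ^ j / (j.factorial : ℝ)‖)
      ≤ C * Real.exp (11 / 16 * s) := by
    intro s hs
    have e1 : ∑' i, ‖bc b i * (-(B * s ^ 2)) ^ i‖ = Er b (B * s ^ 2) := by
      unfold Er
      congr 1; ext i
      rw [norm_mul, norm_pow, norm_neg, Real.norm_of_nonneg (bc_pos (by linarith) i).le,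
        Real.norm_of_nonneg (by positivity : 0 ≤ B * s ^ 2)]
    have e2 : ∑' j : ℕ, ‖(B * s) ^ j / (j.factorial : ℝ)‖ = Real.exp (B * s) := by
      rw [Real.exp_eq_exp_ℝ, ← (NormedSpace.expSeries_div_hasSum_exp (𝔸 := ℝ) (B * s)).tsum_eq]
      congr 1; ext j
      rw [Real.norm_of_nonneg (by positivity)]
    rw [e1, e2]
    have b1 : Er b (B * s ^ 2) ≤ C * Real.exp ((1 + 1 / 4) * (s / 2)) := by
      refine le_trans ?_ (hCb (s / 2) (by positivity))
      refine (le_abs_self _).trans (Er_abs_le (by linarith) _ _ ?_)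
      rw [abs_of_nonneg (by positivity)]
      nlinarith [sq_nonneg s]
    have b2 : Real.exp (B * s) ≤ Real.exp (1 / 16 * s) := by gcongr
    calc _ ≤ C * Real.exp ((1 + 1 / 4) * (s / 2)) * Real.exp (1 / 16 * s) := by gcongr
      _ = _ := by rw [mul_assoc, ← Real.exp_add]; ring_nf
  have key := hasSum_integral_of_dominated_convergence (μ := volume.restrict (Ioi (0 : ℝ)))
    (F := fun m s => hk b Z s * (B ^ m * LL b m s))
    (f := fun s => hk b Z s * (Real.exp (B * s) * Er b (-(B * s ^ 2))))
    (fun m s => hk b Z s * (∑ i ∈ Finset.range (m + 1), ‖bc b i * (-(B * s ^ 2)) ^ i‖ * ‖(B * s) ^ (m - i) / ((m - i).factorial : ℝ)‖))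
    ?_ ?_ ?_ ?_ ?_
  · rw [← key.tsum_eq]
    refine HasSum.tsum_eq (hs_congr ((hasSum_Er_gen b (-(B * Z))).mul_left (hB b Z)) (fun m => ?_) rfl)
    rw [hI, aL_eq b hb hZ, show -(B * Z) = B * (-Z) by ring, mul_pow]
    ring
  · intro m
    refine ContinuousOn.aestronglyMeasurable ((hk_continuousOn b Z).mul ?_) measurableSet_Ioi
    unfold LL
    fun_prop
  · intro m
    refine (ae_restrict_iff' measurableSet_Ioi).mpr (Eventually.of_forall fun s hs => ?_)
    rw [norm_mul, Real.norm_of_nonneg (hk_pos b Z hs).le]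
    refine mul_le_mul_of_nonneg_left ?_ (hk_pos b Z hs).le
    unfold LL
    rw [Finset.mul_sum]
    refine (norm_sum_le _ _).trans (le_of_eq (Finset.sum_congr rfl fun i hi => ?_))
    rw [← norm_mul]
    congr 1
    have him : i ≤ m := by have := Finset.mem_range.mp hi; omega
    obtain ⟨k, rfl⟩ := Nat.exists_eq_add_of_le him
    rw [cL, if_pos him, show i + k - i = k by omega, show -(B * s ^ 2) = (-1) * (B * s ^ 2) by ring, mul_pow (-1 : ℝ), mul_pow B (s ^ 2) i, mul_pow B s k]
    ring
  · refine Eventually.of_forall fun s => ?_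
    exact (LL_hasSum b B s).2.summable.mul_left _
  · have hint := (hkc_integrable b (c := 5 / 16) (by norm_num) hZ).const_mul C
    have heq : ∀ s, ∑' m, hk b Z s * (∑ i ∈ Finset.range (m + 1), ‖bc b i * (-(B * s ^ 2)) ^ i‖ * ‖(B * s) ^ (m - i) / ((m - i).factorial : ℝ)‖)
        = hk b Z s * ((∑' i, ‖bc b i * (-(B * s ^ 2)) ^ i‖) * ∑' j : ℕ, ‖(B * s) ^ j / (j.factorial : ℝ)‖) := by
      intro s
      rw [tsum_mul_left, (LL_hasSum b B s).2.tsum_eq]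
    simp only [heq]
    refine Integrable.mono' hint ?_ ?_
    · refine ContinuousOn.aestronglyMeasurable ((hk_continuousOn b Z).mul ?_) measurableSet_Ioi
      have e1 : ∀ s, ∑' i, ‖bc b i * (-(B * s ^ 2)) ^ i‖ = Er b (B * s ^ 2) := by
        intro s
        unfold Er
        congr 1; ext i
        rw [norm_mul, norm_pow, norm_neg, Real.norm_of_nonneg (bc_pos (by linarith) i).le,
          Real.norm_of_nonneg (by positivity : 0 ≤ B * s ^ 2)]
      have e2 : ∀ s ∈ Ioi (0 : ℝ), ∑' j : ℕ, ‖(B * s) ^ j / (j.factorial : ℝ)‖ = Real.exp (B * s) := by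
        intro s hs
        have hs' : 0 < s := hs
        rw [Real.exp_eq_exp_ℝ, ← (NormedSpace.expSeries_div_hasSum_exp (𝔸 := ℝ) (B * s)).tsum_eq]
        congr 1; ext j
        rw [Real.norm_of_nonneg (by positivity)]
      have hEc := continuous_Er hb
      refine ContinuousOn.congr (f := fun s => Er b (B * s ^ 2) * Real.exp (B * s)) (by fun_prop) ?_
      intro s hs
      simp only
      rw [e1, e2 s hs]
    · refine (ae_restrict_iff' measurableSet_Ioi).mpr (Eventually.of_forall fun s hs => ?_)
      rw [norm_mul, Real.norm_of_nonneg (hk_pos b Z hs).le, Real.norm_of_nonneg (mul_nonneg (tsum_nonneg fun _ => norm_nonneg _) (tsum_nonneg fun _ => norm_nonneg _))]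
      calc _ ≤ hk b Z s * (C * Real.exp (11 / 16 * s)) := by
            have := hS s hs
            have := (hk_pos b Z hs).le
            gcongr
        _ = _ := by
            unfold hk
            rw [show Real.exp (-s - Z / s) * s ^ (b - 1) * (C * Real.exp (11 / 16 * s))
              = C * ((Real.exp (-s - Z / s) * Real.exp (11 / 16 * s)) * s ^ (b - 1)) by ring, ← Real.exp_add]
            ring_nf
  · refine Eventually.of_forall fun s => ?_
    exact (LL_hasSum b B s).1.mul_left _


/-! ### Weber's second exponential integral -/

lemma Er_bound_lin (a : ℝ) (ha : -1 / 2 ≤ a) {e : ℝ} (he : 0 < e) :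
    ∃ C, 0 < C ∧ ∀ x : ℝ, |Er a x| ≤ C * Real.exp (e * |x|) := by
  obtain ⟨C, hC, h⟩ := Er_bound_exp a ha (e := 1) one_pos
  refine ⟨C * Real.exp (4 / e), by positivity, fun x => ?_⟩
  refine (Er_abs_le (by linarith) x |x| le_rfl).trans ?_
  have h1 := h (2 * √|x|) (by positivity)
  rw [mul_pow, Real.sq_sqrt (abs_nonneg x), show (2 : ℝ) ^ 2 * |x| / 4 = |x| by ring] at h1
  refine h1.trans ?_
  rw [mul_assoc, ← Real.exp_add]
  gcongr
  have h2 : √|x| ^ 2 = |x| := Real.sq_sqrt (abs_nonneg x)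
  have h3 : 4 / e + e * √|x| ^ 2 - (1 + 1) * (2 * √|x|) = (2 - e * √|x|) ^ 2 / e := by
    field_simp; ring
  have h4 : 0 ≤ (2 - e * √|x|) ^ 2 / e := by positivity
  rw [h2] at h3
  linarith

lemma vander (m : ℕ) : ∀ (k : ℕ) (a : ℝ), -1 < a →
    ∑ l ∈ Finset.range (m + 1), (m.choose l : ℝ) * (k.descFactorial l) / Real.Gamma (l + a + 1)
      = Real.Gamma (a + 1 + m + k) / (Real.Gamma (m + a + 1) * Real.Gamma (k + a + 1)) := by
  induction m with
  | zero =>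
    intro k a ha
    have h1 : Real.Gamma (a + 1) ≠ 0 := (Real.Gamma_pos_of_pos (by linarith)).ne'
    have h2 : Real.Gamma (k + a + 1) ≠ 0 := (Real.Gamma_pos_of_pos (by have := k.cast_nonneg (α := ℝ); linarith)).ne'
    simp
    rw [show a + 1 + (k : ℝ) = k + a + 1 by ring]
    generalize Real.Gamma (a + 1) = g1 at *
    generalize Real.Gamma (k + a + 1) = g2 at *
    field_simp
  | succ m ih =>
    intro k a ha
    have e1 : ∑ l ∈ Finset.range (m + 1 + 1), ((m + 1).choose l : ℝ) * (k.descFactorial l) / Real.Gamma (l + a + 1)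
        = ∑ l ∈ Finset.range (m + 1), (m.choose l : ℝ) * (k.descFactorial l) / Real.Gamma (l + a + 1)
         + ∑ l ∈ Finset.range (m + 1), (m.choose l : ℝ) * (k.descFactorial (l + 1)) / Real.Gamma (l + (a + 1) + 1) := by
      rw [Finset.sum_range_succ']
      have e2 : ∑ l ∈ Finset.range (m + 1), (m.choose l : ℝ) * (k.descFactorial l) / Real.Gamma (l + a + 1)
        = ∑ l ∈ Finset.range (m + 1), (m.choose (l + 1) : ℝ) * (k.descFactorial (l + 1)) / Real.Gamma (l + (a + 1) + 1)
          + 1 / Real.Gamma (a + 1) := by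
        have := Finset.sum_range_succ (fun l : ℕ => (m.choose l : ℝ) * (k.descFactorial l) / Real.Gamma (l + a + 1)) (m + 1)
        rw [Nat.choose_eq_zero_of_lt (Nat.lt_succ_self m)] at this
        simp only [Nat.cast_zero, zero_mul, zero_div, add_zero] at this
        rw [← this, Finset.sum_range_succ']
        simp
        refine Finset.sum_congr rfl fun l _ => ?_
        ring_nf
      rw [e2, add_right_comm (∑ l ∈ Finset.range (m + 1), _), ← Finset.sum_add_distrib]
      congr 1
      · refine Finset.sum_congr rfl fun l _ => ?_
        rw [Nat.choose_succ_succ]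
        push_cast
        rw [show (l : ℝ) + 1 + a + 1 = l + (a + 1) + 1 by ring]
        ring
      · simp
    rw [e1, ih k a ha]
    have hm : (0 : ℝ) ≤ m := m.cast_nonneg
    have hk : (0 : ℝ) ≤ k := k.cast_nonneg
    have g1 : Real.Gamma (((m + 1 : ℕ) : ℝ) + a + 1) = (m + a + 1) * Real.Gamma (m + a + 1) := by
      rw [← Real.Gamma_add_one (by linarith)]; push_cast; ring_nf
    have g2 : Real.Gamma (a + 1 + ((m + 1 : ℕ) : ℝ) + k) = (a + 1 + m + k) * Real.Gamma (a + 1 + m + k) := by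
      rw [← Real.Gamma_add_one (by linarith)]; push_cast; ring_nf
    have p1 := Real.Gamma_pos_of_pos (show 0 < (m : ℝ) + a + 1 by linarith)
    have p2 := Real.Gamma_pos_of_pos (show 0 < (k : ℝ) + a + 1 by linarith)
    have p3 : 0 < (m : ℝ) + a + 1 := by linarith
    cases k with
    | zero =>
      simp only [Nat.zero_descFactorial_succ, Nat.cast_zero, mul_zero, zero_div, Finset.sum_const_zero, add_zero] at *
      rw [g1, g2]
      rw [show a + 1 + (m : ℝ) = m + a + 1 by ring] at *
      generalize Real.Gamma (m + a + 1) = G1 at *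
      generalize Real.Gamma (0 + a + 1) = G2 at *
      field_simp
    | succ k =>
      have e3 : ∑ l ∈ Finset.range (m + 1), (m.choose l : ℝ) * ((k + 1).descFactorial (l + 1)) / Real.Gamma (l + (a + 1) + 1)
          = (k + 1) * ∑ l ∈ Finset.range (m + 1), (m.choose l : ℝ) * (k.descFactorial l) / Real.Gamma (l + (a + 1) + 1) := by
        rw [Finset.mul_sum]
        refine Finset.sum_congr rfl fun l _ => ?_
        rw [Nat.succ_descFactorial_succ]
        push_cast; ring
      rw [e3, ih k (a + 1) (by linarith), g1, g2]
      rw [show a + 1 + 1 + (m : ℝ) + k = a + 1 + m + ((k + 1 : ℕ) : ℝ) by push_cast; ring,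
        show (m : ℝ) + (a + 1) + 1 = ((m + 1 : ℕ) : ℝ) + a + 1 by push_cast; ring, g1,
        show (k : ℝ) + (a + 1) + 1 = ((k + 1 : ℕ) : ℝ) + a + 1 by push_cast; ring]
      generalize Real.Gamma (m + a + 1) = G1 at *
      generalize Real.Gamma (((k + 1 : ℕ) : ℝ) + a + 1) = G2 at *
      generalize Real.Gamma (a + 1 + m + ((k + 1 : ℕ) : ℝ)) = G3 at *
      push_cast
      field_simp
      ring

/-- `W_m(B)` -/
noncomputable def Wp (a B : ℝ) (m : ℕ) : ℝ := ∑ l ∈ Finset.range (m + 1), (m.choose l : ℝ) * B ^ l / Real.Gamma (l + a + 1)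

lemma hasSum_desc (B : ℝ) (l : ℕ) : HasSum (fun k : ℕ => B ^ k / k.factorial * (k.descFactorial l : ℝ)) (B ^ l * Real.exp B) := by
  have h0 : HasSum (fun k : ℕ => B ^ k / (k.factorial : ℝ)) (Real.exp B) := by
    rw [Real.exp_eq_exp_ℝ]; exact NormedSpace.expSeries_div_hasSum_exp (𝔸 := ℝ) B
  rw [← hasSum_nat_add_iff' l]
  refine hs_congr (h0.mul_left (B ^ l)) (fun k => ?_) ?_
  · have h1 := Nat.factorial_mul_descFactorial (show l ≤ k + l by omega)
    rw [Nat.add_sub_cancel] at h1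
    have h2 : ((k + l).factorial : ℝ) = k.factorial * (k + l).descFactorial l := by exact_mod_cast h1.symm
    have h3 : ((k + l).descFactorial l : ℝ) ≠ 0 := by
      intro h; rw [h, mul_zero] at h2; exact (Nat.factorial_ne_zero _) (by exact_mod_cast h2)
    have h4 : (k.factorial : ℝ) ≠ 0 := by positivity
    rw [h2]
    field_simp
    ring
  · rw [Finset.sum_eq_zero, sub_zero]
    intro k hk
    rw [Nat.descFactorial_eq_zero_iff_lt.mpr (Finset.mem_range.mp hk)]; simp

lemma hasSum_Wp (a : ℝ) (ha : -1 < a) (B : ℝ) (m : ℕ) :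
    HasSum (fun k : ℕ => bc a k * B ^ k * Real.Gamma (a + 1 + m + k)) (Real.Gamma (m + a + 1) * (Real.exp B * Wp a B m)) := by
  have h := hasSum_sum (s := Finset.range (m + 1)) (f := fun (l : ℕ) (k : ℕ) => (m.choose l : ℝ) / Real.Gamma (l + a + 1) * (B ^ k / k.factorial * (k.descFactorial l : ℝ)))
    (fun l _ => (hasSum_desc B l).mul_left _)
  refine hs_congr (h.mul_left (Real.Gamma (m + a + 1))) (fun k => ?_) ?_
  · have hv := vander m k a ha
    have e : ∑ i ∈ Finset.range (m + 1), (m.choose i : ℝ) / Real.Gamma (i + a + 1) * (B ^ k / k.factorial * (k.descFactorial i : ℝ))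
        = B ^ k / k.factorial * ∑ l ∈ Finset.range (m + 1), (m.choose l : ℝ) * (k.descFactorial l) / Real.Gamma (l + a + 1) := by
      rw [Finset.mul_sum]
      refine Finset.sum_congr rfl fun l _ => ?_
      ring
    simp only [e]
    rw [hv, bc]
    have p1 := Real.Gamma_pos_of_pos (show 0 < (m : ℝ) + a + 1 by have := m.cast_nonneg (α := ℝ); linarith)
    have p2 := Real.Gamma_pos_of_pos (show 0 < (k : ℝ) + a + 1 by have := k.cast_nonneg (α := ℝ); linarith)
    generalize Real.Gamma (m + a + 1) = G1 at *
    generalize Real.Gamma (k + a + 1) = G2 at *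
    field_simp
  · unfold Wp
    rw [Finset.mul_sum]
    congr 1
    refine Finset.sum_congr rfl fun l _ => ?_
    ring

lemma hasSum_WpA (a : ℝ) (A B : ℝ) :
    HasSum (fun m : ℕ => A ^ m / m.factorial * Wp a B m) (Real.exp A * Er a (A * B)) := by
  have h1 := summable_Er_gen a (A * B)
  have h2 := NormedSpace.norm_expSeries_div_summable (𝔸 := ℝ) A
  have h3 := hasSum_sum_range_mul_of_summable_norm h1 h2
  rw [(NormedSpace.expSeries_div_hasSum_exp (𝔸 := ℝ) A).tsum_eq, ← Real.exp_eq_exp_ℝ, (hasSum_Er_gen a _).tsum_eq] at h3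
  refine hs_congr h3 (fun m => ?_) (mul_comm _ _)
  unfold Wp
  rw [Finset.mul_sum]
  refine Finset.sum_congr rfl fun i hi => ?_
  have him : i ≤ m := by have := Finset.mem_range.mp hi; omega
  obtain ⟨k, rfl⟩ := Nat.exists_eq_add_of_le him
  rw [Nat.choose_symm_add, Nat.add_choose, show i + k - i = k by omega, bc, mul_pow, pow_add]
  rw [Nat.cast_div (Nat.factorial_mul_factorial_dvd_factorial_add i k) (by positivity)]
  push_cast
  generalize Real.Gamma (i + a + 1) = G
  have : ((i + k).factorial : ℝ) ≠ 0 := by positivity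
  field_simp

lemma gamma_int (r : ℝ) (hr : 0 < r) : ∫ y in Ioi (0 : ℝ), Real.exp (-y) * y ^ (r - 1) = Real.Gamma r :=
  (Real.Gamma_eq_integral hr).symm

lemma W1_integrable (a : ℝ) (ha : -1 / 2 ≤ a) (m : ℕ) (B : ℝ) :
    IntegrableOn (fun y : ℝ => Real.exp (-y) * y ^ (a + m) * Er a (B * y)) (Ioi 0) := by
  obtain ⟨C, hC, h⟩ := Er_bound_lin a ha (e := 1 / (2 * (|B| + 1))) (by positivity)
  have hm : (0 : ℝ) ≤ m := m.cast_nonneg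
  refine Integrable.mono' ((exp_rpow_integrable (c := 1 / 2) (r := a + m) (by norm_num) (by linarith)).const_mul C) ?_ ?_
  · refine ContinuousOn.aestronglyMeasurable (ContinuousOn.mul (ContinuousOn.mul (by fun_prop) ?_) ?_) measurableSet_Ioi
    · intro x hx
      exact (Real.continuousAt_rpow_const x _ (Or.inl (ne_of_gt hx))).continuousWithinAt
    · have := continuous_Er ha
      fun_prop
  · refine (ae_restrict_iff' measurableSet_Ioi).mpr (Eventually.of_forall fun s hs => ?_)
    have hs' : 0 < s := hs
    rw [norm_mul, Real.norm_of_nonneg (by positivity), Real.norm_eq_abs]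
    have h1 : |Er a (B * s)| ≤ C * Real.exp (1 / 2 * s) := by
      refine (h _).trans (mul_le_mul_of_nonneg_left (Real.exp_le_exp.mpr ?_) hC.le)
      rw [abs_mul, abs_of_pos hs', ← mul_assoc]
      gcongr
      rw [div_mul_eq_mul_div, div_le_div_iff₀ (by positivity) (by positivity)]
      nlinarith [abs_nonneg B]
    calc _ ≤ Real.exp (-s) * s ^ (a + m) * (C * Real.exp (1 / 2 * s)) := by gcongr
      _ = C * ((Real.exp (-s) * Real.exp (1 / 2 * s)) * s ^ (a + m)) := by ring
      _ = _ := by rw [← Real.exp_add]; ring_nf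

lemma W1 (a : ℝ) (ha : -1 / 2 ≤ a) (m : ℕ) (B : ℝ) :
    ∫ y in Ioi (0 : ℝ), Real.exp (-y) * y ^ (a + m) * Er a (B * y) = Real.Gamma (m + a + 1) * (Real.exp B * Wp a B m) := by
  have hm : (0 : ℝ) ≤ m := m.cast_nonneg
  have hF : ∀ (k : ℕ) (c : ℝ), ∀ y ∈ Ioi (0 : ℝ), c * (Real.exp (-y) * y ^ (a + 1 + m + k - 1)) = Real.exp (-y) * y ^ (a + m) * (c * y ^ k) := by
    intro k c y hy
    rw [show a + 1 + m + k - 1 = (a + m) + k by ring, Real.rpow_add hy, Real.rpow_natCast]; ring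
  have hFi : ∀ (k : ℕ) (c : ℝ), IntegrableOn (fun y => Real.exp (-y) * y ^ (a + m) * (c * y ^ k)) (Ioi 0) := by
    intro k c
    have := (Real.GammaIntegral_convergent (s := a + 1 + m + k) (by have := k.cast_nonneg (α := ℝ); linarith)).const_mul c
    exact IntegrableOn.congr_fun this (hF k c) measurableSet_Ioi
  have hFv : ∀ (k : ℕ) (c : ℝ), ∫ y in Ioi (0 : ℝ), Real.exp (-y) * y ^ (a + m) * (c * y ^ k) = c * Real.Gamma (a + 1 + m + k) := by
    intro k c
    rw [← setIntegral_congr_fun measurableSet_Ioi (hF k c), integral_const_mul, gamma_int _ (by have := k.cast_nonneg (α := ℝ); linarith)]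
  have key := hasSum_integral_of_summable_integral_norm (μ := volume.restrict (Ioi (0 : ℝ)))
    (F := fun (k : ℕ) y => Real.exp (-y) * y ^ (a + m) * (bc a k * B ^ k * y ^ k)) (fun k => hFi k _) ?_
  · have e2 : ∀ y, ∑' k : ℕ, Real.exp (-y) * y ^ (a + m) * (bc a k * B ^ k * y ^ k) = Real.exp (-y) * y ^ (a + m) * Er a (B * y) := by
      intro y
      rw [tsum_mul_left, Er]
      congr 2; ext k; rw [mul_pow]; ring
    simp only [e2, hFv] at key
    exact key.unique (hasSum_Wp a (by linarith) B m)
  · have e3 : ∀ k : ℕ, ∫ y in Ioi (0 : ℝ), ‖Real.exp (-y) * y ^ (a + m) * (bc a k * B ^ k * y ^ k)‖ = bc a k * |B| ^ k * Real.Gamma (a + 1 + m + k) := by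
      intro k
      rw [← hFv]
      refine setIntegral_congr_fun measurableSet_Ioi fun y hy => ?_
      have hy' : 0 < y := hy
      have := bc_pos (a := a) (by linarith) k
      simp only [norm_mul, norm_pow, Real.norm_eq_abs, abs_of_pos hy', abs_of_pos this, abs_of_pos (Real.exp_pos _), abs_of_pos (Real.rpow_pos_of_pos hy' _)]
    simp only [e3]
    exact (hasSum_Wp a (by linarith) |B| m).summable

lemma weber (a : ℝ) (ha : -1 / 2 ≤ a) (A B : ℝ) :
    ∫ y in Ioi (0 : ℝ), Real.exp (-y) * y ^ a * Er a (A * y) * Er a (B * y) = Real.exp (A + B) * Er a (A * B) := by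
  have hF : ∀ (m : ℕ) (B c : ℝ), ∀ y ∈ Ioi (0 : ℝ), c * (Real.exp (-y) * y ^ (a + m) * Er a (B * y)) = Real.exp (-y) * y ^ a * (c * y ^ m) * Er a (B * y) := by
    intro k B c y hy
    rw [Real.rpow_add hy, Real.rpow_natCast]; ring
  have hFi : ∀ (m : ℕ) (B c : ℝ), IntegrableOn (fun y => Real.exp (-y) * y ^ a * (c * y ^ m) * Er a (B * y)) (Ioi 0) := by
    intro k B c
    exact IntegrableOn.congr_fun ((W1_integrable a ha k B).const_mul c) (hF k B c) measurableSet_Ioi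
  have hFv : ∀ (m : ℕ) (B A : ℝ), ∫ y in Ioi (0 : ℝ), Real.exp (-y) * y ^ a * (bc a m * A ^ m * y ^ m) * Er a (B * y) = Real.exp B * (A ^ m / m.factorial * Wp a B m) := by
    intro m B A
    rw [← setIntegral_congr_fun measurableSet_Ioi (hF m B _), integral_const_mul, W1 a ha, bc]
    have p1 := Real.Gamma_pos_of_pos (show 0 < (m : ℝ) + a + 1 by have := m.cast_nonneg (α := ℝ); linarith)
    generalize Real.Gamma (m + a + 1) = G1 at *
    field_simp
  have key := hasSum_integral_of_summable_integral_norm (μ := volume.restrict (Ioi (0 : ℝ)))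
    (F := fun (m : ℕ) y => Real.exp (-y) * y ^ a * (bc a m * A ^ m * y ^ m) * Er a (B * y)) (fun k => hFi k _ _) ?_
  · have e2 : ∀ y, ∑' k : ℕ, Real.exp (-y) * y ^ a * (bc a k * A ^ k * y ^ k) * Er a (B * y) = Real.exp (-y) * y ^ a * Er a (A * y) * Er a (B * y) := by
      intro y
      rw [tsum_mul_right, tsum_mul_left, Er]
      congr 3; ext k; rw [mul_pow]; ring
    simp only [e2, hFv] at key
    rw [key.unique ((hasSum_WpA a A B).mul_left (Real.exp B)), Real.exp_add]; ring
  · refine Summable.of_nonneg_of_le (fun m => integral_nonneg fun _ => norm_nonneg _) (fun m => ?_)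
      ((hasSum_WpA a |A| |B|).summable.mul_left (Real.exp |B|))
    rw [← hFv]
    refine setIntegral_mono_on (hFi _ _ _).norm (hFi _ _ _) measurableSet_Ioi fun y hy => ?_
    have hy' : 0 < y := hy
    have := bc_pos (a := a) (by linarith) m
    simp only [norm_mul, norm_pow, Real.norm_eq_abs, abs_of_pos hy', abs_of_pos this, abs_of_pos (Real.exp_pos _), abs_of_pos (Real.rpow_pos_of_pos hy' _)]
    gcongr
    exact Er_abs_le (by linarith) _ _ (by rw [abs_mul, abs_of_pos hy'])


/-! ### Reduction of the integral to a Laplace transform -/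

lemma weber_scaled (a : ℝ) (ha : -1 / 2 ≤ a) (A B : ℝ) {v : ℝ} (hv : 0 < v) :
    ∫ w in Ioi (0 : ℝ), w ^ a * Real.exp (-(w / v)) * Er a (A * w) * Er a (B * w)
      = v ^ (a + 1) * Real.exp ((A + B) * v) * Er a (A * B * v ^ 2) := by
  have h := integral_comp_mul_left_Ioi (fun w => w ^ a * Real.exp (-(w / v)) * Er a (A * w) * Er a (B * w)) 0 hv
  rw [mul_zero] at h
  have h2 := weber a ha (A * v) (B * v)
  have h3 : ∫ x in Ioi (0 : ℝ), (v * x) ^ a * Real.exp (-(v * x / v)) * Er a (A * (v * x)) * Er a (B * (v * x))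
      = v ^ a * ∫ y in Ioi (0 : ℝ), Real.exp (-y) * y ^ a * Er a (A * v * y) * Er a (B * v * y) := by
    rw [← integral_const_mul]
    refine setIntegral_congr_fun measurableSet_Ioi fun x hx => ?_
    have hx' : 0 < x := hx
    rw [Real.mul_rpow hv.le hx'.le, mul_div_cancel_left₀ _ hv.ne', ← mul_assoc A, ← mul_assoc B]
    ring
  rw [h3, h2, smul_eq_mul] at h
  rw [Real.rpow_add_one hv.ne', show (A + B) * v = A * v + B * v by ring, show A * B * v ^ 2 = A * v * (B * v) by ring]
  have : ∀ X : ℝ, X = v * (v⁻¹ * X) := fun X => by field_simp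
  rw [this (∫ w in Ioi (0 : ℝ), w ^ a * Real.exp (-(w / v)) * Er a (A * w) * Er a (B * w)), ← h]
  ring

lemma weber_scaled_integrable (a : ℝ) (ha : -1 / 2 ≤ a) (A : ℝ) {v : ℝ} (hv : 0 < v) :
    IntegrableOn (fun w : ℝ => w ^ a * Real.exp (-(w / v)) * Er a (A * w)) (Ioi 0) := by
  have h := (W1_integrable a ha 0 (A * v)).const_mul (v ^ a)
  have h1 := (integrableOn_Ioi_comp_mul_left_iff (fun w : ℝ => w ^ a * Real.exp (-(w / v)) * Er a (A * w)) 0 hv).mp ?_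
  · simpa using h1
  · refine IntegrableOn.congr_fun h (fun x hx => ?_) measurableSet_Ioi
    have hx' : 0 < x := hx
    simp only [Nat.cast_zero, add_zero]
    rw [Real.mul_rpow hv.le hx'.le, mul_div_cancel_left₀ _ hv.ne', ← mul_assoc A]
    ring

lemma KJ_scaled (β : ℝ) (hβ : -1 / 2 ≤ β) {q b w : ℝ} (hq : 0 < q) (hb : 0 ≤ b) (hbq : b ≤ q / 4) (hw : 0 < w) :
    w ^ β * hB (-β) (q ^ 2 * w) * Er β (-(b ^ 2 * w))
      = ∫ v in Ioi (0 : ℝ), Real.exp (-(w / v)) * (Real.exp (-((q ^ 2 - b ^ 2) * v)) * Er β (-(q ^ 2 * b ^ 2 * v ^ 2)) * v ^ (β - 1)) := by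
  have hq2 : 0 < q ^ 2 := by positivity
  have h := KJ β hβ (Z := q ^ 2 * w) (B := b ^ 2 / q ^ 2) (by positivity) (by positivity)
    (by rw [div_le_div_iff₀ (by positivity) (by norm_num)]; nlinarith)
  rw [hB_symm β (by positivity), show b ^ 2 / q ^ 2 * (q ^ 2 * w) = b ^ 2 * w by field_simp, Real.mul_rpow hq2.le hw.le] at h
  have h2 := integral_comp_mul_left_Ioi (fun s => hk β (q ^ 2 * w) s * (Real.exp (b ^ 2 / q ^ 2 * s) * Er β (-(b ^ 2 / q ^ 2 * s ^ 2)))) 0 hq2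
  rw [mul_zero, h, smul_eq_mul] at h2
  have h3 : ∫ x in Ioi (0 : ℝ), hk β (q ^ 2 * w) (q ^ 2 * x) * (Real.exp (b ^ 2 / q ^ 2 * (q ^ 2 * x)) * Er β (-(b ^ 2 / q ^ 2 * (q ^ 2 * x) ^ 2)))
     = (q ^ 2) ^ (β - 1) * ∫ v in Ioi (0 : ℝ), Real.exp (-(w / v)) * (Real.exp (-((q ^ 2 - b ^ 2) * v)) * Er β (-(q ^ 2 * b ^ 2 * v ^ 2)) * v ^ (β - 1)) := by
    rw [← integral_const_mul]
    refine setIntegral_congr_fun measurableSet_Ioi fun x hx => ?_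
    have hx' : 0 < x := hx
    simp only [hk]
    rw [Real.mul_rpow hq2.le hx'.le, show b ^ 2 / q ^ 2 * (q ^ 2 * x) ^ 2 = q ^ 2 * b ^ 2 * x ^ 2 by field_simp,
      show b ^ 2 / q ^ 2 * (q ^ 2 * x) = b ^ 2 * x by field_simp, show q ^ 2 * w / (q ^ 2 * x) = w / x by field_simp]
    have e : Real.exp (-(q ^ 2 * x) - w / x) * Real.exp (b ^ 2 * x) = Real.exp (-(w / x)) * Real.exp (-((q ^ 2 - b ^ 2) * x)) := by
      rw [← Real.exp_add, ← Real.exp_add]; congr 1; ring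
    linear_combination ((q ^ 2) ^ (β - 1) * x ^ (β - 1) * Er β (-(q ^ 2 * b ^ 2 * x ^ 2))) * e
  rw [h3] at h2
  have e4 : (q ^ 2) ^ β = (q ^ 2) ^ (β - 1) * q ^ 2 := by
    rw [← Real.rpow_add_one hq2.ne']; ring_nf
  have h5 : 0 < (q ^ 2) ^ (β - 1) := by positivity
  refine mul_left_cancel₀ h5.ne' ?_
  rw [h2, e4]
  field_simp

lemma sub_sq_quarter (G : ℝ → ℝ) : ∫ x in Ioi (0 : ℝ), x / 2 * G (x ^ 2 / 4) = ∫ w in Ioi (0 : ℝ), G w := by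
  have h := integral_comp_rpow_Ioi (fun y => 1 / 4 * G (1 / 4 * y)) (p := 2) (by norm_num)
  have h2 := integral_comp_mul_left_Ioi G 0 (show (0 : ℝ) < 1 / 4 by norm_num)
  rw [mul_zero, smul_eq_mul] at h2
  rw [integral_const_mul, h2] at h
  rw [show (1 : ℝ) / 4 * ((1 / 4)⁻¹ * ∫ x in Ioi (0 : ℝ), G x) = ∫ x in Ioi (0 : ℝ), G x by ring] at h
  rw [← h]
  refine setIntegral_congr_fun measurableSet_Ioi fun x hx => ?_
  simp only [smul_eq_mul]
  rw [show (2 : ℝ) - 1 = 1 by norm_num, Real.rpow_one, Real.rpow_two, show |(2 : ℝ)| = 2 by norm_num,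
    show x ^ 2 / 4 = 1 / 4 * x ^ 2 by ring]
  ring

lemma red_int (α β : ℝ) (hα : 0 ≤ α) (hβ : -1 / 2 ≤ β) {p q a b : ℝ} (hq : 0 < q) (hb : 0 ≤ b) (hbq : b ≤ q / 4)
    (hpq : b ^ 2 + 2 * q * b < q ^ 2 - p ^ 2) :
    ∫ w in Ioi (0 : ℝ), Er α (p ^ 2 * w) * hB (-β) (q ^ 2 * w) * Er α (-(a ^ 2) * w) * Er β (-(b ^ 2 * w)) * w ^ (α + β)
      = ∫ v in Ioi (0 : ℝ), v ^ (α + β) * Real.exp (-((q ^ 2 - b ^ 2 - p ^ 2 + a ^ 2) * v)) * Er α (-(p ^ 2 * a ^ 2 * v ^ 2)) * Er β (-(q ^ 2 * b ^ 2 * v ^ 2)) := by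
  have hα' : -1 / 2 ≤ α := by linarith
  set g : ℝ → ℝ := fun v => Real.exp (-((q ^ 2 - b ^ 2) * v)) * Er β (-(q ^ 2 * b ^ 2 * v ^ 2)) * v ^ (β - 1) with hg
  set F : ℝ → ℝ → ℝ := fun w v => (w ^ α * Real.exp (-(w / v)) * Er α (p ^ 2 * w) * Er α (-(a ^ 2) * w)) * g v with hF
  have hEα := continuous_Er hα'
  have hEβ := continuous_Er hβ
  have e1 : ∀ w ∈ Ioi (0 : ℝ), Er α (p ^ 2 * w) * hB (-β) (q ^ 2 * w) * Er α (-(a ^ 2) * w) * Er β (-(b ^ 2 * w)) * w ^ (α + β)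
      = ∫ v in Ioi (0 : ℝ), F w v := by
    intro w hw
    have hw' : 0 < w := hw
    have h := KJ_scaled β hβ hq hb hbq hw'
    rw [Real.rpow_add hw']
    calc _ = w ^ α * Er α (p ^ 2 * w) * Er α (-(a ^ 2) * w) * (w ^ β * hB (-β) (q ^ 2 * w) * Er β (-(b ^ 2 * w))) := by ring
      _ = _ := by
        rw [h, ← integral_const_mul]
        congr 1; ext v
        simp only [hF, hg]; ring
  have e2 : ∀ v ∈ Ioi (0 : ℝ), ∫ w in Ioi (0 : ℝ), F w v
      = v ^ (α + β) * Real.exp (-((q ^ 2 - b ^ 2 - p ^ 2 + a ^ 2) * v)) * Er α (-(p ^ 2 * a ^ 2 * v ^ 2)) * Er β (-(q ^ 2 * b ^ 2 * v ^ 2)) := by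
    intro v hv
    have hv' : 0 < v := hv
    simp only [hF]
    rw [integral_mul_const, weber_scaled α hα' _ _ hv']
    simp only [hg]
    have er : v ^ (α + β) = v ^ (α + 1) * v ^ (β - 1) := by
      rw [← Real.rpow_add hv']; congr 1; ring
    rw [show p ^ 2 * -a ^ 2 * v ^ 2 = -(p ^ 2 * a ^ 2 * v ^ 2) by ring, er,
      show -((q ^ 2 - b ^ 2 - p ^ 2 + a ^ 2) * v) = (p ^ 2 + -a ^ 2) * v + -((q ^ 2 - b ^ 2) * v) by ring, Real.exp_add]
    ring
  rw [setIntegral_congr_fun measurableSet_Ioi e1, ← setIntegral_congr_fun measurableSet_Ioi e2]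
  refine integral_integral_swap ?_
  -- integrability
  have hmeas : AEStronglyMeasurable (Function.uncurry F) ((volume.restrict (Ioi (0 : ℝ))).prod (volume.restrict (Ioi (0 : ℝ)))) := by
    rw [Measure.prod_restrict]
    refine ContinuousOn.aestronglyMeasurable ?_ (measurableSet_Ioi.prod measurableSet_Ioi)
    simp only [hF, hg, Function.uncurry_def]
    have c1 : ContinuousOn (fun x : ℝ × ℝ => x.1 ^ α) (Ioi 0 ×ˢ Ioi 0) := by
      refine ContinuousOn.rpow_const continuousOn_fst fun x hx => Or.inl (ne_of_gt hx.1)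
    have c2 : ContinuousOn (fun x : ℝ × ℝ => x.2 ^ (β - 1)) (Ioi 0 ×ˢ Ioi 0) := by
      refine ContinuousOn.rpow_const continuousOn_snd fun x hx => Or.inl (ne_of_gt hx.2)
    have c3 : ContinuousOn (fun x : ℝ × ℝ => Real.exp (-(x.1 / x.2))) (Ioi 0 ×ˢ Ioi 0) := by
      refine Real.continuous_exp.comp_continuousOn (ContinuousOn.neg (continuousOn_fst.div continuousOn_snd fun x hx => (ne_of_gt hx.2)))
    refine ContinuousOn.mul (((c1.mul c3).mul ?_).mul ?_) (ContinuousOn.mul ?_ c2)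
    · exact Continuous.continuousOn (by fun_prop)
    · exact Continuous.continuousOn (by fun_prop)
    · exact Continuous.continuousOn (by fun_prop)
  have hbound : ∀ v ∈ Ioi (0 : ℝ), ∀ w ∈ Ioi (0 : ℝ), ‖F w v‖ ≤ (w ^ α * Real.exp (-(w / v)) * Er α (p ^ 2 * w) * Er α 0) * |g v| := by
    intro v hv w hw
    have hv' : 0 < v := hv
    have hw' : 0 < w := hw
    have p1 : 0 ≤ Er α (p ^ 2 * w) := Er_nonneg (by linarith) (by positivity)
    simp only [hF, norm_mul, Real.norm_eq_abs, abs_of_pos (Real.exp_pos _), abs_of_pos (Real.rpow_pos_of_pos hw' _), abs_of_nonneg p1]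
    gcongr
    rw [Er_zero]
    refine Er_neg_bound α (by linarith) _ (by nlinarith [sq_nonneg a])
  have hFint : ∀ v ∈ Ioi (0 : ℝ), IntegrableOn (fun w => (w ^ α * Real.exp (-(w / v)) * Er α (p ^ 2 * w) * Er α 0) * |g v|) (Ioi 0) := by
    intro v hv
    exact ((weber_scaled_integrable α hα' (p ^ 2) hv).mul_const _).mul_const _
  have hsec : ∀ v ∈ Ioi (0 : ℝ), IntegrableOn (fun w => F w v) (Ioi 0) := by
    intro v hv
    have hv' : 0 < v := hv
    refine Integrable.mono' (hFint v hv) ?_ ((ae_restrict_iff' measurableSet_Ioi).mpr (Eventually.of_forall (hbound v hv)))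
    refine ContinuousOn.aestronglyMeasurable ?_ measurableSet_Ioi
    simp only [hF]
    refine ContinuousOn.mul (((ContinuousOn.mul ?_ ?_).mul ?_).mul ?_) continuousOn_const
    · exact fun x hx => (Real.continuousAt_rpow_const x _ (Or.inl (ne_of_gt hx))).continuousWithinAt
    · exact Continuous.continuousOn (by fun_prop)
    · exact Continuous.continuousOn (by fun_prop)
    · exact Continuous.continuousOn (by fun_prop)
  rw [integrable_prod_iff' hmeas]
  refine ⟨(ae_restrict_iff' measurableSet_Ioi).mpr (Eventually.of_forall hsec), ?_⟩
  obtain ⟨C, hC, hCb⟩ := Ec_bound_exp β hβ (e := 1) one_pos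
  set c0 := q ^ 2 - p ^ 2 - b ^ 2 - 2 * q * b with hc0
  have hint := (exp_rpow_integrable (c := c0) (r := α + β) (by linarith) (by linarith)).const_mul (Er α 0 * C)
  refine Integrable.mono' hint hmeas.norm.prod_swap.integral_prod_right' ?_
  refine (ae_restrict_iff' measurableSet_Ioi).mpr (Eventually.of_forall fun v hv => ?_)
  have hv' : 0 < v := hv
  rw [Real.norm_of_nonneg (integral_nonneg fun _ => norm_nonneg _)]
  have s1 : ∫ w in Ioi (0 : ℝ), ‖F w v‖ ≤ ∫ w in Ioi (0 : ℝ), (w ^ α * Real.exp (-(w / v)) * Er α (p ^ 2 * w) * Er α 0) * |g v| :=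
    setIntegral_mono_on (hsec v hv).norm (hFint v hv) measurableSet_Ioi (hbound v hv)
  have s2 : ∫ w in Ioi (0 : ℝ), (w ^ α * Real.exp (-(w / v)) * Er α (p ^ 2 * w) * Er α 0) * |g v|
      = v ^ (α + 1) * Real.exp (p ^ 2 * v) * Er α 0 * |g v| := by
    rw [integral_mul_const]
    have := weber_scaled α hα' (p ^ 2) 0 hv'
    simp only [zero_mul, mul_zero, add_zero] at this
    rw [this]
  have s3 : |g v| ≤ Real.exp (-((q ^ 2 - b ^ 2) * v)) * (C * Real.exp (2 * q * b * v)) * v ^ (β - 1) := by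
    simp only [hg, abs_mul, abs_of_pos (Real.exp_pos _), abs_of_pos (Real.rpow_pos_of_pos hv' _)]
    gcongr
    have := hCb ((2 * q * b * v : ℝ) : ℂ)
    rw [show -((2 * q * b * v : ℝ) : ℂ) ^ 2 / 4 = ((-(q ^ 2 * b ^ 2 * v ^ 2) : ℝ) : ℂ) by push_cast; ring, Ec_ofReal,
      Complex.norm_real, Complex.norm_real, Complex.ofReal_im, abs_zero, zero_add, one_mul,
      Real.norm_of_nonneg (by positivity : 0 ≤ 2 * q * b * v)] at this
    exact this
  refine le_trans (show ∫ w in Ioi (0 : ℝ), ‖F w v‖ ≤ _ from s1.trans_eq s2) ?_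
  have p0 : 0 ≤ Er α 0 := Er_nonneg (by linarith) le_rfl
  calc v ^ (α + 1) * Real.exp (p ^ 2 * v) * Er α 0 * |g v|
      ≤ v ^ (α + 1) * Real.exp (p ^ 2 * v) * Er α 0 * (Real.exp (-((q ^ 2 - b ^ 2) * v)) * (C * Real.exp (2 * q * b * v)) * v ^ (β - 1)) := by gcongr
    _ = Er α 0 * C * ((Real.exp (p ^ 2 * v) * Real.exp (-((q ^ 2 - b ^ 2) * v)) * Real.exp (2 * q * b * v)) * (v ^ (α + 1) * v ^ (β - 1))) := by ring
    _ = _ := by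
      rw [← Real.exp_add, ← Real.exp_add, ← Real.rpow_add hv']
      simp only [hc0]
      ring_nf


/-! ### Laplace transforms of Bessel functions and Gegenbauer polynomials -/

lemma binom_series (r : ℝ) (hr : 0 < r) (z : ℝ) (hz0 : 0 ≤ z) (hz : z < 1) :
    HasSum (fun m : ℕ => Real.Gamma (r + m) / m.factorial * (-z) ^ m) (Real.Gamma r * (1 + z) ^ (-r)) := by
  have hF : ∀ (m : ℕ), ∀ y ∈ Ioi (0 : ℝ), (-z) ^ m / m.factorial * (Real.exp (-y) * y ^ (r + m - 1)) = (Real.exp (-y) * y ^ (r - 1)) * ((-(z * y)) ^ m / m.factorial) := by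
    intro k y hy
    rw [show r + k - 1 = (r - 1) + k by ring, Real.rpow_add hy, Real.rpow_natCast, show -(z * y) = (-z) * y by ring, mul_pow]; ring
  have hFv : ∀ (m : ℕ), ∫ y in Ioi (0 : ℝ), (Real.exp (-y) * y ^ (r - 1)) * ((-(z * y)) ^ m / m.factorial) = Real.Gamma (r + m) / m.factorial * (-z) ^ m := by
    intro k
    rw [← setIntegral_congr_fun measurableSet_Ioi (hF k), integral_const_mul, gamma_int _ (by have := k.cast_nonneg (α := ℝ); linarith)]
    ring
  have hexp : ∀ x : ℝ, HasSum (fun m : ℕ => x ^ m / (m.factorial : ℝ)) (Real.exp x) := by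
    intro x
    rw [Real.exp_eq_exp_ℝ]; exact NormedSpace.expSeries_div_hasSum_exp (𝔸 := ℝ) x
  have key := hasSum_integral_of_dominated_convergence (μ := volume.restrict (Ioi (0 : ℝ)))
    (F := fun (m : ℕ) y => (Real.exp (-y) * y ^ (r - 1)) * ((-(z * y)) ^ m / m.factorial))
    (f := fun y => (Real.exp (-y) * y ^ (r - 1)) * Real.exp (-(z * y)))
    (fun m y => (Real.exp (-y) * y ^ (r - 1)) * ((z * y) ^ m / m.factorial)) ?_ ?_ ?_ ?_ ?_
  · simp only [hFv] at key
    refine hs_congr key (fun _ => rfl) ?_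
    have := Real.integral_rpow_mul_exp_neg_mul_Ioi hr (show 0 < 1 + z by linarith)
    rw [one_div, Real.inv_rpow (by linarith), ← Real.rpow_neg (by linarith)] at this
    rw [mul_comm, ← this]
    refine setIntegral_congr_fun measurableSet_Ioi fun y hy => ?_
    rw [show -((1 + z) * y) = -y + -(z * y) by ring, Real.exp_add]; ring
  · intro m
    refine ContinuousOn.aestronglyMeasurable (ContinuousOn.mul (ContinuousOn.mul (by fun_prop) ?_) (by fun_prop)) measurableSet_Ioi
    intro x hx
    exact (Real.continuousAt_rpow_const x _ (Or.inl (ne_of_gt hx))).continuousWithinAt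
  · intro m
    refine (ae_restrict_iff' measurableSet_Ioi).mpr (Eventually.of_forall fun y hy => ?_)
    have hy' : 0 < y := hy
    rw [norm_mul, Real.norm_of_nonneg (by positivity), norm_div, norm_pow, norm_neg, Real.norm_of_nonneg (by positivity : 0 ≤ z * y), Real.norm_natCast]
  · exact Eventually.of_forall fun y => (hexp (z * y)).summable.mul_left _
  · have hint := exp_rpow_integrable (c := 1 - z) (r := r - 1) (by linarith) (by linarith)
    refine IntegrableOn.congr_fun hint (fun y hy => ?_) measurableSet_Ioi
    rw [tsum_mul_left, (hexp _).tsum_eq, show -((1 - z) * y) = -y + z * y by ring, Real.exp_add]; ring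
  · exact Eventually.of_forall fun y => (hexp (-(z * y))).mul_left _

noncomputable def Lk (β c s : ℝ) (k : ℕ) : ℝ :=
  ∫ x in Ioi (0 : ℝ), Real.exp (-(c * x)) * x ^ (2 * β + k) * Er β (-(x * s / 2) ^ 2)

noncomputable def Tk (β c s : ℝ) (k m : ℕ) : ℝ :=
  bc β m * (-(s ^ 2 / 4)) ^ m * Real.Gamma (2 * β + 1 + k + 2 * m) * c ^ (-(2 * β + 1 + k + 2 * m))

lemma Tk_hasSum (β : ℝ) (hβ : -1 / 2 ≤ β) {c s : ℝ} (hs : 0 ≤ s) (hsc : s < c) (k : ℕ) (hk : -1 < 2 * β + k) :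
    HasSum (Tk β c s k) (Lk β c s k) := by
  have hc : 0 < c := by linarith
  obtain ⟨e, he, hec⟩ : ∃ e : ℝ, 0 < e ∧ (1 + e) * s < c := by
    refine ⟨(c - s) / (2 * (s + 1)), by have : 0 < c - s := by linarith
                                        positivity, ?_⟩
    have : (c - s) / (2 * (s + 1)) * s ≤ (c - s) / 2 := by
      rw [div_mul_eq_mul_div, div_le_div_iff₀ (by positivity) (by positivity)]
      nlinarith
    nlinarith
  obtain ⟨C, hC, hCb⟩ := Er_bound_exp β hβ he
  have hFv : ∀ m : ℕ, ∫ x in Ioi (0 : ℝ), Real.exp (-(c * x)) * x ^ (2 * β + k) * (bc β m * (-(x * s / 2) ^ 2) ^ m) = Tk β c s k m := by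
    intro m
    have hm : (0 : ℝ) ≤ m := m.cast_nonneg
    have := Real.integral_rpow_mul_exp_neg_mul_Ioi (a := 2 * β + 1 + k + 2 * m) (r := c) (by linarith) hc
    rw [one_div, Real.inv_rpow hc.le, ← Real.rpow_neg hc.le] at this
    unfold Tk
    rw [mul_assoc, mul_comm (Real.Gamma _), ← this, ← integral_const_mul]
    refine setIntegral_congr_fun measurableSet_Ioi fun x hx => ?_
    have hx' : 0 < x := hx
    rw [show 2 * β + 1 + k + 2 * m - 1 = (2 * β + k) + ((2 * m : ℕ) : ℝ) by push_cast; ring, Real.rpow_add hx' (2 * β + k), Real.rpow_natCast, pow_mul,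
      show -(x * s / 2) ^ 2 = -(s ^ 2 / 4) * x ^ 2 by ring, mul_pow]
    ring
  have hEβ := continuous_Er hβ
  have hcr : ContinuousOn (fun x : ℝ => x ^ (2 * β + k)) (Ioi 0) := by
    intro x hx
    exact (Real.continuousAt_rpow_const x _ (Or.inl (ne_of_gt hx))).continuousWithinAt
  have hsum : ∀ x : ℝ, HasSum (fun m => bc β m * ((x * s / 2) ^ 2) ^ m) (Er β ((x * s / 2) ^ 2)) := fun x => hasSum_Er_gen _ _
  have key := hasSum_integral_of_dominated_convergence (μ := volume.restrict (Ioi (0 : ℝ)))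
    (F := fun (m : ℕ) x => Real.exp (-(c * x)) * x ^ (2 * β + k) * (bc β m * (-(x * s / 2) ^ 2) ^ m))
    (f := fun x => Real.exp (-(c * x)) * x ^ (2 * β + k) * Er β (-(x * s / 2) ^ 2))
    (fun m x => Real.exp (-(c * x)) * x ^ (2 * β + k) * (bc β m * ((x * s / 2) ^ 2) ^ m)) ?_ ?_ ?_ ?_ ?_
  · exact hs_congr key (fun m => (hFv m).symm) rfl
  · intro m
    exact ContinuousOn.aestronglyMeasurable (ContinuousOn.mul (ContinuousOn.mul (by fun_prop) hcr) (by fun_prop)) measurableSet_Ioi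
  · intro m
    refine (ae_restrict_iff' measurableSet_Ioi).mpr (Eventually.of_forall fun y hy => ?_)
    have hy' : 0 < y := hy
    rw [norm_mul, Real.norm_of_nonneg (by positivity), norm_mul, norm_pow, norm_neg, Real.norm_of_nonneg (bc_pos (by linarith) m).le,
      Real.norm_of_nonneg (by positivity)]
  · exact Eventually.of_forall fun y => (hsum y).summable.mul_left _
  · have hint := (exp_rpow_integrable (c := c - (1 + e) * s) (r := 2 * β + k) (by linarith) hk).const_mul C
    have e1 : ∀ x, ∑' m, Real.exp (-(c * x)) * x ^ (2 * β + k) * (bc β m * ((x * s / 2) ^ 2) ^ m) = Real.exp (-(c * x)) * x ^ (2 * β + k) * Er β ((x * s / 2) ^ 2) := by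
      intro x; rw [tsum_mul_left, (hsum x).tsum_eq]
    simp only [e1]
    refine Integrable.mono' hint (ContinuousOn.aestronglyMeasurable (ContinuousOn.mul (ContinuousOn.mul (by fun_prop) hcr) (by fun_prop)) measurableSet_Ioi) ?_
    refine (ae_restrict_iff' measurableSet_Ioi).mpr (Eventually.of_forall fun y hy => ?_)
    have hy' : 0 < y := hy
    rw [norm_mul, Real.norm_of_nonneg (by positivity), Real.norm_of_nonneg (Er_nonneg (by linarith) (by positivity))]
    have := hCb (y * s) (by positivity)
    rw [show (y * s) ^ 2 / 4 = (y * s / 2) ^ 2 by ring] at this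
    calc _ ≤ Real.exp (-(c * y)) * y ^ (2 * β + k) * (C * Real.exp ((1 + e) * (y * s))) := by gcongr
      _ = C * ((Real.exp (-(c * y)) * Real.exp ((1 + e) * (y * s))) * y ^ (2 * β + k)) := by ring
      _ = _ := by rw [← Real.exp_add]; ring_nf
  · exact Eventually.of_forall fun y => (hasSum_Er_gen β _).mul_left _

lemma Lk_rec (β : ℝ) (hβ : -1 / 2 ≤ β) {c s : ℝ} (hs : 0 ≤ s) (hsc : s < c) (hcs : c ^ 2 + s ^ 2 = 1) (k : ℕ) (hk : -1 < 2 * β + k) :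
    Lk β c s (k + 2) = 2 * (k + 1 + (β + 1 / 2)) * c * Lk β c s (k + 1) - (k + 2 * β + 1) * (k + 1) * Lk β c s k := by
  have hc : 0 < c := by linarith
  have h0 := Tk_hasSum β hβ hs hsc k hk
  have h1 := Tk_hasSum β hβ hs hsc (k + 1) (by push_cast; linarith)
  have h2 := Tk_hasSum β hβ hs hsc (k + 2) (by push_cast; linarith)
  set y : ℕ → ℝ := fun m => bc β m * (-(s ^ 2 / 4)) ^ m * Real.Gamma (2 * β + 1 + k + 2 * m) * c ^ (-(2 * β + 1 + k + 2 * m) - 2) with hy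
  have hpos : ∀ m : ℕ, 0 < 2 * β + 1 + k + 2 * m := fun m => by have := m.cast_nonneg (α := ℝ); linarith
  have t0 : ∀ m, Tk β c s k m = c ^ 2 * y m := by
    intro m
    simp only [Tk, hy]
    rw [Real.rpow_sub hc, Real.rpow_two]
    field_simp
  have t1 : ∀ m : ℕ, Tk β c s (k + 1) m = (2 * β + 1 + k + 2 * m) * c * y m := by
    intro m
    simp only [Tk, hy]
    push_cast
    rw [show 2 * β + 1 + ((k : ℝ) + 1) + 2 * m = (2 * β + 1 + k + 2 * m) + 1 by ring, Real.Gamma_add_one (hpos m).ne',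
      show -(2 * β + 1 + (k : ℝ) + 2 * m + 1) = (-(2 * β + 1 + k + 2 * m) - 2) + 1 by ring, Real.rpow_add_one hc.ne']
    ring
  have t2 : ∀ m : ℕ, Tk β c s (k + 2) m = (2 * β + 1 + k + 2 * m) * (2 * β + 1 + k + 2 * m + 1) * y m := by
    intro m
    simp only [Tk, hy]
    push_cast
    rw [show 2 * β + 1 + ((k : ℝ) + 2) + 2 * m = (2 * β + 1 + k + 2 * m + 1) + 1 by ring, Real.Gamma_add_one (by have := hpos m; linarith),
      Real.Gamma_add_one (hpos m).ne',
      show -(2 * β + 1 + (k : ℝ) + 2 * m + 1 + 1) = (-(2 * β + 1 + k + 2 * m) - 2) by ring]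
    ring
  have ty : ∀ m : ℕ, -(4 * ((m : ℝ) + 1) * (m + 1 + β) * c ^ 2 * y (m + 1)) = s ^ 2 * ((2 * β + 1 + k + 2 * m) * (2 * β + 1 + k + 2 * m + 1) * y m) := by
    intro m
    rw [← t2]
    simp only [Tk, hy]
    rw [← bc_succ (a := β) (by linarith) m]
    push_cast
    rw [show 2 * β + 1 + ((k : ℝ) + 2) + 2 * m = 2 * β + 1 + k + 2 * (m + 1) by ring, Real.rpow_sub hc, Real.rpow_two]
    generalize Real.Gamma (2 * β + 1 + k + 2 * (m + 1)) = G
    generalize c ^ (-(2 * β + 1 + (k : ℝ) + 2 * (m + 1))) = R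
    field_simp
    rw [pow_succ]; ring
  have s1 : HasSum (fun m : ℕ => -(4 * (m : ℝ) * (m + β) * c ^ 2 * y m)) (s ^ 2 * Lk β c s (k + 2)) := by
    rw [← hasSum_nat_add_iff' 1]
    refine hs_congr (h2.mul_left (s ^ 2)) (fun m => ?_) (by simp)
    rw [t2, ← ty]; push_cast; ring
  have s2 := (h2.mul_left (c ^ 2)).add s1
  have s3 := (h1.mul_left (2 * (k + 1 + (β + 1 / 2)) * c)).sub (h0.mul_left ((k + 2 * β + 1) * (k + 1)))
  have s4 := hs_congr s3 (g := fun m : ℕ => c ^ 2 * Tk β c s (k + 2) m + -(4 * (m : ℝ) * (m + β) * c ^ 2 * y m)) (fun m => by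
    rw [t0, t1, t2]; ring) rfl
  have := s2.unique s4
  rw [← this]
  linear_combination (-Lk β c s (k + 2)) * hcs

lemma kap_add (b : ℝ) (m : ℕ) : kap (b + m) = 4 ^ m * kap b := by
  unfold kap
  rw [show 2 * (b + m) = 2 * b + ((2 * m : ℕ) : ℝ) by push_cast; ring, Real.rpow_add (by norm_num), Real.rpow_natCast, pow_mul]
  norm_num; ring

lemma kap_half (b : ℝ) : kap (b + 1 / 2) = 2 * kap b := by
  unfold kap
  rw [show 2 * (b + 1 / 2) = 2 * b + 1 by ring, Real.rpow_add_one (by norm_num)]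
  ring

lemma one_add_rpow (c s r : ℝ) (hc : 0 < c) (hcs : c ^ 2 + s ^ 2 = 1) : (1 + s ^ 2 / c ^ 2) ^ (-r) = c ^ (2 * r) := by
  have : 1 + s ^ 2 / c ^ 2 = (c ^ 2)⁻¹ := by field_simp; linarith
  rw [this, Real.inv_rpow (by positivity), ← Real.rpow_neg (by positivity), neg_neg, ← Real.rpow_natCast, ← Real.rpow_mul hc.le]
  norm_num

lemma Lk_zero (β : ℝ) (hβ : -1 / 2 < β) {c s : ℝ} (hs : 0 ≤ s) (hsc : s < c) (hcs : c ^ 2 + s ^ 2 = 1) :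
    Lk β c s 0 = kap β * Real.Gamma (β + 1 / 2) := by
  have hc : 0 < c := by linarith
  have h := Tk_hasSum β hβ.le hs hsc 0 (by push_cast; linarith)
  have hb := (binom_series (β + 1 / 2) (by linarith) (s ^ 2 / c ^ 2) (by positivity)
    (by rw [div_lt_one (by positivity)]; nlinarith)).mul_left (kap β * c ^ (-(2 * β + 1)))
  refine h.unique (hs_congr hb (fun m => ?_) ?_)
  · unfold Tk bc
    have k1 := kap_spec (β + m)
    rw [kap_add] at k1
    have hm : (0 : ℝ) ≤ m := m.cast_nonneg
    have gp := Real.Gamma_pos_of_pos (show 0 < (m : ℝ) + β + 1 by linarith)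
    push_cast
    rw [show 2 * β + 1 + 0 + 2 * (m : ℝ) = 2 * (β + m) + 1 by ring, ← k1, show -(2 * (β + (m : ℝ)) + 1) = -(2 * β + 1) - ((2 * m : ℕ) : ℝ) by push_cast; ring,
      Real.rpow_sub hc, Real.rpow_natCast, pow_mul, show β + (m : ℝ) + 1 / 2 = β + 1 / 2 + m by ring, show β + (m : ℝ) + 1 = m + β + 1 by ring,
      show -(s ^ 2 / c ^ 2) = (-(s ^ 2 / 4)) * 4 * (c ^ 2)⁻¹ by field_simp, mul_pow, mul_pow, inv_pow]
    generalize Real.Gamma (m + β + 1) = G at *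
    generalize Real.Gamma (β + 1 / 2 + m) = G2 at *
    field_simp
  · rw [one_add_rpow c s _ hc hcs, Real.rpow_neg hc.le, show 2 * (β + 1 / 2) = 2 * β + 1 by ring]
    have : 0 < c ^ (2 * β + 1) := by positivity
    field_simp

lemma Tk1 (β : ℝ) (hβ : -1 / 2 ≤ β) {c : ℝ} (s : ℝ) (hc : 0 < c) (m : ℕ) :
    bc β m * (-(s ^ 2 / 4)) ^ m * Real.Gamma (2 * β + 2 + 2 * m) * c ^ (-(2 * m : ℝ))
      = 2 * kap β * (Real.Gamma (β + 3 / 2 + m) / m.factorial * (-(s ^ 2 / c ^ 2)) ^ m) := by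
  unfold bc
  have k1 := kap_spec (β + 1 / 2 + m)
  rw [kap_add, kap_half] at k1
  have hm : (0 : ℝ) ≤ m := m.cast_nonneg
  have gp := Real.Gamma_pos_of_pos (show 0 < (m : ℝ) + β + 1 by linarith)
  rw [show 2 * β + 2 + 2 * (m : ℝ) = 2 * (β + 1 / 2 + m) + 1 by ring, ← k1, show -(2 * (m : ℝ)) = -((2 * m : ℕ) : ℝ) by push_cast; ring,
      Real.rpow_neg hc.le, Real.rpow_natCast, pow_mul, show β + 1 / 2 + (m : ℝ) + 1 / 2 = m + β + 1 by ring, show β + 1 / 2 + (m : ℝ) + 1 = β + 3 / 2 + m by ring,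
      show -(s ^ 2 / c ^ 2) = (-(s ^ 2 / 4)) * 4 * (c ^ 2)⁻¹ by field_simp, mul_pow, mul_pow, inv_pow]
  generalize Real.Gamma (m + β + 1) = G at *
  generalize Real.Gamma (β + 3 / 2 + m) = G2 at *
  field_simp

lemma Lk_one (β : ℝ) (hβ : -1 / 2 ≤ β) {c s : ℝ} (hs : 0 ≤ s) (hsc : s < c) (hcs : c ^ 2 + s ^ 2 = 1) :
    Lk β c s 1 = kap β * (2 * Real.Gamma (β + 3 / 2) * c) := by
  have hc : 0 < c := by linarith
  have h := Tk_hasSum β hβ hs hsc 1 (by push_cast; linarith)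
  have hb := (binom_series (β + 3 / 2) (by linarith) (s ^ 2 / c ^ 2) (by positivity)
    (by rw [div_lt_one (by positivity)]; nlinarith)).mul_left (2 * kap β * c ^ (-(2 * β + 2)))
  refine h.unique (hs_congr hb (fun m => ?_) ?_)
  · have := Tk1 β hβ s hc m
    unfold Tk
    push_cast
    rw [show 2 * β + 1 + 1 + 2 * (m : ℝ) = 2 * β + 2 + 2 * m by ring, show -(2 * β + 2 + 2 * (m : ℝ)) = -(2 * β + 2) + -(2 * m) by ring,
      Real.rpow_add hc]
    linear_combination c ^ (-(2 * β + 2)) * this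
  · rw [one_add_rpow c s _ hc hcs, Real.rpow_neg hc.le, show 2 * (β + 3 / 2) = 2 * β + 2 + 1 by ring, Real.rpow_add_one hc.ne']
    have : 0 < c ^ (2 * β + 2) := by positivity
    field_simp

lemma Lk_two (β : ℝ) (hβ : -1 / 2 ≤ β) {c s : ℝ} (hs : 0 ≤ s) (hsc : s < c) (hcs : c ^ 2 + s ^ 2 = 1) :
    Lk β c s 2 = kap β * (4 * Real.Gamma (β + 5 / 2) * c ^ 2 - 2 * Real.Gamma (β + 3 / 2)) := by
  have hc : 0 < c := by linarith
  have h := Tk_hasSum β hβ hs hsc 2 (by push_cast; linarith)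
  have hz : s ^ 2 / c ^ 2 < 1 := by rw [div_lt_one (by positivity)]; nlinarith
  have hb1 := (binom_series (β + 3 / 2) (by linarith) (s ^ 2 / c ^ 2) (by positivity) hz).mul_left (2 * kap β * c ^ (-(2 * β + 3)))
  have hb2 := (binom_series (β + 5 / 2) (by linarith) (s ^ 2 / c ^ 2) (by positivity) hz).mul_left (4 * kap β * c ^ (-(2 * β + 3)))
  refine h.unique (hs_congr (hb2.sub hb1) (fun m => ?_) ?_)
  · have := Tk1 β hβ s hc m
    have hm : (0 : ℝ) ≤ m := m.cast_nonneg
    unfold Tk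
    push_cast
    rw [show 2 * β + 1 + 2 + 2 * (m : ℝ) = (2 * β + 2 + 2 * m) + 1 by ring, Real.Gamma_add_one (by linarith), show -(2 * β + 2 + 2 * (m : ℝ) + 1) = -(2 * β + 3) + -(2 * m) by ring,
      Real.rpow_add hc, show β + 5 / 2 + (m : ℝ) = (β + 3 / 2 + m) + 1 by ring, Real.Gamma_add_one (by linarith)]
    linear_combination c ^ (-(2 * β + 3)) * (2 * β + 2 + 2 * m) * this
  · rw [one_add_rpow c s _ hc hcs, one_add_rpow c s _ hc hcs, Real.rpow_neg hc.le, show 2 * (β + 5 / 2) = 2 * β + 3 + 1 + 1 by ring, show 2 * (β + 3 / 2) = 2 * β + 3 by ring, Real.rpow_add_one hc.ne', Real.rpow_add_one hc.ne']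
    have : 0 < c ^ (2 * β + 3) := by positivity
    generalize Real.Gamma (β + 5 / 2) = G at *
    generalize Real.Gamma (β + 3 / 2) = G2 at *
    field_simp

lemma Lk_eq (β : ℝ) (hβ : -1 / 2 ≤ β) {c s : ℝ} (hs : 0 ≤ s) (hsc : s < c) (hcs : c ^ 2 + s ^ 2 = 1) (k : ℕ)
    (hk : -1 / 2 < β ∨ 1 ≤ k) : Lk β c s k = kap β * k.factorial * gegenbauerCt k (β + 1 / 2) c := by
  have main : ∀ k : ℕ, Lk β c s (k + 1) = kap β * (k + 1).factorial * gegenbauerCt (k + 1) (β + 1 / 2) c ∧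
      Lk β c s (k + 2) = kap β * (k + 2).factorial * gegenbauerCt (k + 2) (β + 1 / 2) c := by
    intro k
    induction k with
    | zero =>
      constructor
      · have h := gC_one (β + 1 / 2) c
        rw [gC_ofReal] at h
        have h' : gegenbauerCt 1 (β + 1 / 2) c = Real.Gamma (β + 1 / 2 + 1) * (2 * c) := by exact_mod_cast h
        rw [zero_add, Lk_one β hβ hs hsc hcs, h', show β + 1 / 2 + 1 = β + 3 / 2 by ring]
        rw [Nat.factorial_one, Nat.cast_one]; ring
      · have h := gC_two (β + 1 / 2) c
        rw [gC_ofReal] at h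
        have h' : gegenbauerCt 2 (β + 1 / 2) c = Real.Gamma (β + 1 / 2 + 2) * (2 * c) ^ 2 / 2 - Real.Gamma (β + 1 / 2 + 1) := by exact_mod_cast h
        rw [zero_add, Lk_two β hβ hs hsc hcs, h', show β + 1 / 2 + 1 = β + 3 / 2 by ring, show β + 1 / 2 + 2 = β + 5 / 2 by ring]
        simp [Nat.factorial]; ring
    | succ k ih =>
      refine ⟨ih.2, ?_⟩
      have hkn : (0 : ℝ) ≤ k := k.cast_nonneg
      have r := Lk_rec β hβ hs hsc hcs (k + 1) (by push_cast; linarith)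
      have g := gC_rec (k + 1) (β + 1 / 2) (Or.inr ⟨by linarith, by omega⟩) c
      rw [gC_ofReal, gC_ofReal, gC_ofReal] at g
      have g' : (((k + 1 : ℕ) : ℝ) + 2) * gegenbauerCt (k + 1 + 2) (β + 1 / 2) c
        = 2 * c * ((β + 1 / 2) + ((k + 1 : ℕ) : ℝ) + 1) * gegenbauerCt (k + 1 + 1) (β + 1 / 2) c - (2 * (β + 1 / 2) + ((k + 1 : ℕ) : ℝ)) * gegenbauerCt (k + 1) (β + 1 / 2) c := by
        exact_mod_cast g
      rw [r, show k + 1 + 1 = k + 2 by ring, ih.1, ih.2]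
      rw [show k + 1 + 1 = k + 2 by ring] at g'
      rw [show (k + 1 + 2).factorial = (k + 3) * ((k + 2) * (k + 1).factorial) by rw [Nat.factorial_succ, Nat.factorial_succ],
        show (k + 2).factorial = (k + 2) * (k + 1).factorial from Nat.factorial_succ _]
      push_cast at *
      linear_combination (-(kap β * ((k + 2) * (k + 1).factorial))) * g'
  cases k with
  | zero =>
    rcases hk with hk | hk
    · rw [Lk_zero β hk hs hsc hcs]
      have h := gC_zero (β + 1 / 2) c
      rw [gC_ofReal] at h
      have h' : gegenbauerCt 0 (β + 1 / 2) c = Real.Gamma (β + 1 / 2) := by exact_mod_cast h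
      rw [h']; simp
    · omega
  | succ k => exact (main k).1


/-! ### The expansion for small `φ` -/

lemma hasSum_expE_real (α : ℝ) (hα : -1 / 2 < α) (ϑ r : ℝ) :
    HasSum (fun j : ℕ => kap α * gegenbauerCt j (α + 1 / 2) (Real.cos ϑ) / Real.Gamma (j + 2 * α + 1) * r ^ j)
      (Real.exp (r * Real.cos ϑ) * Er α (-(r * Real.sin ϑ / 2) ^ 2)) := by
  have h := hasSum_expE α hα (Real.cos ϑ : ℂ) (r : ℂ)
  have e : Complex.exp ((r : ℂ) * (Real.cos ϑ : ℂ)) * Ec α (-((r : ℂ) ^ 2 * (1 - (Real.cos ϑ : ℂ) ^ 2)) / 4)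
      = ((Real.exp (r * Real.cos ϑ) * Er α (-(r * Real.sin ϑ / 2) ^ 2) : ℝ) : ℂ) := by
    rw [show -((r : ℂ) ^ 2 * (1 - (Real.cos ϑ : ℂ) ^ 2)) / 4 = ((-(r * Real.sin ϑ / 2) ^ 2 : ℝ) : ℂ) by
      have : (Real.sin ϑ : ℂ) ^ 2 = 1 - (Real.cos ϑ : ℂ) ^ 2 := by
        have := Real.sin_sq ϑ
        exact_mod_cast this
      push_cast
      rw [div_pow, mul_pow]
      push_cast at this
      rw [this]; ring, Ec_ofReal]
    push_cast
    rfl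
  rw [e] at h
  have h2 : HasSum (fun j : ℕ => ((kap α * gegenbauerCt j (α + 1 / 2) (Real.cos ϑ) / Real.Gamma (j + 2 * α + 1) * r ^ j : ℝ) : ℂ))
      ((Real.exp (r * Real.cos ϑ) * Er α (-(r * Real.sin ϑ / 2) ^ 2) : ℝ) : ℂ) := by
    refine hs_congr h (fun j => ?_) rfl
    rw [gC_ofReal]
    push_cast
    rfl
  exact_mod_cast h2

lemma Ct_abs_le (l : ℝ) (hl : 0 < l) (n : ℕ) (ϑ : ℝ) : |gegenbauerCt n l (Real.cos ϑ)| ≤ gegenbauerCt n l 1 := by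
  have h := gC_bound l hl (ϑ : ℂ) n
  rw [Complex.ofReal_im, abs_zero, mul_zero, Real.exp_zero, mul_one, ← Complex.ofReal_cos, gC_ofReal, Complex.norm_real] at h
  have h1 := gC_at_one l hl n
  rw [show (1 : ℂ) = ((1 : ℝ) : ℂ) by simp, gC_ofReal] at h1
  have h2 : gegenbauerCt n l 1 = Real.Gamma l * Real.Gamma (2 * l + n) / (Real.Gamma (2 * l) * n.factorial) := by exact_mod_cast h1
  rw [h2]; exact h

noncomputable def serT (α β : ℝ) (n : ℕ) (t ϑ φ : ℝ) (j : ℕ) : ℝ :=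
  (4 : ℝ) ^ (2 * (α + β)) / Real.pi * (-1) ^ j * ((j + n).factorial / Real.Gamma (j + 2 * α + 1))
    * gegenbauerCt j (α + 1 / 2) (Real.cos ϑ) * gegenbauerCt (j + n) (β + 1 / 2) (Real.cos φ) * t ^ j

noncomputable def Mint (α β t ϑ φ : ℝ) : ℝ :=
  ∫ x in Ioi (0 : ℝ), x ^ (α + β) * Real.exp (-(x * Real.cos φ)) * Er β (-(x * Real.sin φ / 2) ^ 2)
    * (Real.exp (-(t * x) * Real.cos ϑ) * Er α (-(-(t * x) * Real.sin ϑ / 2) ^ 2))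

lemma series_small (α β : ℝ) (n : ℕ) (hn : α = β + n) (hα : 0 ≤ α) (hβ : -1 / 2 ≤ β) (hbn : -1 / 2 < β ∨ 1 ≤ n)
    (t ϑ φ : ℝ) (hs : 0 ≤ Real.sin φ) (hsm : |t| + Real.sin φ < Real.cos φ) :
    HasSum (serT α β n t ϑ φ) (4 ^ (α + β) * Mint α β t ϑ φ) := by
  set c := Real.cos φ with hc
  set s := Real.sin φ with hs'
  have hcs : c ^ 2 + s ^ 2 = 1 := by rw [hc, hs']; exact Real.cos_sq_add_sin_sq φ
  have hsc : s < c := by have := abs_nonneg t; linarith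
  have hEβ := continuous_Er hβ
  have hEα := continuous_Er (a := α) (by linarith)
  have hcr : ContinuousOn (fun x : ℝ => x ^ (α + β)) (Ioi 0) := by
    intro x hx
    exact (Real.continuousAt_rpow_const x _ (Or.inl (ne_of_gt hx))).continuousWithinAt
  have hΓ : ∀ j : ℕ, 0 < Real.Gamma (j + 2 * α + 1) := fun j => Real.Gamma_pos_of_pos (by have := j.cast_nonneg (α := ℝ); linarith)
  have hkp := kap_pos α
  have hFv : ∀ j : ℕ, ∫ x in Ioi (0 : ℝ), x ^ (α + β) * Real.exp (-(x * c)) * Er β (-(x * s / 2) ^ 2)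
      * (kap α * gegenbauerCt j (α + 1 / 2) (Real.cos ϑ) / Real.Gamma (j + 2 * α + 1) * (-(t * x)) ^ j)
      = kap α * gegenbauerCt j (α + 1 / 2) (Real.cos ϑ) / Real.Gamma (j + 2 * α + 1) * (-t) ^ j * (kap β * (j + n).factorial * gegenbauerCt (j + n) (β + 1 / 2) c) := by
    intro j
    rw [← Lk_eq β hβ hs hsc hcs (j + n) (by rcases hbn with h | h; exacts [Or.inl h, Or.inr (by omega)]), Lk, ← integral_const_mul]
    refine setIntegral_congr_fun measurableSet_Ioi fun x hx => ?_
    have hx' : 0 < x := hx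
    have e1 : x ^ (2 * β + ((j + n : ℕ) : ℝ)) = x ^ (α + β) * x ^ j := by
      rw [← Real.rpow_natCast, ← Real.rpow_add hx', hn]; push_cast; congr 1; ring
    simp only [e1]
    rw [show -(t * x) = (-t) * x by ring, mul_pow, mul_comm c x]
    ring
  have hl : 0 < α + 1 / 2 := by linarith
  have hCt0 : ∀ j, 0 ≤ gegenbauerCt j (α + 1 / 2) 1 := fun j => (abs_nonneg _).trans (Ct_abs_le _ hl j 0)
  have hbs : ∀ x : ℝ, HasSum (fun j : ℕ => kap α * gegenbauerCt j (α + 1 / 2) 1 / Real.Gamma (j + 2 * α + 1) * (|t| * x) ^ j)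
      (Real.exp (|t| * x) * Er α 0) := by
    intro x
    have := hasSum_expE_real α (by linarith) 0 (|t| * x)
    simpa using this
  have key := hasSum_integral_of_dominated_convergence (μ := volume.restrict (Ioi (0 : ℝ)))
    (F := fun (j : ℕ) x => x ^ (α + β) * Real.exp (-(x * c)) * Er β (-(x * s / 2) ^ 2)
      * (kap α * gegenbauerCt j (α + 1 / 2) (Real.cos ϑ) / Real.Gamma (j + 2 * α + 1) * (-(t * x)) ^ j))
    (f := fun x => x ^ (α + β) * Real.exp (-(x * c)) * Er β (-(x * s / 2) ^ 2)
      * (Real.exp (-(t * x) * Real.cos ϑ) * Er α (-(-(t * x) * Real.sin ϑ / 2) ^ 2)))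
    (fun j x => x ^ (α + β) * Real.exp (-(x * c)) * |Er β (-(x * s / 2) ^ 2)|
      * (kap α * gegenbauerCt j (α + 1 / 2) 1 / Real.Gamma (j + 2 * α + 1) * (|t| * x) ^ j)) ?_ ?_ ?_ ?_ ?_
  · refine hs_congr (key.mul_left (4 ^ (α + β))) (fun j => ?_) rfl
    simp only [hFv]
    unfold serT
    have e4 : (4 : ℝ) ^ (2 * (α + β)) / Real.pi = 4 ^ (α + β) * (kap α * kap β) := by
      unfold kap
      have hp : √π * √π = π := Real.mul_self_sqrt Real.pi_pos.le
      have e5 : (2 : ℝ) ^ (2 * α) * 2 ^ (2 * β) = 4 ^ (α + β) := by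
        rw [← Real.rpow_add (by norm_num), show (4 : ℝ) = 2 ^ (2 : ℝ) by norm_num, ← Real.rpow_mul (by norm_num)]
        congr 1; ring
      rw [div_mul_div_comm, hp, e5, two_mul, Real.rpow_add (by norm_num)]
      ring
    rw [e4, neg_pow t]
    ring
  · intro j
    exact ContinuousOn.aestronglyMeasurable (ContinuousOn.mul (ContinuousOn.mul (ContinuousOn.mul hcr (by fun_prop)) (by fun_prop)) (by fun_prop)) measurableSet_Ioi
  · intro j
    refine (ae_restrict_iff' measurableSet_Ioi).mpr (Eventually.of_forall fun x hx => ?_)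
    have hx' : 0 < x := hx
    have h1 := Ct_abs_le _ hl j ϑ
    have h2 := hΓ j
    simp only [norm_mul, norm_div, norm_pow, norm_neg, Real.norm_eq_abs, abs_of_pos (Real.exp_pos _), abs_of_pos (Real.rpow_pos_of_pos hx' _), abs_of_pos hkp, abs_of_pos hx', abs_of_pos h2]
    gcongr
  · exact Eventually.of_forall fun x => (hbs x).summable.mul_left _
  · obtain ⟨C, hC, hCb⟩ := Ec_bound_exp β hβ (e := 1) one_pos
    have hint := (exp_rpow_integrable (c := c - |t| - s) (r := α + β) (by linarith) (by linarith)).const_mul (C * Er α 0)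
    have e1 : ∀ x, ∑' j : ℕ, x ^ (α + β) * Real.exp (-(x * c)) * |Er β (-(x * s / 2) ^ 2)|
      * (kap α * gegenbauerCt j (α + 1 / 2) 1 / Real.Gamma (j + 2 * α + 1) * (|t| * x) ^ j) = x ^ (α + β) * Real.exp (-(x * c)) * |Er β (-(x * s / 2) ^ 2)| * (Real.exp (|t| * x) * Er α 0) := by
      intro x; rw [tsum_mul_left, (hbs x).tsum_eq]
    simp only [e1]
    refine Integrable.mono' hint (ContinuousOn.aestronglyMeasurable (ContinuousOn.mul (ContinuousOn.mul (ContinuousOn.mul hcr (by fun_prop)) (by fun_prop)) (by fun_prop)) measurableSet_Ioi) ?_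
    refine (ae_restrict_iff' measurableSet_Ioi).mpr (Eventually.of_forall fun x hx => ?_)
    have hx' : 0 < x := hx
    have p0 : 0 ≤ Er α 0 := Er_nonneg (by linarith) le_rfl
    rw [Real.norm_of_nonneg (by positivity)]
    have := hCb ((x * s : ℝ) : ℂ)
    rw [show -((x * s : ℝ) : ℂ) ^ 2 / 4 = ((-(x * s / 2) ^ 2 : ℝ) : ℂ) by push_cast; ring, Ec_ofReal,
      Complex.norm_real, Complex.norm_real, Complex.ofReal_im, abs_zero, zero_add, one_mul,
      Real.norm_of_nonneg (by positivity : 0 ≤ x * s), Real.norm_eq_abs] at this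
    calc _ ≤ x ^ (α + β) * Real.exp (-(x * c)) * (C * Real.exp (x * s)) * (Real.exp (|t| * x) * Er α 0) := by gcongr
      _ = C * Er α 0 * ((Real.exp (-(x * c)) * Real.exp (x * s) * Real.exp (|t| * x)) * x ^ (α + β)) := by ring
      _ = _ := by rw [← Real.exp_add, ← Real.exp_add]; ring_nf
  · refine Eventually.of_forall fun x => ?_
    exact (hasSum_expE_real α (by linarith) ϑ (-(t * x))).mul_left _

/-- the integral in the statement, after rewriting the Bessel functions -/
noncomputable def gI (α β t A B : ℝ) : ℝ :=
  ∫ x in Ioi (0 : ℝ), Er α ((t * x / (1 - t) / 2) ^ 2) * (1 / 2 * hB (-β) ((x / (1 - t)) ^ 2 / 4))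
    * Er α (-(A * x / 2) ^ 2) * Er β (-(B * x / 2) ^ 2) * x ^ (2 * α + 2 * β + 1)

lemma gI_small (α β : ℝ) (hα : 0 ≤ α) (hβ : -1 / 2 ≤ β) (t ϑ φ : ℝ) (ht : t ∈ Ioo (-1 : ℝ) 1)
    (hD : 0 < Real.cos ϑ + Real.cos φ) (hs : 0 ≤ Real.sin φ)
    (hb1 : Real.sin φ / (Real.cos ϑ + Real.cos φ) ≤ 1 / (1 - t) / 4)
    (hb2 : (Real.sin φ / (Real.cos ϑ + Real.cos φ)) ^ 2 + 2 * (1 / (1 - t)) * (Real.sin φ / (Real.cos ϑ + Real.cos φ)) < (1 / (1 - t)) ^ 2 - (t / (1 - t)) ^ 2) :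
    (1 - t) ^ (-(α + β + 1)) * ((Real.cos ϑ + Real.cos φ) / 2) ^ (-(α + β + 1))
      * gI α β t (Real.sin ϑ / (Real.cos ϑ + Real.cos φ)) (Real.sin φ / (Real.cos ϑ + Real.cos φ))
      = 4 ^ (α + β) * Mint α β t ϑ φ := by
  have ht1 : 0 < 1 - t := by linarith [ht.2]
  set D := Real.cos ϑ + Real.cos φ with hDdef
  set a := Real.sin ϑ / D with ha
  set b := Real.sin φ / D with hb
  set p := t / (1 - t) with hp
  set q := 1 / (1 - t) with hq
  have hq0 : 0 < q := by positivity
  have hb0 : 0 ≤ b := by positivity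
  have h := red_int α β hα hβ (p := p) (q := q) (a := a) (b := b) hq0 hb0 hb1 hb2
  have e1 : gI α β t a b = 4 ^ (α + β) * ∫ w in Ioi (0 : ℝ), Er α (p ^ 2 * w) * hB (-β) (q ^ 2 * w) * Er α (-(a ^ 2) * w) * Er β (-(b ^ 2 * w)) * w ^ (α + β) := by
    rw [← sub_sq_quarter, ← integral_const_mul]
    refine setIntegral_congr_fun measurableSet_Ioi fun x hx => ?_
    have hx' : 0 < x := hx
    have e2 : x ^ (2 * α + 2 * β + 1) = x * (4 ^ (α + β) * (x ^ 2 / 4) ^ (α + β)) := by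
      rw [← Real.mul_rpow (by norm_num) (by positivity), show 4 * (x ^ 2 / 4) = x ^ 2 by ring, ← Real.rpow_natCast, ← Real.rpow_mul hx'.le,
        mul_comm x, ← Real.rpow_add_one hx'.ne']
      congr 1; push_cast; ring
    simp only [e2]
    rw [show (t * x / (1 - t) / 2) ^ 2 = p ^ 2 * (x ^ 2 / 4) by rw [hp]; ring, show (x / (1 - t)) ^ 2 / 4 = q ^ 2 * (x ^ 2 / 4) by rw [hq]; ring,
      show -(a * x / 2) ^ 2 = -(a ^ 2) * (x ^ 2 / 4) by ring, show -(b * x / 2) ^ 2 = -(b ^ 2 * (x ^ 2 / 4)) by ring]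
    ring
  set E := (1 - t) * D / 2 with hE
  have hE0 : 0 < E := by positivity
  have e3 := integral_comp_mul_left_Ioi (fun v => v ^ (α + β) * Real.exp (-((q ^ 2 - b ^ 2 - p ^ 2 + a ^ 2) * v)) * Er α (-(p ^ 2 * a ^ 2 * v ^ 2)) * Er β (-(q ^ 2 * b ^ 2 * v ^ 2))) 0 hE0
  rw [mul_zero, smul_eq_mul] at e3
  have e4 : ∫ x in Ioi (0 : ℝ), (E * x) ^ (α + β) * Real.exp (-((q ^ 2 - b ^ 2 - p ^ 2 + a ^ 2) * (E * x))) * Er α (-(p ^ 2 * a ^ 2 * (E * x) ^ 2)) * Er β (-(q ^ 2 * b ^ 2 * (E * x) ^ 2))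
      = E ^ (α + β) * Mint α β t ϑ φ := by
    rw [Mint, ← integral_const_mul]
    refine setIntegral_congr_fun measurableSet_Ioi fun x hx => ?_
    have hx' : 0 < x := hx
    have f1 : p * a * E = t * Real.sin ϑ / 2 := by rw [hp, ha, hE]; field_simp
    have f2 : q * b * E = Real.sin φ / 2 := by rw [hq, hb, hE]; field_simp
    have f3 : (q ^ 2 - b ^ 2 - p ^ 2 + a ^ 2) * E = Real.cos φ + t * Real.cos ϑ := by
      have s1 := Real.sin_sq ϑ
      have s2 := Real.sin_sq φ
      have g1 : (a ^ 2 - b ^ 2) * D = Real.cos φ - Real.cos ϑ := by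
        rw [ha, hb, div_pow, div_pow, s1, s2]
        field_simp
        rw [hDdef]; ring
      have g2 : (q ^ 2 - p ^ 2) * (1 - t) = 1 + t := by rw [hq, hp]; field_simp; ring
      rw [hE]
      linear_combination (1 - t) / 2 * g1 + D / 2 * g2 + (1 + t) / 2 * hDdef
    rw [Real.mul_rpow hE0.le hx'.le, show (q ^ 2 - b ^ 2 - p ^ 2 + a ^ 2) * (E * x) = (Real.cos φ + t * Real.cos ϑ) * x by rw [← f3]; ring,
      show p ^ 2 * a ^ 2 * (E * x) ^ 2 = (p * a * E * x) ^ 2 by ring, show q ^ 2 * b ^ 2 * (E * x) ^ 2 = (q * b * E * x) ^ 2 by ring, f1, f2,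
      show -((Real.cos φ + t * Real.cos ϑ) * x) = -(x * Real.cos φ) + -(t * x) * Real.cos ϑ by ring, Real.exp_add,
      show -(-(t * x) * Real.sin ϑ / 2) ^ 2 = -(t * Real.sin ϑ / 2 * x) ^ 2 by ring, show x * Real.sin φ / 2 = Real.sin φ / 2 * x by ring]
    ring
  rw [e4] at e3
  rw [e1, h]
  have e5 : (1 - t) ^ (-(α + β + 1)) * (D / 2) ^ (-(α + β + 1)) = (E ^ (α + β) * E)⁻¹ := by
    rw [← Real.mul_rpow ht1.le (by positivity), Real.rpow_neg (by positivity), ← Real.rpow_add_one hE0.ne', hE]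
    ring_nf
  rw [e5, mul_inv]
  have e6 : (E ^ (α + β))⁻¹ * (E ^ (α + β) * Mint α β t ϑ φ) = Mint α β t ϑ φ := by
    rw [← mul_assoc, inv_mul_cancel₀ (by positivity), one_mul]
  rw [← e6, e3]
  ring


/-! ### Part 13: exponential bound for the K kernel, holomorphic parameter integrals -/

lemma rpow_le_exp (r : ℝ) (hr : 0 ≤ r) : ∃ C, 0 < C ∧ ∀ u : ℝ, 0 < u → u ^ r ≤ C * Real.exp u := by
  rcases hr.eq_or_lt with h | h
  · refine ⟨1, one_pos, fun u hu => ?_⟩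
    rw [← h, Real.rpow_zero, one_mul]
    exact Real.one_le_exp hu.le
  · refine ⟨r ^ r, by positivity, fun u hu => ?_⟩
    have h1 : u / r ≤ Real.exp (u / r) := by linarith [Real.add_one_le_exp (u / r)]
    have h2 : (u / r) ^ r ≤ (Real.exp (u / r)) ^ r := Real.rpow_le_rpow (by positivity) h1 hr
    rw [← Real.exp_mul, div_mul_cancel₀ _ h.ne', Real.div_rpow hu.le hr] at h2
    rw [div_le_iff₀ (by positivity)] at h2
    linarith

lemma hB_exp_bound (b : ℝ) (hb : -1 / 2 ≤ b) {δ : ℝ} (h0 : 0 < δ) (h1 : δ < 1) :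
    ∃ C, 0 < C ∧ ∀ y : ℝ, 0 < y →
      hB (-b) (y ^ 2 / 4) ≤ C * (Real.exp (-((1 - δ) * y)) * y ^ (-(2 * b + 1))) := by
  obtain ⟨C, hC, h⟩ := rpow_le_exp (b + 1 / 2) (by linarith)
  set G := ∫ s in Ioi (0 : ℝ), Real.exp (-(δ * s)) * s ^ (-1 / 2 : ℝ) with hG
  have hG0 : 0 ≤ G := setIntegral_nonneg measurableSet_Ioi fun s hs => by
    have : 0 < s := hs
    positivity
  set c := (δ / 4) ^ (-(b + 1 / 2)) with hc
  have hc0 : 0 < c := by positivity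
  refine ⟨C * c * (G + 1), by positivity, fun y hy => ?_⟩
  have key : hB (-b) (y ^ 2 / 4) ≤ C * c * (Real.exp (-((1 - δ) * y)) * y ^ (-(2 * b + 1))) * G := by
    rw [hG, ← integral_const_mul]
    unfold hB
    refine setIntegral_mono_on (hk_integrable _ (by positivity))
      ((exp_rpow_integrable h0 (by norm_num)).const_mul _) measurableSet_Ioi fun s hs => ?_
    have hs' : 0 < s := hs
    unfold hk
    have hu : 0 < δ / 4 * y ^ 2 / s := by positivity
    have e1 := h _ hu
    have e2 : (δ / 4 * y ^ 2 / s) ^ (b + 1 / 2) = c⁻¹ * y ^ (2 * b + 1) * s ^ (-(b + 1 / 2)) := by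
      rw [div_eq_mul_inv, Real.mul_rpow (by positivity) (by positivity), Real.mul_rpow (by positivity) (by positivity), Real.inv_rpow hs'.le,
        ← Real.rpow_neg hs'.le, ← Real.rpow_natCast, ← Real.rpow_mul hy.le, hc, Real.rpow_neg (show (0 : ℝ) ≤ δ / 4 by positivity), inv_inv]
      congr 3; push_cast; ring
    have e3 : Real.exp (-(δ / 4 * y ^ 2 / s)) ≤ C * c * y ^ (-(2 * b + 1)) * s ^ (b + 1 / 2) := by
      rw [e2] at e1
      rw [Real.exp_neg, inv_le_comm₀ (Real.exp_pos _) (by positivity)]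
      rw [Real.rpow_neg hs'.le] at e1
      rw [Real.rpow_neg hy.le]
      refine le_of_mul_le_mul_left ?_ hC
      refine le_trans (le_of_eq ?_) e1
      generalize y ^ (2 * b + 1) = Y
      generalize s ^ (b + 1 / 2) = S
      rw [mul_inv, mul_inv, mul_inv, inv_inv]
      field_simp
    have e4 : -s - y ^ 2 / 4 / s ≤ -((1 - δ) * y) + -(δ * s) + -(δ / 4 * y ^ 2 / s) := by
      have q : 0 ≤ s + y ^ 2 / 4 / s - y := by
        have : s + y ^ 2 / 4 / s - y = (s - y / 2) ^ 2 / s := by field_simp; ring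
        rw [this]; positivity
      have : δ / 4 * y ^ 2 / s = δ * (y ^ 2 / 4 / s) := by ring
      rw [this]
      nlinarith [mul_nonneg (sub_pos.mpr h1).le q]
    have e5 := Real.exp_le_exp.mpr e4
    rw [Real.exp_add, Real.exp_add] at e5
    have e6 : s ^ (b + 1 / 2) * s ^ (-b - 1) = s ^ (-1 / 2 : ℝ) := by
      rw [← Real.rpow_add hs']; congr 1; ring
    calc Real.exp (-s - y ^ 2 / 4 / s) * s ^ (-b - 1)
        ≤ (Real.exp (-((1 - δ) * y)) * Real.exp (-(δ * s)) * (C * c * y ^ (-(2 * b + 1)) * s ^ (b + 1 / 2))) * s ^ (-b - 1) := by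
          refine mul_le_mul_of_nonneg_right (e5.trans ?_) (by positivity)
          exact mul_le_mul_of_nonneg_left e3 (by positivity)
      _ = _ := by rw [← e6]; ring
  refine key.trans ?_
  have : 0 ≤ C * c * (Real.exp (-((1 - δ) * y)) * y ^ (-(2 * b + 1))) := by positivity
  nlinarith

lemma holo_integral {ι : Type*} [MeasurableSpace ι] {m : Measure ι} {F : ℂ → ι → ℂ} {z₀ : ℂ} {r : ℝ} (hr : 0 < r) {bound : ι → ℝ}
    (hb : Integrable bound m) (hm : ∀ z ∈ ball z₀ r, AEStronglyMeasurable (F z) m)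
    (hd : ∀ᵐ x ∂m, DifferentiableOn ℂ (fun z => F z x) (ball z₀ r))
    (hle : ∀ᵐ x ∂m, ∀ z ∈ ball z₀ r, ‖F z x‖ ≤ bound x) :
    DifferentiableOn ℂ (fun z => ∫ x, F z x ∂m) (ball z₀ r) := by
  intro w hw
  refine DifferentiableAt.differentiableWithinAt ?_
  obtain ⟨e, he, hsub⟩ := Metric.isOpen_iff.mp isOpen_ball w hw
  have hdw : ∀ᵐ x ∂m, HasDerivAt (fun z => F z x) (deriv (fun z => F z x) w) w := by
    filter_upwards [hd] with x hx
    exact ((hx w hw).differentiableAt (isOpen_ball.mem_nhds hw)).hasDerivAt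
  have key := hasDerivAt_integral_of_dominated_loc_of_deriv_le (μ := m) (F := F)
    (F' := fun z x => deriv (fun z => F z x) z) (x₀ := w) (s := ball w (e / 2))
    (bound := fun x => bound x / (e / 4)) (ball_mem_nhds _ (by linarith))
    (by filter_upwards [isOpen_ball.mem_nhds hw] with z hz using hm z hz)
    (hb.mono' (hm w hw) (by filter_upwards [hle] with x hx using hx w hw)) ?_ ?_ (hb.div_const _) ?_
  · exact key.2.differentiableAt
  · -- measurability of the derivative
    have ht : Tendsto (fun k : ℕ => (((e / 2) / ((k : ℝ) + 1) : ℝ) : ℂ)) atTop (nhdsWithin 0 {0}ᶜ) := by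
      refine tendsto_nhdsWithin_iff.mpr ⟨?_, Eventually.of_forall fun k => ?_⟩
      · have h1 : Tendsto (fun k : ℕ => (e / 2) / ((k : ℝ) + 1)) atTop (nhds 0) :=
          tendsto_const_nhds.div_atTop (tendsto_natCast_atTop_atTop.atTop_add tendsto_const_nhds)
        have h2 := (Complex.continuous_ofReal.tendsto 0).comp h1
        rw [Complex.ofReal_zero] at h2
        exact h2
      · have : (e / 2) / ((k : ℝ) + 1) ≠ 0 := by positivity
        simpa only [mem_compl_iff, mem_singleton_iff, Complex.ofReal_eq_zero] using this
    refine aestronglyMeasurable_of_tendsto_ae atTop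
      (f := fun k : ℕ => fun x => ((((e / 2) / ((k : ℝ) + 1) : ℝ) : ℂ))⁻¹ • (F (w + (((e / 2) / ((k : ℝ) + 1) : ℝ) : ℂ)) x - F w x)) ?_ ?_
    · intro k
      have hmem : w + (((e / 2) / ((k : ℝ) + 1) : ℝ) : ℂ) ∈ ball z₀ r := hsub ?_
      · exact AEStronglyMeasurable.const_smul (AEStronglyMeasurable.sub (hm _ hmem) (hm w hw)) ((((e / 2) / ((k : ℝ) + 1) : ℝ) : ℂ))⁻¹
      rw [mem_ball, dist_eq_norm, add_sub_cancel_left, Complex.norm_real, Real.norm_eq_abs, abs_of_pos (by positivity)]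
      have : (e / 2) / ((k : ℝ) + 1) ≤ e / 2 := div_le_self (by linarith) (by linarith [Nat.cast_nonneg (α := ℝ) k])
      linarith
    · filter_upwards [hdw] with x hx
      exact hx.tendsto_slope_zero.comp ht
  · filter_upwards [hd, hle] with x hx hl z hz
    have hs2 : closedBall z (e / 4) ⊆ ball z₀ r := by
      refine Subset.trans ?_ hsub
      intro y hy
      rw [mem_closedBall] at hy
      rw [mem_ball] at hz ⊢
      linarith [dist_triangle y z w]
    refine Complex.norm_deriv_le_of_forall_mem_sphere_norm_le (by linarith) ?_ fun y hy => hl y (hs2 (sphere_subset_closedBall hy))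
    exact (hx.mono hs2).diffContOnCl_ball subset_rfl
  · filter_upwards [hd] with x hx z hz
    have : z ∈ ball z₀ r := hsub (ball_subset_ball (by linarith) hz)
    exact ((hx z this).differentiableAt (isOpen_ball.mem_nhds this)).hasDerivAt


/-! ### Part 14: analyticity of the integral -/

noncomputable def Wk (α β t x : ℝ) : ℝ :=
  Er α ((t * x / (1 - t) / 2) ^ 2) * (1 / 2 * hB (-β) ((x / (1 - t)) ^ 2 / 4)) * x ^ (2 * α + 2 * β + 1)

noncomputable def gIc (α β t : ℝ) (A B : ℂ) : ℂ :=
  ∫ x in Ioi (0 : ℝ), (Wk α β t x : ℂ) * (Ec α (-(A * x) ^ 2 / 4) * Ec β (-(B * x) ^ 2 / 4))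

lemma gIc_ofReal (α β t A B : ℝ) : gIc α β t A B = (gI α β t A B : ℂ) := by
  unfold gIc gI
  rw [← integral_complex_ofReal]
  refine setIntegral_congr_fun measurableSet_Ioi fun x _ => ?_
  have h : ∀ C : ℝ, -((C : ℂ) * (x : ℂ)) ^ 2 / 4 = ((-(C * x / 2) ^ 2 : ℝ) : ℂ) := by
    intro C; push_cast; ring
  simp only [h, Ec_ofReal]
  unfold Wk
  push_cast
  ring

lemma Wk_continuousOn (α β t : ℝ) (hα : 0 ≤ α) (ht : t < 1) : ContinuousOn (Wk α β t) (Ioi 0) := by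
  have ht1 : 0 < 1 - t := by linarith
  have h1 := continuous_Er (a := α) (by linarith)
  unfold Wk
  refine ContinuousOn.mul (ContinuousOn.mul ?_ (continuousOn_const.mul ?_)) ?_
  · refine (h1.comp ?_).continuousOn
    fun_prop
  · intro x hx
    have hx' : 0 < x := hx
    have hz : 0 < (x / (1 - t)) ^ 2 / 4 := by positivity
    refine ContinuousAt.continuousWithinAt ?_
    refine ContinuousAt.comp (g := hB (-β)) (hB_hasDerivAt (-β) hz).continuousAt ?_
    fun_prop
  · exact fun x hx => (Real.continuousAt_rpow_const x _ (Or.inl (ne_of_gt hx))).continuousWithinAt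

lemma Wk_bound (α β t : ℝ) (hα : 0 ≤ α) (hβ : -1 / 2 ≤ β) (ht : t ∈ Ioo (-1 : ℝ) 1) :
    ∃ C, 0 < C ∧ ∀ x : ℝ, 0 < x →
      |Wk α β t x| ≤ C * (Real.exp (-(3 / 4 * ((1 - |t|) / (1 - t)) * x)) * x ^ (2 * α)) := by
  have ht1 : 0 < 1 - t := by linarith [ht.2]
  have htabs : |t| < 1 := abs_lt.mpr ht
  obtain ⟨C, hC, h⟩ := hB_exp_bound β hβ (δ := (1 - |t|) / 4) (by linarith) (by linarith [abs_nonneg t])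
  have hG : 0 < Real.Gamma (α + 1) := Real.Gamma_pos_of_pos (by linarith)
  set c := (1 - t)⁻¹ ^ (-(2 * β + 1)) with hc
  have hc0 : 0 < c := by positivity
  refine ⟨1 / Real.Gamma (α + 1) * (1 / 2 * C * c), by positivity, fun x hx => ?_⟩
  have h1 := Er_sq_bound α (by linarith) (t * x / (1 - t))
  have h2 := h (x / (1 - t)) (by positivity)
  have h3 := hB_nonneg (-β) ((x / (1 - t)) ^ 2 / 4)
  unfold Wk
  rw [show (t * x / (1 - t) / 2) ^ 2 = (t * x / (1 - t)) ^ 2 / 4 by ring]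
  have hx2 : 0 ≤ x ^ (2 * α + 2 * β + 1) := by positivity
  rw [abs_mul, abs_mul, abs_of_nonneg hx2, abs_of_nonneg (show 0 ≤ 1 / 2 * hB (-β) ((x / (1 - t)) ^ 2 / 4) by positivity)]
  have e1 : (x / (1 - t)) ^ (-(2 * β + 1)) * x ^ (2 * α + 2 * β + 1) = c * x ^ (2 * α) := by
    rw [div_eq_mul_inv, Real.mul_rpow hx.le (by positivity), mul_right_comm, ← Real.rpow_add hx, mul_comm]
    congr 2; ring
  have e2 : |t * x / (1 - t)| + -((1 - (1 - |t|) / 4) * (x / (1 - t))) = -(3 / 4 * ((1 - |t|) / (1 - t)) * x) := by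
    rw [abs_div, abs_mul, abs_of_pos hx, abs_of_pos ht1]
    field_simp
    ring
  calc _ ≤ (1 / Real.Gamma (α + 1) * Real.exp |t * x / (1 - t)|) * (1 / 2 * (C * (Real.exp (-((1 - (1 - |t|) / 4) * (x / (1 - t)))) * (x / (1 - t)) ^ (-(2 * β + 1))))) * x ^ (2 * α + 2 * β + 1) := by
        gcongr
    _ = 1 / Real.Gamma (α + 1) * (1 / 2 * C) * (Real.exp |t * x / (1 - t)| * Real.exp (-((1 - (1 - |t|) / 4) * (x / (1 - t))))) * ((x / (1 - t)) ^ (-(2 * β + 1)) * x ^ (2 * α + 2 * β + 1)) := by ring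
    _ = _ := by rw [e1, ← Real.exp_add, e2]; ring

lemma gIc_analyticAt (α β t : ℝ) (hα : 0 ≤ α) (hβ : -1 / 2 ≤ β) (ht : t ∈ Ioo (-1 : ℝ) 1)
    (A B : ℂ → ℂ) (z₀ : ℂ) (hA : AnalyticAt ℂ A z₀) (hB : AnalyticAt ℂ B z₀) (hA0 : (A z₀).im = 0) (hB0 : (B z₀).im = 0) :
    AnalyticAt ℂ (fun z => gIc α β t (A z) (B z)) z₀ := by
  have ht1 : 0 < 1 - t := by linarith [ht.2]
  have htabs : |t| < 1 := abs_lt.mpr ht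
  obtain ⟨C1, hC1, h1⟩ := Wk_bound α β t hα hβ ht
  set k := (1 - |t|) / (1 - t) with hk
  have hk0 : 0 < k := div_pos (by linarith) ht1
  set M := ‖B z₀‖ + 1 with hM
  have hM0 : 0 < M := by positivity
  obtain ⟨C2, hC2, h2⟩ := Ec_bound_exp β hβ (e := k / (8 * M)) (by positivity)
  have h3 := Ec_sharp α (by linarith)
  have hG : 0 < Real.Gamma (α + 1) := Real.Gamma_pos_of_pos (by linarith)
  have ev1 : ∀ᶠ z in nhds z₀, |(A z).im| < k / 8 := by
    have : ContinuousAt (fun z => |(A z).im|) z₀ := (Complex.continuous_im.continuousAt.comp hA.continuousAt).abs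
    refine this.eventually_lt continuousAt_const ?_
    rw [hA0, abs_zero]; positivity
  have ev2 : ∀ᶠ z in nhds z₀, |(B z).im| < k / 8 := by
    have : ContinuousAt (fun z => |(B z).im|) z₀ := (Complex.continuous_im.continuousAt.comp hB.continuousAt).abs
    refine this.eventually_lt continuousAt_const ?_
    rw [hB0, abs_zero]; positivity
  have ev3 : ∀ᶠ z in nhds z₀, ‖B z‖ < M := by
    refine hB.continuousAt.norm.eventually_lt continuousAt_const ?_
    rw [hM]; linarith
  obtain ⟨r, hr, hball⟩ := Metric.eventually_nhds_iff_ball.mp (((ev1.and ev2).and ev3).and (hA.eventually_analyticAt.and hB.eventually_analyticAt))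
  have key : DifferentiableOn ℂ (fun z => gIc α β t (A z) (B z)) (ball z₀ r) := by
    unfold gIc
    refine holo_integral (m := volume.restrict (Ioi (0 : ℝ)))
      (F := fun z (x : ℝ) => (Wk α β t x : ℂ) * (Ec α (-(A z * x) ^ 2 / 4) * Ec β (-(B z * x) ^ 2 / 4))) hr
      (bound := fun x => C1 * (1 / Real.Gamma (α + 1)) * C2 * (Real.exp (-((3 / 8 * k) * x)) * x ^ (2 * α)))
      ((exp_rpow_integrable (c := 3 / 8 * k) (by positivity) (by linarith)).const_mul _) ?_ ?_ ?_
    · intro z _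
      refine ContinuousOn.aestronglyMeasurable ?_ measurableSet_Ioi
      refine (Complex.continuous_ofReal.comp_continuousOn (Wk_continuousOn α β t hα ht.2)).mul (Continuous.continuousOn ?_)
      refine ((differentiable_Ec (by linarith)).continuous.comp ?_).mul ((differentiable_Ec hβ).continuous.comp ?_)
      · fun_prop
      · fun_prop
    · refine Eventually.of_forall fun x z hz => DifferentiableAt.differentiableWithinAt ?_
      have hz' := (hball z hz).2
      have dA := hz'.1.differentiableAt
      have dB := hz'.2.differentiableAt
      refine DifferentiableAt.mul (differentiableAt_const _) (DifferentiableAt.mul ?_ ?_)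
      · exact DifferentiableAt.comp z (differentiable_Ec (by linarith) _) (((dA.mul_const _).pow 2).neg.div_const _)
      · exact DifferentiableAt.comp z (differentiable_Ec hβ _) (((dB.mul_const _).pow 2).neg.div_const _)
    · refine (ae_restrict_iff' measurableSet_Ioi).mpr (Eventually.of_forall fun x hx z hz => ?_)
      have hx' : 0 < x := hx
      obtain ⟨⟨⟨b1, b2⟩, b3⟩, -⟩ := hball z hz
      rw [norm_mul, norm_mul, Complex.norm_real, Real.norm_eq_abs]
      have f1 := h1 x hx'
      have f2 := h2 (B z * x)
      have f3 := h3 (A z * x)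
      have im : ∀ w : ℂ, |(w * (x : ℂ)).im| = |w.im| * x := by
        intro w; rw [Complex.im_mul_ofReal, abs_mul, abs_of_pos hx']
      rw [im] at f2 f3
      rw [norm_mul, Complex.norm_real, Real.norm_eq_abs, abs_of_pos hx'] at f2
      have g : -(3 / 4 * k * x) + (|(A z).im| * x + (|(B z).im| * x + k / (8 * M) * (‖B z‖ * x))) ≤ -((3 / 8 * k) * x) := by
        have : k / (8 * M) * (‖B z‖ * x) ≤ k / 8 * x := by
          calc k / (8 * M) * (‖B z‖ * x) ≤ k / (8 * M) * (M * x) := by gcongr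
            _ = k / 8 * x := by field_simp
        nlinarith
      calc _ ≤ C1 * (Real.exp (-(3 / 4 * k * x)) * x ^ (2 * α)) * (1 / Real.Gamma (α + 1) * Real.exp (|(A z).im| * x) * (C2 * Real.exp (|(B z).im| * x + k / (8 * M) * (‖B z‖ * x)))) := by
            gcongr
        _ = C1 * (1 / Real.Gamma (α + 1)) * C2 * (Real.exp (-(3 / 4 * k * x) + (|(A z).im| * x + (|(B z).im| * x + k / (8 * M) * (‖B z‖ * x)))) * x ^ (2 * α)) := by
            rw [Real.exp_add (-(3 / 4 * k * x)), Real.exp_add (|(A z).im| * x)]; ring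
        _ ≤ _ := by gcongr
  exact key.analyticAt (ball_mem_nhds _ hr)

lemma gI_analyticAt (α β t ϑ φ : ℝ) (hα : 0 ≤ α) (hβ : -1 / 2 ≤ β) (ht : t ∈ Ioo (-1 : ℝ) 1)
    (hD : 0 < Real.cos ϑ + Real.cos φ) :
    AnalyticAt ℝ (fun y : ℝ => gI α β t (Real.sin ϑ / (Real.cos ϑ + Real.cos y)) (Real.sin y / (Real.cos ϑ + Real.cos y))) φ := by
  have hD' : Complex.cos ϑ + Complex.cos φ ≠ 0 := by
    rw [← Complex.ofReal_cos, ← Complex.ofReal_cos, ← Complex.ofReal_add]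
    exact_mod_cast hD.ne'
  have aD : AnalyticAt ℂ (fun z : ℂ => Complex.cos ϑ + Complex.cos z) φ :=
    analyticAt_const.add (Complex.differentiable_cos.analyticAt _)
  have h := gIc_analyticAt α β t hα hβ ht (fun z => Complex.sin ϑ / (Complex.cos ϑ + Complex.cos z))
    (fun z => Complex.sin z / (Complex.cos ϑ + Complex.cos z)) φ (analyticAt_const.div aD hD')
    ((Complex.differentiable_sin.analyticAt _).div aD hD') ?_ ?_
  · have := h.re_ofReal
    refine this.congr (Eventually.of_forall fun y => ?_)
    simp only [← Complex.ofReal_cos, ← Complex.ofReal_sin, ← Complex.ofReal_add, ← Complex.ofReal_div]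
    rw [gIc_ofReal, Complex.ofReal_re]
  · simp only [← Complex.ofReal_cos, ← Complex.ofReal_sin, ← Complex.ofReal_add, ← Complex.ofReal_div, Complex.ofReal_im]
  · simp only [← Complex.ofReal_cos, ← Complex.ofReal_sin, ← Complex.ofReal_add, ← Complex.ofReal_div, Complex.ofReal_im]


/-! ### Part 15: analyticity of the series -/

lemma summable_gamma_pow (r : ℝ) (hr : 0 < r) (z : ℝ) (hz0 : 0 ≤ z) (hz : z < 1) :
    Summable fun m : ℕ => Real.Gamma (r + m) / m.factorial * z ^ m := by
  have h := (binom_series r hr z hz0 hz).summable.abs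
  refine h.congr fun m => ?_
  have : 0 < Real.Gamma (r + m) := Real.Gamma_pos_of_pos (by positivity)
  rw [abs_mul, abs_pow, abs_neg, abs_of_nonneg hz0, abs_of_pos (by positivity)]

lemma norm_cos_le (z : ℂ) : ‖Complex.cos z‖ ≤ Real.exp |z.im| := by
  have h := gC_bound 1 one_pos z 1
  rw [gC_one] at h
  have e : Real.Gamma (1 + 1) = 1 := by rw [show (1 : ℝ) + 1 = 2 by norm_num, Real.Gamma_two]
  have e2 : Real.Gamma (2 * 1 + ((1 : ℕ) : ℝ)) = 2 := by
    rw [Nat.cast_one, Real.Gamma_add_one (by norm_num), mul_one, Real.Gamma_two, mul_one]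
  rw [e, e2, mul_one, Real.Gamma_two, Real.Gamma_one, norm_mul, norm_mul, Nat.factorial_one, Nat.cast_one] at h
  simp only [Complex.ofReal_one, norm_one, Complex.norm_ofNat, one_mul, mul_one, div_one] at h
  linarith

lemma gC_zero_bound (m : ℕ) (hm : 1 ≤ m) (z : ℂ) : ‖gC m 0 (Complex.cos z)‖ ≤ 2 * Real.exp (m * |z.im|) := by
  match m, hm with
  | 1, _ =>
    rw [gC_one, zero_add, Real.Gamma_one, norm_mul, norm_mul, Nat.cast_one]
    simp only [Complex.ofReal_one, norm_one, Complex.norm_ofNat, one_mul]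
    linarith [norm_cos_le z]
  | (k + 2), _ =>
    have h := gC_lower k 0 le_rfl (Complex.cos z)
    have hg : ∀ i : ℕ, ‖gC i (0 + 1) (Complex.cos z)‖ ≤ (i + 1) * Real.exp (i * |z.im|) := by
      intro i
      have h1 := gC_bound 1 one_pos z i
      have e2 : Real.Gamma (2 * 1 + (i : ℝ)) = (i + 1) * i.factorial := by
        rw [show 2 * 1 + (i : ℝ) = ((i + 1 : ℕ) : ℝ) + 1 by push_cast; ring, Real.Gamma_nat_eq_factorial, Nat.factorial_succ]
        push_cast; ring
      rw [e2, mul_one, Real.Gamma_two, Real.Gamma_one, one_mul, one_mul, mul_div_assoc, div_self (by positivity), mul_one] at h1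
      rw [zero_add]; exact h1
    have h2 := congrArg norm h
    rw [norm_mul] at h2
    have e3 : ‖(k : ℂ) + 2 + ((0 : ℝ) : ℂ)‖ = (k : ℝ) + 2 := by
      rw [show (k : ℂ) + 2 + ((0 : ℝ) : ℂ) = (((k : ℝ) + 2 : ℝ) : ℂ) by push_cast; ring, Complex.norm_real, Real.norm_eq_abs, abs_of_pos (by positivity)]
    rw [e3] at h2
    have h3 := norm_sub_le (gC (k + 2) (0 + 1) (Complex.cos z)) (gC k (0 + 1) (Complex.cos z))
    have h4 := hg (k + 2)
    have h5 := hg k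
    have h6 : Real.exp (k * |z.im|) ≤ Real.exp ((k + 2 : ℕ) * |z.im|) := by
      refine Real.exp_le_exp.mpr (mul_le_mul_of_nonneg_right ?_ (abs_nonneg _))
      push_cast; linarith
    have hk : (0 : ℝ) < (k : ℝ) + 2 := by positivity
    refine le_of_mul_le_mul_left ?_ hk
    rw [h2]
    refine h3.trans ?_
    have h7 : ((k : ℝ) + 1) * Real.exp (k * |z.im|) ≤ (k + 1) * Real.exp ((k + 2 : ℕ) * |z.im|) := by gcongr
    push_cast at h4 h7 ⊢
    linarith

lemma gC_unif (b : ℝ) (n : ℕ) (hb : -1 / 2 ≤ b) (hbn : -1 / 2 < b ∨ 1 ≤ n) :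
    ∃ C s : ℝ, 0 < C ∧ 0 < s ∧ ∀ (j : ℕ) (z : ℂ),
      (j + n).factorial * ‖gC (j + n) (b + 1 / 2) (Complex.cos z)‖ ≤ C * Real.Gamma (s + j) * Real.exp ((j + n : ℕ) * |z.im|) := by
  rcases hb.eq_or_lt with h | h
  · have hn : 1 ≤ n := by rcases hbn with h' | h'; exacts [absurd h' (by rw [h]; exact lt_irrefl _), h']
    refine ⟨2, n + 1, two_pos, by positivity, fun j z => ?_⟩
    rw [← h, show (-1 / 2 : ℝ) + 1 / 2 = 0 by norm_num]
    have := gC_zero_bound (j + n) (by omega) z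
    have e : Real.Gamma ((n : ℝ) + 1 + j) = (j + n).factorial := by
      rw [← Real.Gamma_nat_eq_factorial]; congr 1; push_cast; ring
    rw [e]
    calc ((j + n).factorial : ℝ) * _ ≤ (j + n).factorial * (2 * Real.exp ((j + n : ℕ) * |z.im|)) := by gcongr
      _ = _ := by ring
  · have hl : 0 < b + 1 / 2 := by linarith
    have g1 : 0 < Real.Gamma (b + 1 / 2) := Real.Gamma_pos_of_pos hl
    have g2 : 0 < Real.Gamma (2 * (b + 1 / 2)) := Real.Gamma_pos_of_pos (by linarith)
    refine ⟨Real.Gamma (b + 1 / 2) / Real.Gamma (2 * (b + 1 / 2)), 2 * (b + 1 / 2) + n, by positivity, by positivity, fun j z => ?_⟩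
    have := gC_bound (b + 1 / 2) hl z (j + n)
    calc ((j + n).factorial : ℝ) * _ ≤ (j + n).factorial * (Real.Gamma (b + 1 / 2) * Real.Gamma (2 * (b + 1 / 2) + (j + n : ℕ)) / (Real.Gamma (2 * (b + 1 / 2)) * (j + n).factorial)
        * Real.exp ((j + n : ℕ) * |z.im|)) := by gcongr
      _ = _ := by
        rw [show 2 * (b + 1 / 2) + (n : ℝ) + j = 2 * (b + 1 / 2) + (j + n : ℕ) by push_cast; ring]
        have : ((j + n).factorial : ℝ) ≠ 0 := by positivity
        generalize Real.Gamma (2 * (b + 1 / 2) + (j + n : ℕ)) = G1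
        generalize Real.exp ((j + n : ℕ) * |z.im|) = G4
        generalize Real.Gamma (2 * (b + 1 / 2)) = G2 at *
        generalize Real.Gamma (b + 1 / 2) = G3
        generalize ((j + n).factorial : ℝ) = G5 at *
        field_simp

noncomputable def serC (α β : ℝ) (n : ℕ) (t ϑ : ℝ) (j : ℕ) (z : ℂ) : ℂ :=
  (((4 : ℝ) ^ (2 * (α + β)) / Real.pi * (-1) ^ j * ((j + n).factorial / Real.Gamma (j + 2 * α + 1))
    * gegenbauerCt j (α + 1 / 2) (Real.cos ϑ) * t ^ j : ℝ) : ℂ) * gC (j + n) (β + 1 / 2) (Complex.cos z)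

lemma serC_ofReal (α β : ℝ) (n : ℕ) (t ϑ φ : ℝ) (j : ℕ) : serC α β n t ϑ j φ = (serT α β n t ϑ φ j : ℂ) := by
  unfold serC serT
  rw [← Complex.ofReal_cos φ, gC_ofReal, ← Complex.ofReal_mul]
  congr 1
  ring

lemma serC_differentiable (α β : ℝ) (n : ℕ) (t ϑ : ℝ) (j : ℕ) : Differentiable ℂ (serC α β n t ϑ j) := by
  unfold serC gC
  refine (differentiable_const _).mul ?_
  refine Differentiable.fun_sum fun k _ => ?_
  exact (differentiable_const _).mul (((differentiable_const _).mul Complex.differentiable_cos).pow _)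

lemma serC_bound (α β : ℝ) (n : ℕ) (hα : 0 ≤ α) (hβ : -1 / 2 ≤ β) (hbn : -1 / 2 < β ∨ 1 ≤ n)
    (t ϑ : ℝ) (ht : t ∈ Ioo (-1 : ℝ) 1) :
    ∃ e : ℝ, 0 < e ∧ ∃ u : ℕ → ℝ, Summable u ∧ ∀ j (z : ℂ), |z.im| < e → ‖serC α β n t ϑ j z‖ ≤ u j := by
  have htabs : |t| < 1 := abs_lt.mpr ht
  obtain ⟨C, s, hC, hs, h⟩ := gC_unif β n hβ hbn
  obtain ⟨e, he, hte⟩ : ∃ e : ℝ, 0 < e ∧ |t| * Real.exp e < 1 := by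
    have hc : ContinuousAt (fun e : ℝ => |t| * Real.exp e) 0 := by fun_prop
    have := hc.eventually_lt continuousAt_const (g := fun _ => (1 : ℝ)) (by simpa using htabs)
    obtain ⟨r, hr, hb⟩ := Metric.eventually_nhds_iff_ball.mp this
    exact ⟨r / 2, by linarith, hb (r / 2) (by rw [mem_ball, dist_zero_right, Real.norm_eq_abs, abs_of_pos (by linarith)]; linarith)⟩
  have g0 : 0 < Real.Gamma (α + 1 / 2) := Real.Gamma_pos_of_pos (by linarith)
  have g1 : 0 < Real.Gamma (2 * (α + 1 / 2)) := Real.Gamma_pos_of_pos (by linarith)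
  set K := (4 : ℝ) ^ (2 * (α + β)) / Real.pi with hK
  have hK0 : 0 < K := by positivity
  set L := K * (Real.Gamma (α + 1 / 2) / Real.Gamma (2 * (α + 1 / 2))) * C * Real.exp (n * e) with hL
  refine ⟨e, he, fun j => L * (Real.Gamma (s + j) / j.factorial * (|t| * Real.exp e) ^ j),
    (summable_gamma_pow s hs _ (by positivity) hte).mul_left L, fun j z hz => ?_⟩
  have hGj : 0 < Real.Gamma (j + 2 * α + 1) := Real.Gamma_pos_of_pos (by positivity)
  have hGs : 0 < Real.Gamma (s + j) := Real.Gamma_pos_of_pos (by positivity)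
  have b1 : |gegenbauerCt j (α + 1 / 2) (Real.cos ϑ)| ≤ Real.Gamma (α + 1 / 2) * Real.Gamma (j + 2 * α + 1) / (Real.Gamma (2 * (α + 1 / 2)) * j.factorial) := by
    have := gC_bound (α + 1 / 2) (by linarith) ϑ j
    rw [← Complex.ofReal_cos, gC_ofReal, Complex.norm_real, Complex.ofReal_im, abs_zero, mul_zero, Real.exp_zero, mul_one,
      show 2 * (α + 1 / 2) + (j : ℝ) = j + 2 * α + 1 by ring] at this
    exact this
  have b2 := h j z
  have b3 : Real.exp ((j + n : ℕ) * |z.im|) ≤ Real.exp (n * e) * Real.exp e ^ j := by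
    rw [← Real.exp_nat_mul, ← Real.exp_add]
    refine Real.exp_le_exp.mpr ?_
    have : ((j + n : ℕ) : ℝ) * |z.im| ≤ (j + n : ℕ) * e := by gcongr
    push_cast at this ⊢
    linarith
  unfold serC
  rw [norm_mul, Complex.norm_real, Real.norm_eq_abs, abs_mul, abs_mul, abs_mul, abs_mul, abs_pow, abs_neg, abs_one, one_pow, mul_one,
    abs_of_pos hK0, abs_of_pos (show 0 < ((j + n).factorial : ℝ) / Real.Gamma (j + 2 * α + 1) by positivity), abs_pow]
  calc _ = K * |gegenbauerCt j (α + 1 / 2) (Real.cos ϑ)| * (1 / Real.Gamma (j + 2 * α + 1)) * |t| ^ j * ((j + n).factorial * ‖gC (j + n) (β + 1 / 2) (Complex.cos z)‖) := by ring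
    _ ≤ K * (Real.Gamma (α + 1 / 2) * Real.Gamma (j + 2 * α + 1) / (Real.Gamma (2 * (α + 1 / 2)) * j.factorial)) * (1 / Real.Gamma (j + 2 * α + 1)) * |t| ^ j
        * (C * Real.Gamma (s + j) * (Real.exp (n * e) * Real.exp e ^ j)) := by
        refine mul_le_mul ?_ (b2.trans ?_) (by positivity) (by positivity)
        · gcongr
        · gcongr
    _ = _ := by
      beta_reduce
      rw [hL, mul_pow]
      clear b1 b2 h
      clear_value L K
      clear hL
      generalize Real.Gamma (j + 2 * α + 1) = G1 at *
      generalize Real.Gamma (2 * (α + 1 / 2)) = G2 at *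
      generalize Real.Gamma (α + 1 / 2) = G3 at *
      generalize Real.Gamma (s + j) = G4 at *
      have : (j.factorial : ℝ) ≠ 0 := by positivity
      generalize (j.factorial : ℝ) = G5 at *
      field_simp

lemma ser_analyticAt (α β : ℝ) (n : ℕ) (hα : 0 ≤ α) (hβ : -1 / 2 ≤ β) (hbn : -1 / 2 < β ∨ 1 ≤ n)
    (t ϑ : ℝ) (ht : t ∈ Ioo (-1 : ℝ) 1) (φ : ℝ) :
    AnalyticAt ℝ (fun y => ∑' j, serT α β n t ϑ y j) φ ∧ Summable (serT α β n t ϑ φ) := by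
  obtain ⟨e, he, u, hu, h⟩ := serC_bound α β n hα hβ hbn t ϑ ht
  constructor
  · have hU : IsOpen {z : ℂ | |z.im| < e} := isOpen_lt (Complex.continuous_im.abs) continuous_const
    have hd := Complex.differentiableOn_tsum_of_summable_norm (F := serC α β n t ϑ) hu
      (fun j => (serC_differentiable α β n t ϑ j).differentiableOn) hU (fun j w hw => h j w hw)
    have ha : AnalyticAt ℂ (fun w : ℂ => ∑' j, serC α β n t ϑ j w) φ :=
      hd.analyticAt (hU.mem_nhds (by simpa using he))
    refine ha.re_ofReal.congr (Eventually.of_forall fun y => ?_)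
    simp only [serC_ofReal]
    rw [← Complex.ofReal_tsum, Complex.ofReal_re]
  · refine Summable.of_norm_bounded hu fun j => ?_
    have := h j φ (by simpa using he)
    rwa [serC_ofReal, Complex.norm_real] at this


/-! ### Part 16: analytic continuation in `φ` -/

lemma main_core (α β : ℝ) (n : ℕ) (hn : α = β + n) (hα : 0 ≤ α) (hβ : -1 / 2 ≤ β) (hbn : -1 / 2 < β ∨ 1 ≤ n)
    (t ϑ φ : ℝ) (ht : t ∈ Ioo (-1 : ℝ) 1) (hφ : φ ∈ Icc 0 Real.pi) (hD : 0 < Real.cos ϑ + Real.cos φ) :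
    HasSum (serT α β n t ϑ φ) ((1 - t) ^ (-(α + β + 1)) * ((Real.cos ϑ + Real.cos φ) / 2) ^ (-(α + β + 1))
      * gI α β t (Real.sin ϑ / (Real.cos ϑ + Real.cos φ)) (Real.sin φ / (Real.cos ϑ + Real.cos φ))) := by
  have ht1 : 0 < 1 - t := by linarith [ht.2]
  have htabs : |t| < 1 := abs_lt.mpr ht
  have hDy : ∀ y ∈ Icc 0 φ, 0 < Real.cos ϑ + Real.cos y := by
    intro y hy
    have := Real.cos_le_cos_of_nonneg_of_le_pi hy.1 hφ.2 hy.2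
    linarith
  set f : ℝ → ℝ := fun y => (1 - t) ^ (-(α + β + 1)) * ((Real.cos ϑ + Real.cos y) / 2) ^ (-(α + β + 1))
      * gI α β t (Real.sin ϑ / (Real.cos ϑ + Real.cos y)) (Real.sin y / (Real.cos ϑ + Real.cos y)) with hf
  set g : ℝ → ℝ := fun y => ∑' j, serT α β n t ϑ y j with hg
  have hfa : AnalyticOnNhd ℝ f (Icc 0 φ) := by
    intro y hy
    have hDp := hDy y hy
    refine (analyticAt_const.mul ?_).mul (gI_analyticAt α β t ϑ y hα hβ ht hDp)
    have hc : AnalyticAt ℝ (fun y : ℝ => (Real.cos ϑ + Real.cos y) / 2) y :=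
      (analyticAt_const.add Real.analyticAt_cos).div_const
    have hp : 0 < (Real.cos ϑ + Real.cos y) / 2 := by positivity
    have hE : AnalyticAt ℝ (fun y : ℝ => Real.exp (Real.log ((Real.cos ϑ + Real.cos y) / 2) * (-(α + β + 1)))) y :=
      ((hc.log hp).mul analyticAt_const).rexp
    refine hE.congr ?_
    filter_upwards [continuousAt_const.eventually_lt hc.continuousAt hp] with w hw
    exact (Real.rpow_def_of_pos hw _).symm
  have hga : AnalyticOnNhd ℝ g (Icc 0 φ) := fun y _ => (ser_analyticAt α β n hα hβ hbn t ϑ ht y).1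
  have hD0 : 0 < Real.cos ϑ + Real.cos 0 := hDy 0 ⟨le_rfl, hφ.1⟩
  have hcD : ContinuousAt (fun y : ℝ => Real.cos ϑ + Real.cos y) 0 := by fun_prop
  have hcb : ContinuousAt (fun y : ℝ => Real.sin y / (Real.cos ϑ + Real.cos y)) 0 :=
    Real.continuous_sin.continuousAt.div hcD hD0.ne'
  have ev : ∀ᶠ y in nhdsWithin (0 : ℝ) (Ioi 0), f y = g y := by
    have e1 : ∀ᶠ y in nhds (0 : ℝ), 0 < Real.cos ϑ + Real.cos y := continuousAt_const.eventually_lt hcD hD0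
    have e2 : ∀ᶠ y in nhds (0 : ℝ), Real.sin y / (Real.cos ϑ + Real.cos y) < 1 / (1 - t) / 4 := by
      refine hcb.eventually_lt continuousAt_const ?_
      rw [Real.sin_zero, zero_div]; positivity
    have e3 : ∀ᶠ y in nhds (0 : ℝ), (Real.sin y / (Real.cos ϑ + Real.cos y)) ^ 2 + 2 * (1 / (1 - t)) * (Real.sin y / (Real.cos ϑ + Real.cos y)) < (1 / (1 - t)) ^ 2 - (t / (1 - t)) ^ 2 := by
      refine ((hcb.pow 2).add (continuousAt_const.mul hcb)).eventually_lt continuousAt_const ?_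
      have : (1 / (1 - t)) ^ 2 - (t / (1 - t)) ^ 2 = (1 + t) / (1 - t) := by field_simp; ring
      rw [this]
      have : 0 < (1 + t) / (1 - t) := div_pos (by linarith [ht.1]) ht1
      simpa using this
    have e4 : ∀ᶠ y in nhds (0 : ℝ), |t| + Real.sin y < Real.cos y := by
      refine ContinuousAt.eventually_lt (by fun_prop) (by fun_prop) ?_
      rw [Real.sin_zero, Real.cos_zero]; linarith
    have e5 : ∀ᶠ y in nhds (0 : ℝ), y < Real.pi := eventually_lt_nhds Real.pi_pos
    filter_upwards [nhdsWithin_le_nhds e1, nhdsWithin_le_nhds e2, nhdsWithin_le_nhds e3, nhdsWithin_le_nhds e4, nhdsWithin_le_nhds e5,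
      self_mem_nhdsWithin] with y h1 h2 h3 h4 h5 h6
    have hs : 0 ≤ Real.sin y := Real.sin_nonneg_of_nonneg_of_le_pi (le_of_lt h6) h5.le
    rw [hf, hg]
    beta_reduce
    rw [gI_small α β hα hβ t ϑ y ht h1 hs h2.le h3]
    exact (series_small α β n hn hα hβ hbn t ϑ y hs h4).tsum_eq.symm
  have hfr : ∃ᶠ y in nhdsWithin (0 : ℝ) {0}ᶜ, f y = g y :=
    ev.frequently.filter_mono (nhdsGT_le_nhdsNE 0)
  have heq := hfa.eqOn_of_preconnected_of_frequently_eq hga isPreconnected_Icc ⟨le_rfl, hφ.1⟩ hfr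
  have h := (ser_analyticAt α β n hα hβ hbn t ϑ ht φ).2.hasSum
  have e : f φ = g φ := heq ⟨hφ.1, le_rfl⟩
  rw [hf, hg] at e
  beta_reduce at e
  rw [e]
  exact h

/-- **Corollary 4.2.** Integral formula for the generating function:
the series `Σ_j (2^{2(μ+ν)}/π)(−1)^j (Γ(j+(μ−ν+2)/2)/Γ(j+μ+1)) C̃_j^{(μ+1)/2}(cos ϑ)
C̃_{j+(μ−ν)/2}^{(ν+1)/2}(cos φ) t^j` converges to
`(1−t)^{−(μ+ν+2)/2} ((cos ϑ + cos φ)/2)^{−(μ+ν+2)/2} I_{μ,ν}(t,ϑ,φ)`. -/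
theorem genFun_gegenbauer_expansion (μ ν : ℤ) (hcond : IntCond μ ν)
    (ϑ φ : ℝ) (hϑ : ϑ ∈ Set.Icc (0 : ℝ) Real.pi) (hφ : φ ∈ Set.Icc (0 : ℝ) Real.pi)
    (hpos : Real.cos ϑ + Real.cos φ > 0) (t : ℝ) (ht : t ∈ Set.Ioo (-1 : ℝ) 1) :
    HasSum
      (fun j : ℕ =>
        (2 : ℝ) ^ (2 * ((μ : ℝ) + ν)) / Real.pi * (-1) ^ j
          * (Real.Gamma (j + ((μ : ℝ) - ν + 2) / 2) / Real.Gamma (j + (μ : ℝ) + 1))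
          * gegenbauerCt j (((μ : ℝ) + 1) / 2) (Real.cos ϑ)
          * gegenbauerCt (j + ((μ - ν) / 2).toNat) (((ν : ℝ) + 1) / 2) (Real.cos φ) * t ^ j)
      ((1 - t) ^ (-((μ : ℝ) + ν + 2) / 2)
        * ((Real.cos ϑ + Real.cos φ) / 2) ^ (-((μ : ℝ) + ν + 2) / 2)
        * ∫ x in Set.Ioi (0 : ℝ),
            besselIt ((μ : ℝ) / 2) (t * x / (1 - t)) * besselKt ((ν : ℝ) / 2) (x / (1 - t))
              * besselJt ((μ : ℝ) / 2) (Real.sin ϑ / (Real.cos ϑ + Real.cos φ) * x)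
              * besselJt ((ν : ℝ) / 2) (Real.sin φ / (Real.cos ϑ + Real.cos φ) * x)
              * x ^ ((μ : ℝ) + ν + 1)) := by
  obtain ⟨h1, h2, h3, h4⟩ := hcond
  obtain ⟨k, hk⟩ := h3
  have hk2 : μ - ν = 2 * k := by omega
  have hdiv : (μ - ν) / 2 = k := by omega
  have hk0 : 0 ≤ k := by omega
  obtain ⟨n, rfl⟩ := Int.eq_ofNat_of_zero_le hk0
  have hμν : (μ : ℝ) = ν + 2 * n := by
    have : μ = ν + 2 * (n : ℤ) := by omega
    rw [this]; push_cast; ring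
  have hν : (-1 : ℝ) ≤ ν := by exact_mod_cast h1
  have hμ : (0 : ℝ) ≤ μ := by
    have : 0 ≤ μ := by omega
    exact_mod_cast this
  have hbn : -1 / 2 < (ν : ℝ) / 2 ∨ 1 ≤ n := by
    by_cases hn : 1 ≤ n
    · exact Or.inr hn
    · left
      have : 0 ≤ ν := by omega
      have : (0 : ℝ) ≤ ν := by exact_mod_cast this
      linarith
  have key := main_core ((μ : ℝ) / 2) ((ν : ℝ) / 2) n (by rw [hμν]; ring) (by linarith) (by linarith) hbn t ϑ φ ht hφ hpos
  have ht1 : 0 < 1 - t := by linarith [ht.2]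
  refine hs_congr key (fun j => ?_) ?_
  · unfold serT
    rw [hdiv, Int.toNat_natCast]
    have e1 : (2 : ℝ) ^ (2 * ((μ : ℝ) + ν)) = 4 ^ (2 * ((μ : ℝ) / 2 + ν / 2)) := by
      rw [show (4 : ℝ) = 2 ^ (2 : ℝ) by norm_num, ← Real.rpow_mul (by norm_num)]
      congr 1; ring
    have e2 : Real.Gamma ((j : ℝ) + ((μ : ℝ) - ν + 2) / 2) = (j + n).factorial := by
      rw [← Real.Gamma_nat_eq_factorial, hμν]
      congr 1; push_cast; ring
    rw [e1, e2, show (j : ℝ) + 2 * ((μ : ℝ) / 2) + 1 = j + (μ : ℝ) + 1 by ring,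
      show (μ : ℝ) / 2 + 1 / 2 = (μ + 1) / 2 by ring, show (ν : ℝ) / 2 + 1 / 2 = (ν + 1) / 2 by ring]
  · rw [show -((μ : ℝ) / 2 + (ν : ℝ) / 2 + 1) = -((μ : ℝ) + ν + 2) / 2 by ring]
    congr 1
    unfold gI
    refine setIntegral_congr_fun measurableSet_Ioi fun x hx => ?_
    have hx' : 0 < x := hx
    beta_reduce
    rw [besselIt_eq, besselJt_eq, besselJt_eq, besselKt_eq _ (by linarith) (div_pos hx' ht1),
      show 2 * ((μ : ℝ) / 2) + 2 * ((ν : ℝ) / 2) + 1 = μ + ν + 1 by ring]
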